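/- arXiv:1808.06182 — 2 statements merged into one kernel-verified Lean document; each statement's English description precedes it below -/
import Mathlib

section
/- For every odd integer k ≥ 5, the limit as n → ∞ of S_k(n)^{1/π(n)} exists and equals β_k; moreover β ≥ β₅ ≥ β₇ ≥ ⋯ is non-increasing and β_k ≥ β⁻ for every odd k ≥ 5. -/
open scoped Classical

/-- A finite set of naturals is multiplicative `k`-Sidon if it contains no `2k`
distinct elements `a₁, …, aₖ, b₁, …, bₖ` with `a₁⋯aₖ = b₁⋯bₖ`. -/
def MulKSidon (k : ℕ) (A : Finset ℕ) : Prop :=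
  ¬ ∃ a b : Fin k → ℕ, (∀ i, a i ∈ A) ∧ (∀ i, b i ∈ A) ∧
    Function.Injective (Sum.elim a b) ∧ (∏ i, a i) = (∏ i, b i)

/-- `Sk k n`: the number of multiplicative `k`-Sidon subsets of `{1, …, n}`. -/
noncomputable def Sk (k n : ℕ) : ℕ :=
  ((Finset.Icc 1 n).powerset.filter (fun A => MulKSidon k A)).card

/-- `R(G) = {a/b : ab ∈ E(G)} ⊆ ℚ`, the set of ratios of edges of `G`. -/
def ratioSet (G : SimpleGraph ℕ) : Set ℚ :=
  {r : ℚ | ∃ a b : ℕ, G.Adj a b ∧ r = (a : ℚ) / b}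

/-- A graph on the positive integers is `k`-product-free if there is no solution
to `x₁x₂⋯x_{k−1} = x_k` with all `xᵢ ∈ R(G)` (not necessarily distinct). -/
def KProductFree (k : ℕ) (G : SimpleGraph ℕ) : Prop :=
  (∀ a b : ℕ, G.Adj a b → 0 < a) ∧
  ¬ ∃ (x : Fin (k - 1) → ℚ) (y : ℚ), (∀ i, x i ∈ ratioSet G) ∧
      y ∈ ratioSet G ∧ (∏ i, x i) = y

/-- `eOn G m`: the number of edges of the induced subgraph of `G` on `{1, …, m}`. -/
noncomputable def eOn (G : SimpleGraph ℕ) (m : ℕ) : ℕ :=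
  (((Finset.Icc 1 m) ×ˢ (Finset.Icc 1 m)).filter
    (fun p => p.1 < p.2 ∧ G.Adj p.1 p.2)).card

/-- The value `∏_{m=1}^∞ (e(G_m) + m + 1)^{1/(m²+m)}` associated to a graph `G`. -/
noncomputable def gProd (G : SimpleGraph ℕ) : ℝ :=
  ∏' m : ℕ, ((eOn G (m + 1) : ℝ) + (m + 1) + 1) ^
    ((1 : ℝ) / (((m : ℝ) + 1) ^ 2 + ((m : ℝ) + 1)))

/-- `β_k`: the supremum over all `k`-product-free graphs `G` of
`∏_{m=1}^∞ (e(G_m) + m + 1)^{1/(m²+m)}`; `β = β₃`. -/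
noncomputable def betaK (k : ℕ) : ℝ :=
  sSup {x : ℝ | ∃ G : SimpleGraph ℕ, KProductFree k G ∧ x = gProd G}

/-- `Ω x`: the number of prime divisors of `x` counted with multiplicity. -/
def bigOmega (x : ℕ) : ℕ := (Nat.primeFactorsList x).length

/-- `L k = ∑_{i=1}^k (−1)^{Ω(i)}`, the summatory Liouville function. -/
def L (k : ℕ) : ℤ := ∑ i ∈ Finset.Icc 1 k, (-1 : ℤ) ^ bigOmega i

/-- `β⁻ = ∏_{m=1}^∞ (m²/4 − L(m)²/4 + m + 1)^{1/(m²+m)}`. -/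
noncomputable def betaMinus : ℝ :=
  ∏' m : ℕ, (((m : ℝ) + 1) ^ 2 / 4 - ((L (m + 1) : ℝ)) ^ 2 / 4 + ((m : ℝ) + 1) + 1) ^
    ((1 : ℝ) / (((m : ℝ) + 1) ^ 2 + ((m : ℝ) + 1)))

/-!
The Wiener–Ikehara theorem gives the prime number theorem, hence `π(n/m)/π(n) → 1/m`; so among the
primes `p ≤ n` those with `⌊n/p⌋ = m` have relative density `1/(m² + m)`.

Lower bound: fix a `k`-product-free graph `G` and choose for each prime `p` with `⌊n/p⌋ = m < M`
the empty set, a vertex, or an edge of `G_m`. The multiples of `p` by the chosen numbers form a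
`k`-Sidon set: unique factorisation matches the primes on both sides of `a₁⋯aₖ = b₁⋯bₖ`, so that
cancelling them leaves a product of `k` edge ratios equal to `1`. There are `e(G_m) + m + 1` choices
per prime.

Upper bound: given a `k`-Sidon set `A`, join `a` and `b` if `pa, pb ∈ A` for at least `k` large
primes `p`. By Hall's theorem this graph is `k`-product-free, and as `k ≥ 3` is odd it is then
triangle-free; hence for all but boundedly many primes `p` with `⌊n/p⌋ < M` the cofactors of `p` in
`A` form a clique with at most two vertices. A Kővári–Sós–Turán bound shows that all other elements
of `A` contribute `exp(o(π(n)))` choices as first `n → ∞` and then `M → ∞`. Only boundedly many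
graphs occur, each contributing at most `exp((S + o(1)) π(n))`, where `S` is a partial sum of the
logarithm of its product.
-/

section FejerKernel

open MeasureTheory Set Complex

/-- The Fejér kernel `2 (1 - cos v) / v²`, scaled to be the Fourier transform of the triangle
function `t ↦ 1 - |t|` on `[-1, 1]`. At `v = 0` it takes the junk value `0`. -/
noncomputable def fejerKernel (v : ℝ) : ℝ := 2 * (1 - Real.cos v) / v ^ 2

lemma fejerKernel_nonneg (v : ℝ) : 0 ≤ fejerKernel v :=
  div_nonneg (mul_nonneg zero_le_two (sub_nonneg.2 (Real.cos_le_one v))) (sq_nonneg v)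

lemma fejerKernel_le (v : ℝ) : fejerKernel v ≤ 5 * (1 + v ^ 2)⁻¹ := by
  rcases eq_or_ne v 0 with rfl | hv
  · simp [fejerKernel]
  have hv2 : 0 < v ^ 2 := by positivity
  rw [fejerKernel, ← div_eq_mul_inv, div_le_div_iff₀ hv2 (by positivity)]
  nlinarith [Real.neg_one_le_cos v, Real.one_sub_sq_div_two_le_cos (x := v)]

@[fun_prop]
lemma measurable_fejerKernel : Measurable fejerKernel := by
  unfold fejerKernel; fun_prop

lemma integrable_fejerKernel : Integrable fejerKernel := by
  refine (integrable_inv_one_add_sq.const_mul 5).mono'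
    measurable_fejerKernel.aestronglyMeasurable (.of_forall fun v => ?_)
  rw [Real.norm_of_nonneg (fejerKernel_nonneg v)]
  exact fejerKernel_le v

lemma integral_fejerKernel_pos : 0 < ∫ v, fejerKernel v := by
  rw [integral_pos_iff_support_of_nonneg fejerKernel_nonneg integrable_fejerKernel]
  refine lt_of_lt_of_le (by simp) (measure_mono (s := Ioo 0 1) fun v hv => ?_)
  have hcos : Real.cos v < 1 := by
    rw [← Real.cos_zero]
    exact Real.cos_lt_cos_of_nonneg_of_le_pi le_rfl (by linarith [hv.2, Real.pi_gt_three]) hv.1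
  exact (div_pos (mul_pos two_pos (sub_pos.2 hcos)) (pow_pos hv.1 2)).ne'

lemma integral_one_sub_mul_cexp {c : ℂ} (hc : c ≠ 0) :
    ∫ t in (0 : ℝ)..1, (1 - t : ℂ) * cexp (c * t) = (cexp c - 1 - c) / c ^ 2 := by
  have hderiv (x : ℝ) : HasDerivAt
      (fun t : ℝ => (1 - t : ℂ) * (cexp (c * t) / c) + cexp (c * t) / c ^ 2)
      ((1 - x : ℂ) * cexp (c * x)) x := by
    have hlin : HasDerivAt (fun t : ℝ => (1 - t : ℂ)) (-1) x := by
      simpa using (ofRealCLM.hasDerivAt (x := x)).const_sub (1 : ℂ)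
    have hexp : HasDerivAt (fun t : ℝ => cexp (c * t)) (cexp (c * x) * c) x := by
      simpa using ((ofRealCLM.hasDerivAt (x := x)).const_mul c).cexp
    convert! (hlin.mul (hexp.div_const c)).add (hexp.div_const (c ^ 2)) using 1
    field_simp
    ring
  have hInt : IntervalIntegrable (fun t : ℝ => (1 - t : ℂ) * cexp (c * t)) volume 0 1 :=
    Continuous.intervalIntegrable (by fun_prop) 0 1
  rw [intervalIntegral.integral_eq_sub_of_hasDerivAt (fun x _ => hderiv x) hInt]
  simp only [ofReal_one, ofReal_zero, mul_one, mul_zero, exp_zero, sub_self, sub_zero, zero_mul]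
  field_simp
  ring

lemma integral_triangle_mul_cexp {c : ℂ} (hc : c ≠ 0) :
    ∫ t in (-1 : ℝ)..1, ((1 - |t| : ℝ) : ℂ) * cexp (c * t)
      = (cexp c + cexp (-c) - 2) / c ^ 2 := by
  set f : ℝ → ℂ := fun t => ((1 - |t| : ℝ) : ℂ) * cexp (c * t) with hf
  have hInt (a b : ℝ) : IntervalIntegrable f volume a b :=
    Continuous.intervalIntegrable (by fun_prop) a b
  have hright : ∫ t in (0 : ℝ)..1, f t = (cexp c - 1 - c) / c ^ 2 := by
    rw [← integral_one_sub_mul_cexp hc]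
    refine intervalIntegral.integral_congr fun t ht => ?_
    rw [uIcc_of_le zero_le_one] at ht
    simp [hf, abs_of_nonneg ht.1]
  have hleft : ∫ t in (-1 : ℝ)..0, f t = (cexp (-c) - 1 - -c) / (-c) ^ 2 := by
    rw [← integral_one_sub_mul_cexp (neg_ne_zero.2 hc), ← neg_zero (G := ℝ),
      ← intervalIntegral.integral_comp_neg, neg_zero]
    refine intervalIntegral.integral_congr fun t ht => ?_
    rw [uIcc_of_le zero_le_one] at ht
    simp [hf, abs_of_nonneg ht.1]
  rw [← intervalIntegral.integral_add_adjacent_intervals (hInt (-1) 0) (hInt 0 1), hleft, hright]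
  ring

/-- The triangle function on `[-1, 1]` modulated to frequency `w`. -/
noncomputable def modulatedTriangle (w t : ℝ) : ℂ := ((1 - |t| : ℝ) : ℂ) * cexp (I * (t * w))

@[fun_prop]
lemma continuous_modulatedTriangle (w : ℝ) : Continuous (modulatedTriangle w) := by
  unfold modulatedTriangle; fun_prop

lemma norm_modulatedTriangle_le_one (w : ℝ) {t : ℝ} (ht : t ∈ Ioc (-1 : ℝ) 1) :
    ‖modulatedTriangle w t‖ ≤ 1 := by
  have habs : |t| ≤ 1 := abs_le.2 ⟨ht.1.le, ht.2⟩
  have hexp : ‖cexp (I * (t * w))‖ = 1 := by simp [norm_exp]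
  rw [modulatedTriangle, norm_mul, hexp, mul_one, norm_real,
    Real.norm_of_nonneg (sub_nonneg.2 habs)]
  linarith [abs_nonneg t]

lemma modulatedTriangle_mul_cexp (w u t : ℝ) :
    modulatedTriangle w t * cexp (-(I * t) * u) = modulatedTriangle (w - u) t := by
  rw [modulatedTriangle, modulatedTriangle, mul_assoc, ← exp_add]
  push_cast
  ring_nf

lemma integral_modulatedTriangle {w : ℝ} (hw : w ≠ 0) :
    ∫ t in (-1 : ℝ)..1, modulatedTriangle w t = fejerKernel w := by
  have hc : I * w ≠ 0 := mul_ne_zero I_ne_zero (ofReal_ne_zero.2 hw)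
  have hcos : cexp (I * w) + cexp (-(I * w)) = 2 * Complex.cos w := by
    rw [two_cos]; ring_nf
  calc ∫ t in (-1 : ℝ)..1, modulatedTriangle w t
      = ∫ t in (-1 : ℝ)..1, ((1 - |t| : ℝ) : ℂ) * cexp (I * w * t) := by
        simp only [modulatedTriangle, mul_comm, mul_left_comm]
    _ = (2 * Complex.cos w - 2) / (I * w) ^ 2 := by rw [integral_triangle_mul_cexp hc, hcos]
    _ = fejerKernel w := by
        rw [mul_pow, I_sq, fejerKernel]
        push_cast
        ring

end FejerKernel

section WienerIkehara

open MeasureTheory Filter Topology Set Complex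

/-- `g` agrees with the Laplace transform of `h` on the open right half-plane. -/
def HasLaplaceTransform (h : ℝ → ℝ) (g : ℂ → ℂ) : Prop :=
  ∀ z : ℂ, 0 < z.re → ∫ u in Ioi (0 : ℝ), (h u : ℂ) * cexp (-z * u) = g z

lemma HasLaplaceTransform.comp_mul_left {h : ℝ → ℝ} {g : ℂ → ℂ} (hg : HasLaplaceTransform h g)
    {s : ℝ} (hs : 0 < s) :
    HasLaplaceTransform (fun u => h (s * u)) (fun z => (s : ℂ)⁻¹ * g (z / s)) := by
  intro z hz
  have hre : 0 < (z / s).re := by rw [div_ofReal_re]; positivity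
  have hs' : (s : ℂ) ≠ 0 := ofReal_ne_zero.2 hs.ne'
  have hsubst := integral_comp_mul_left_Ioi (fun u : ℝ => (h u : ℂ) * cexp (-(z / s) * u)) 0 hs
  rw [mul_zero, hg _ hre, real_smul, ofReal_inv] at hsubst
  refine Eq.trans (integral_congr_ae (.of_forall fun u => ?_)) hsubst
  have hexp : -z * u = -(z / s) * (s * u : ℝ) := by
    push_cast
    field_simp
  simp only [hexp]

variable {h : ℝ → ℝ} {g : ℂ → ℂ} {B : ℝ}

lemma integrable_modulatedTriangle_mul_laplace (hm : Measurable h) (hB : ∀ u, |h u| ≤ B)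
    {σ : ℝ} (hσ : 0 < σ) (y : ℝ) :
    Integrable
      (Function.uncurry fun t u : ℝ =>
        modulatedTriangle y t * ((h u : ℂ) * cexp (-(σ + I * t) * u)))
      ((volume.restrict (uIoc (-1 : ℝ) 1)).prod (volume.restrict (Ioi (0 : ℝ)))) := by
  have hdom : Integrable (fun p : ℝ × ℝ => 1 * (B * Real.exp (-σ * p.2)))
      ((volume.restrict (uIoc (-1 : ℝ) 1)).prod (volume.restrict (Ioi (0 : ℝ)))) := by
    have : IsFiniteMeasure (volume.restrict (uIoc (-1 : ℝ) 1)) := by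
      rw [uIoc_of_le (by norm_num)]; infer_instance
    exact (integrable_const (1 : ℝ)).mul_prod
      ((integrableOn_exp_mul_Ioi (neg_lt_zero.2 hσ) 0).const_mul B)
  refine hdom.mono' (Measurable.aestronglyMeasurable ?_) ?_
  · have := (continuous_modulatedTriangle y).measurable
    simp only [Function.uncurry_def]
    fun_prop
  · rw [Measure.prod_restrict]
    refine (ae_restrict_mem (measurableSet_uIoc.prod measurableSet_Ioi)).mono ?_
    rintro ⟨t, u⟩ ⟨ht, -⟩
    rw [uIoc_of_le (by norm_num)] at ht
    have hexp : ‖cexp (-(σ + I * t) * u)‖ = Real.exp (-σ * u) := by simp [norm_exp]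
    simp only [Function.uncurry_apply_pair, norm_mul, hexp, norm_real, Real.norm_eq_abs]
    gcongr
    exacts [norm_modulatedTriangle_le_one y ht, hB u]

lemma HasLaplaceTransform.integral_modulatedTriangle_mul (hg : HasLaplaceTransform h g)
    (hm : Measurable h) (hB : ∀ u, |h u| ≤ B) {σ : ℝ} (hσ : 0 < σ) (y : ℝ) :
    ∫ t in (-1 : ℝ)..1, modulatedTriangle y t * g (σ + I * t)
      = ∫ u in Ioi (0 : ℝ), (h u : ℂ) * (Real.exp (-σ * u) : ℂ) * (fejerKernel (y - u) : ℂ) := by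
  have hexpand (t : ℝ) : modulatedTriangle y t * g (σ + I * t)
      = ∫ u in Ioi (0 : ℝ), modulatedTriangle y t * ((h u : ℂ) * cexp (-(σ + I * t) * u)) := by
    rw [integral_const_mul, hg _ (by simpa using hσ)]
  simp_rw [hexpand]
  rw [intervalIntegral_integral_swap (integrable_modulatedTriangle_mul_laplace hm hB hσ y)]
  have hne : ∀ᵐ u ∂(volume.restrict (Ioi (0 : ℝ))), u ≠ y := ae_restrict_of_ae (by simp [ae_iff])
  refine integral_congr_ae (hne.mono fun u hu => ?_)
  dsimp only
  rw [← integral_modulatedTriangle (sub_ne_zero.2 hu.symm), ← intervalIntegral.integral_const_mul]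
  refine intervalIntegral.integral_congr fun t _ => ?_
  have hsplit : cexp (-(σ + I * t) * u) = (Real.exp (-σ * u) : ℂ) * cexp (-(I * t) * u) := by
    rw [ofReal_exp, ← exp_add]
    push_cast
    ring_nf
  rw [← modulatedTriangle_mul_cexp, hsplit]
  ring

lemma tendsto_setIntegral_mul_exp_mul_fejerKernel (hm : Measurable h) (hB : ∀ u, |h u| ≤ B)
    (y : ℝ) :
    Tendsto (fun σ : ℝ => ∫ u in Ioi (0 : ℝ),
        (h u : ℂ) * (Real.exp (-σ * u) : ℂ) * (fejerKernel (y - u) : ℂ))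
      (𝓝[>] 0) (𝓝 (∫ u in Ioi (0 : ℝ), (h u : ℂ) * (fejerKernel (y - u) : ℂ))) := by
  apply tendsto_integral_filter_of_dominated_convergence (fun u => B * fejerKernel (y - u))
  · exact .of_forall fun σ => Measurable.aestronglyMeasurable (by fun_prop)
  · filter_upwards [self_mem_nhdsWithin] with σ (hσ : 0 < σ)
    refine (ae_restrict_mem measurableSet_Ioi).mono fun u (hu : 0 < u) => ?_
    have hexp : Real.exp (-σ * u) ≤ 1 := Real.exp_le_one_iff.2 (by nlinarith)
    have hK := fejerKernel_nonneg (y - u)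
    simp only [norm_mul, norm_real, Real.norm_of_nonneg hK, Real.norm_eq_abs, Real.abs_exp]
    calc |h u| * Real.exp (-σ * u) * fejerKernel (y - u)
        ≤ |h u| * 1 * fejerKernel (y - u) := by gcongr
      _ ≤ B * fejerKernel (y - u) := by rw [mul_one]; gcongr; exact hB u
  · exact ((integrable_fejerKernel.comp_sub_left y).const_mul B).integrableOn
  · refine .of_forall fun u => tendsto_nhdsWithin_of_tendsto_nhds ?_
    have hcont : Continuous fun σ : ℝ =>
        (h u : ℂ) * (Real.exp (-σ * u) : ℂ) * (fejerKernel (y - u) : ℂ) := by fun_prop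
    simpa using hcont.tendsto 0

lemma tendsto_integral_modulatedTriangle_mul (hg : ContinuousOn g {z | 0 ≤ z.re}) (y : ℝ) :
    Tendsto (fun σ : ℝ => ∫ t in (-1 : ℝ)..1, modulatedTriangle y t * g (σ + I * t))
      (𝓝[>] 0) (𝓝 (∫ t in (-1 : ℝ)..1, modulatedTriangle y t * g (I * t))) := by
  obtain ⟨C, hC⟩ : ∃ C, ∀ p ∈ Icc (0 : ℝ) 1 ×ˢ Icc (-1 : ℝ) 1, ‖g (p.1 + I * p.2)‖ ≤ C :=
    (isCompact_Icc.prod isCompact_Icc).exists_bound_of_continuousOn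
      (hg.comp (by fun_prop) fun p hp => by simpa using hp.1.1)
  have hunit : Ioo (0 : ℝ) 1 ∈ 𝓝[>] (0 : ℝ) := Ioo_mem_nhdsGT one_pos
  apply intervalIntegral.tendsto_integral_filter_of_dominated_convergence (fun _ => 1 * C)
  · filter_upwards [hunit] with σ hσ
    refine ContinuousOn.aestronglyMeasurable (.mul (by fun_prop) ?_) measurableSet_uIoc
    exact hg.comp (by fun_prop) fun t _ => by simpa using hσ.1.le
  · filter_upwards [hunit] with σ hσ
    refine .of_forall fun t ht => ?_
    rw [uIoc_of_le (by norm_num)] at ht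
    rw [norm_mul]
    gcongr
    exacts [norm_modulatedTriangle_le_one y ht,
      hC (σ, t) ⟨⟨hσ.1.le, hσ.2.le⟩, ⟨ht.1.le, ht.2⟩⟩]
  · exact intervalIntegrable_const
  · refine .of_forall fun t _ => Tendsto.const_mul _ ?_
    refine (hg (I * t) (by simp)).tendsto.comp (tendsto_nhdsWithin_iff.2 ⟨?_, ?_⟩)
    · have hcont : Continuous fun σ : ℝ => (σ : ℂ) + I * t := by fun_prop
      simpa using tendsto_nhdsWithin_of_tendsto_nhds (hcont.tendsto 0)
    · filter_upwards [hunit] with σ hσ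
      simpa using hσ.1.le

lemma tendsto_integral_modulatedTriangle_mul_atTop (f : ℝ → ℂ) :
    Tendsto (fun y : ℝ => ∫ t in (-1 : ℝ)..1, modulatedTriangle y t * f t) atTop (𝓝 0) := by
  have hRiemannLebesgue := Real.tendsto_integral_exp_smul_cocompact
    (indicator (Ioc (-1 : ℝ) 1) fun t => ((1 - |t| : ℝ) : ℂ) * f t)
  have hfreq : Tendsto (fun y : ℝ => -y / (2 * Real.pi)) atTop (cocompact ℝ) :=
    (tendsto_neg_atTop_atBot.atBot_div_const (by positivity)).mono_right atBot_le_cocompact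
  refine (hRiemannLebesgue.comp hfreq).congr fun y => ?_
  rw [intervalIntegral.integral_of_le (by norm_num), ← integral_indicator measurableSet_Ioc]
  refine integral_congr_ae (.of_forall fun t => ?_)
  by_cases ht : t ∈ Ioc (-1 : ℝ) 1
  · have hphase : 2 * Real.pi * -(t * (-y / (2 * Real.pi))) = t * y := by field_simp
    simp only [indicator_of_mem ht, Circle.smul_def, Real.fourierChar_apply, smul_eq_mul, hphase,
      modulatedTriangle]
    push_cast
    ring_nf
  · simp only [indicator_of_notMem ht, smul_zero]

lemma HasLaplaceTransform.tendsto_setIntegral_mul_fejerKernel (hlap : HasLaplaceTransform h g)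
    (hg : ContinuousOn g {z | 0 ≤ z.re}) (hm : Measurable h) (hB : ∀ u, |h u| ≤ B) :
    Tendsto (fun y => ∫ u in Ioi (0 : ℝ), h u * fejerKernel (y - u)) atTop (𝓝 0) := by
  have hboundary (y : ℝ) : ∫ t in (-1 : ℝ)..1, modulatedTriangle y t * g (I * t)
      = ∫ u in Ioi (0 : ℝ), (h u : ℂ) * (fejerKernel (y - u) : ℂ) := by
    refine tendsto_nhds_unique (tendsto_integral_modulatedTriangle_mul hg y)
      ((tendsto_setIntegral_mul_exp_mul_fejerKernel hm hB y).congr' ?_)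
    filter_upwards [self_mem_nhdsWithin] with σ hσ
    exact (hlap.integral_modulatedTriangle_mul hm hB hσ y).symm
  have hlim := tendsto_integral_modulatedTriangle_mul_atTop fun t => g (I * t)
  simp_rw [hboundary, ← ofReal_mul, integral_complex_ofReal] at hlim
  exact (continuous_re.tendsto 0).comp hlim

variable {H : ℝ → ℝ}

lemma integrable_comp_mul_fejerKernel (hm : Measurable H) (hB : ∀ u, |H u| ≤ B) {φ : ℝ → ℝ}
    (hφ : Measurable φ) : Integrable fun v => H (φ v) * fejerKernel v :=
  integrable_fejerKernel.bdd_mul (hm.comp hφ).aestronglyMeasurable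
    (.of_forall fun v => hB (φ v))

lemma HasLaplaceTransform.tendsto_integral_mul_fejerKernel
    (hlap : HasLaplaceTransform (fun u => H u - 1) g) (hg : ContinuousOn g {z | 0 ≤ z.re})
    (hm : Measurable H) (hB : ∀ u, |H u| ≤ B) (hzero : ∀ u ≤ 0, H u = 0) :
    Tendsto (fun y => ∫ v, H (y - v) * fejerKernel v) atTop (𝓝 (∫ v, fejerKernel v)) := by
  have hbound (u : ℝ) : |H u - 1| ≤ B + 1 := (abs_sub _ _).trans (by simpa using hB u)
  have herror := hlap.tendsto_setIntegral_mul_fejerKernel hg (hm.sub_const 1) hbound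
  have hK (y : ℝ) : Integrable fun u => fejerKernel (y - u) :=
    integrable_fejerKernel.comp_sub_left y
  have hHK (y : ℝ) : Integrable fun u => H u * fejerKernel (y - u) :=
    (hK y).bdd_mul hm.aestronglyMeasurable (.of_forall hB)
  have hmass : Tendsto (fun y => ∫ u in Ioi (0 : ℝ), fejerKernel (y - u)) atTop
      (𝓝 (∫ v, fejerKernel v)) := by
    have hcover : AECover volume atTop (fun y : ℝ => Iio y) := aecover_Iio tendsto_id
    refine (hcover.integral_tendsto_of_countably_generated integrable_fejerKernel).congr fun y => ?_
    rw [← integral_indicator measurableSet_Iio, ← integral_indicator measurableSet_Ioi,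
      ← integral_sub_left_eq_self _ volume y]
    simp [indicator]
  have hsplit (y : ℝ) : ∫ v, H (y - v) * fejerKernel v =
      (∫ u in Ioi (0 : ℝ), (H u - 1) * fejerKernel (y - u))
        + ∫ u in Ioi (0 : ℝ), fejerKernel (y - u) := by
    calc ∫ v, H (y - v) * fejerKernel v = ∫ u, H u * fejerKernel (y - u) := by
          simpa using (integral_sub_left_eq_self (fun v => H (y - v) * fejerKernel v) volume y).symm
      _ = ∫ u in Ioi (0 : ℝ), H u * fejerKernel (y - u) :=
          (setIntegral_eq_integral_of_forall_compl_eq_zero fun u hu => by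
            rw [hzero u (not_lt.1 hu), zero_mul]).symm
      _ = _ := by
          simp_rw [sub_mul, one_mul]
          rw [integral_sub (hHK y).integrableOn (hK y).integrableOn, sub_add_cancel]
  simp_rw [hsplit]
  simpa using herror.add hmass

lemma le_mul_exp_of_monotone_mul_exp (hnonneg : ∀ u, 0 ≤ H u)
    (hmono : Monotone fun u => H u * Real.exp u) {u w d : ℝ} (huw : u ≤ w) (hwu : w ≤ u + d) :
    H u ≤ H w * Real.exp d :=
  calc H u = H u * Real.exp u * Real.exp (-u) := by simp [mul_assoc, ← Real.exp_add]
    _ ≤ H w * Real.exp w * Real.exp (-u) :=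
        mul_le_mul_of_nonneg_right (hmono huw) (Real.exp_pos _).le
    _ = H w * Real.exp (w - u) := by rw [mul_assoc, ← Real.exp_add, sub_eq_add_neg]
    _ ≤ H w * Real.exp d := by
        gcongr
        · exact hnonneg w
        · linarith

lemma abs_mul_le_of_mem_Icc {s R δ v : ℝ} (hs : 0 ≤ s) (hsR : s * R ≤ δ) (hv : v ∈ Icc (-R) R) :
    |s * v| ≤ δ := by
  rw [abs_mul, abs_of_nonneg hs]
  exact (mul_le_mul_of_nonneg_left (abs_le.2 hv) hs).trans hsR

section Tauberian

variable (hm : Measurable H) (hB : ∀ u, |H u| ≤ B) (hnonneg : ∀ u, 0 ≤ H u)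
  (hmono : Monotone fun u => H u * Real.exp u) {s R δ : ℝ} (hs : 0 ≤ s) (hsR : s * R ≤ δ)
include hm hB hnonneg hmono hs hsR

lemma mul_setIntegral_fejerKernel_le (y : ℝ) :
    H y * ∫ v in Icc (-R) R, fejerKernel v
      ≤ Real.exp (2 * δ) * ∫ v, H (y + δ - s * v) * fejerKernel v := by
  have hInt : Integrable fun v => H (y + δ - s * v) * fejerKernel v :=
    integrable_comp_mul_fejerKernel hm hB (by fun_prop)
  rw [← integral_const_mul, ← integral_const_mul]
  refine (setIntegral_mono_on (integrable_fejerKernel.const_mul _).integrableOn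
    (hInt.const_mul _).integrableOn measurableSet_Icc fun v hv => ?_).trans
    (setIntegral_le_integral (hInt.const_mul _) (.of_forall fun v =>
      mul_nonneg (Real.exp_pos _).le (mul_nonneg (hnonneg _) (fejerKernel_nonneg v))))
  have hsv := abs_le.1 (abs_mul_le_of_mem_Icc hs hsR hv)
  have hle : H y ≤ H (y + δ - s * v) * Real.exp (2 * δ) :=
    le_mul_exp_of_monotone_mul_exp hnonneg hmono (by linarith) (by linarith)
  rw [← mul_assoc, mul_comm (Real.exp _)]
  exact mul_le_mul_of_nonneg_right hle (fejerKernel_nonneg v)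

lemma integral_mul_fejerKernel_le (y : ℝ) :
    ∫ v, H (y - δ - s * v) * fejerKernel v
      ≤ H y * Real.exp (2 * δ) * (∫ v in Icc (-R) R, fejerKernel v)
        + B * ((∫ v, fejerKernel v) - ∫ v in Icc (-R) R, fejerKernel v) := by
  have hInt : Integrable fun v => H (y - δ - s * v) * fejerKernel v :=
    integrable_comp_mul_fejerKernel hm hB (by fun_prop)
  have htail : (∫ v, fejerKernel v) - ∫ v in Icc (-R) R, fejerKernel v
      = ∫ v in (Icc (-R) R)ᶜ, fejerKernel v := by
    rw [← integral_add_compl measurableSet_Icc integrable_fejerKernel, add_sub_cancel_left]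
  rw [htail, ← integral_add_compl (s := Icc (-R) R) measurableSet_Icc hInt, ← integral_const_mul,
    ← integral_const_mul]
  refine add_le_add ?_ ?_
  · refine setIntegral_mono_on hInt.integrableOn (integrable_fejerKernel.const_mul _).integrableOn
      measurableSet_Icc fun v hv => mul_le_mul_of_nonneg_right ?_ (fejerKernel_nonneg v)
    have hsv := abs_le.1 (abs_mul_le_of_mem_Icc hs hsR hv)
    exact le_mul_exp_of_monotone_mul_exp hnonneg hmono (by linarith) (by linarith)
  · exact setIntegral_mono_on hInt.integrableOn (integrable_fejerKernel.const_mul _).integrableOn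
      measurableSet_Icc.compl fun v _ =>
        mul_le_mul_of_nonneg_right (le_of_abs_le (hB _)) (fejerKernel_nonneg v)

end Tauberian

lemma tendsto_setIntegral_Icc_inv_fejerKernel :
    Tendsto (fun δ : ℝ => ∫ v in Icc (-δ⁻¹) δ⁻¹, fejerKernel v) (𝓝[>] 0)
      (𝓝 (∫ v, fejerKernel v)) :=
  ((aecover_Icc tendsto_neg_atTop_atBot tendsto_id).integral_tendsto_of_countably_generated
    integrable_fejerKernel).comp tendsto_inv_nhdsGT_zero

-- At scale `s = δ²` the window `|v| ≤ δ⁻¹` moves the argument of `H` by at most `δ`.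
theorem tendsto_one_of_tendsto_integral_mul_fejerKernel (hm : Measurable H) (hB : ∀ u, |H u| ≤ B)
    (hnonneg : ∀ u, 0 ≤ H u) (hmono : Monotone fun u => H u * Real.exp u)
    (hconv : ∀ s > 0, Tendsto (fun y => ∫ v, H (y - s * v) * fejerKernel v) atTop
      (𝓝 (∫ v, fejerKernel v))) :
    Tendsto H atTop (𝓝 1) := by
  set c := ∫ v, fejerKernel v
  have hc : 0 < c := integral_fejerKernel_pos
  set cδ : ℝ → ℝ := fun δ => ∫ v in Icc (-δ⁻¹) δ⁻¹, fejerKernel v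
  have hcδ : Tendsto cδ (𝓝[>] 0) (𝓝 c) := tendsto_setIntegral_Icc_inv_fejerKernel
  have hexp : Tendsto (fun δ : ℝ => Real.exp (2 * δ)) (𝓝[>] 0) (𝓝 1) := by
    have hcont : Continuous fun δ : ℝ => Real.exp (2 * δ) := by fun_prop
    simpa using tendsto_nhdsWithin_of_tendsto_nhds (hcont.tendsto 0)
  have hid : Tendsto (fun δ : ℝ => δ) (𝓝[>] 0) (𝓝 0) := nhdsWithin_le_nhds
  have hpos : ∀ᶠ δ in 𝓝[>] 0, 0 < cδ δ ∧ 0 < δ :=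
    (hcδ.eventually (lt_mem_nhds hc)).and self_mem_nhdsWithin
  have hscale {δ : ℝ} (hδ : 0 < δ) : δ ^ 2 * δ⁻¹ ≤ δ := by rw [sq, mul_inv_cancel_right₀ hδ.ne']
  refine tendsto_order.2 ⟨fun a ha => ?_, fun a ha => ?_⟩
  · have hlow : Tendsto (fun δ => (c - δ - B * (c - cδ δ)) / (cδ δ * Real.exp (2 * δ))) (𝓝[>] 0)
        (𝓝 1) := by
      simpa [hc.ne', Pi.div_def] using ((hid.const_sub c).sub ((hcδ.const_sub c).const_mul B)).div
        (hcδ.mul hexp) (by simp [hc.ne'])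
    obtain ⟨δ, haδ, hcδ_pos, hδ⟩ := ((hlow.eventually (lt_mem_nhds ha)).and hpos).exists
    have hshift := (hconv (δ ^ 2) (by positivity)).comp
      (tendsto_atTop_add_const_right atTop (-δ) tendsto_id)
    filter_upwards [hshift.eventually (lt_mem_nhds (sub_lt_self c hδ))] with y hy
    refine haδ.trans_le ((div_le_iff₀ (by positivity)).2 ?_)
    simp only [Function.comp, id, ← sub_eq_add_neg] at hy
    linarith [integral_mul_fejerKernel_le hm hB hnonneg hmono (sq_nonneg δ) (hscale hδ) y]
  · have hupp : Tendsto (fun δ => Real.exp (2 * δ) * (c + δ) / cδ δ) (𝓝[>] 0) (𝓝 1) := by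
      simpa [hc.ne', Pi.div_def] using (hexp.mul (hid.const_add c)).div hcδ hc.ne'
    obtain ⟨δ, haδ, hcδ_pos, hδ⟩ := ((hupp.eventually (gt_mem_nhds ha)).and hpos).exists
    have hshift := (hconv (δ ^ 2) (by positivity)).comp
      (tendsto_atTop_add_const_right atTop δ tendsto_id)
    filter_upwards [hshift.eventually (gt_mem_nhds (lt_add_of_pos_right c hδ))] with y hy
    refine lt_of_le_of_lt ((le_div_iff₀ hcδ_pos).2 ?_) haδ
    calc H y * cδ δ ≤ Real.exp (2 * δ) * ∫ v, H (y + δ - δ ^ 2 * v) * fejerKernel v :=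
          mul_setIntegral_fejerKernel_le hm hB hnonneg hmono (sq_nonneg δ) (hscale hδ) y
      _ ≤ Real.exp (2 * δ) * (c + δ) := by gcongr; exact hy.le

theorem HasLaplaceTransform.tendsto_one (hlap : HasLaplaceTransform (fun u => H u - 1) g)
    (hg : ContinuousOn g {z | 0 ≤ z.re}) (hm : Measurable H) (hB : ∀ u, |H u| ≤ B)
    (hzero : ∀ u ≤ 0, H u = 0) (hnonneg : ∀ u, 0 ≤ H u)
    (hmono : Monotone fun u => H u * Real.exp u) : Tendsto H atTop (𝓝 1) := by
  refine tendsto_one_of_tendsto_integral_mul_fejerKernel hm hB hnonneg hmono fun s hs => ?_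
  have hscaled : ContinuousOn (fun z => (s : ℂ)⁻¹ * g (z / s)) {z | 0 ≤ z.re} := by
    refine .mul (by fun_prop) (hg.comp (by fun_prop) fun z (hz : 0 ≤ z.re) => ?_)
    exact (div_ofReal_re z s).ge.trans' (div_nonneg hz hs.le)
  have hlim := (hlap.comp_mul_left hs).tendsto_integral_mul_fejerKernel hscaled
    (hm.comp (measurable_const_mul s)) (fun u => hB (s * u))
    (fun u hu => hzero _ (mul_nonpos_of_nonneg_of_nonpos hs.le hu))
  refine (hlim.comp (tendsto_id.atTop_div_const hs)).congr fun y => ?_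
  simp only [Function.comp, id, mul_sub, mul_div_cancel₀ _ hs.ne']

end WienerIkehara

section PrimeNumberTheorem

open MeasureTheory Filter Topology Set Complex
open ArithmeticFunction (vonMangoldt)

/-- The Chebyshev function in logarithmic scale, `ψ(eᵘ) / eᵘ`; the prime number theorem says that
it tends to `1`. -/
noncomputable def normalizedPsi (u : ℝ) : ℝ := Chebyshev.psi (Real.exp u) * Real.exp (-u)

lemma normalizedPsi_nonneg (u : ℝ) : 0 ≤ normalizedPsi u :=
  mul_nonneg (Chebyshev.psi_nonneg _) (Real.exp_pos _).le

@[fun_prop]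
lemma measurable_normalizedPsi : Measurable normalizedPsi :=
  (Chebyshev.psi_mono.measurable.comp Real.measurable_exp).mul (by fun_prop)

lemma abs_normalizedPsi_le (u : ℝ) : |normalizedPsi u| ≤ Real.log 4 + 4 := by
  rw [abs_of_nonneg (normalizedPsi_nonneg u), normalizedPsi, Real.exp_neg, ← div_eq_mul_inv,
    div_le_iff₀ (Real.exp_pos u)]
  exact Chebyshev.psi_le_const_mul_self (Real.exp_pos u).le

lemma normalizedPsi_eq_zero_of_nonpos {u : ℝ} (hu : u ≤ 0) : normalizedPsi u = 0 := by
  rw [normalizedPsi, Chebyshev.psi_eq_zero_of_le_one (Real.exp_le_one_iff.2 hu), zero_mul]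

lemma normalizedPsi_mul_exp (u : ℝ) :
    normalizedPsi u * Real.exp u = Chebyshev.psi (Real.exp u) := by
  rw [normalizedPsi, mul_assoc, ← Real.exp_add, neg_add_cancel, Real.exp_zero, mul_one]

lemma sum_Icc_vonMangoldt_isBigO :
    (fun n : ℕ => ∑ k ∈ Finset.Icc 1 n, vonMangoldt k) =O[atTop] fun n => (n : ℝ) ^ (1 : ℝ) := by
  refine .of_bound (Real.log 4 + 4) (.of_forall fun n => ?_)
  have hpsi : ∑ k ∈ Finset.Icc 1 n, vonMangoldt k = Chebyshev.psi n := by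
    rw [Chebyshev.psi, Nat.floor_natCast]; rfl
  rw [hpsi, Real.norm_of_nonneg (Chebyshev.psi_nonneg _), Real.rpow_one, RCLike.norm_natCast]
  exact Chebyshev.psi_le_const_mul_self n.cast_nonneg

lemma hasLaplaceTransform_normalizedPsi :
    HasLaplaceTransform normalizedPsi fun z =>
      LSeries (fun n => vonMangoldt n) (1 + z) / (1 + z) := by
  intro z hz
  have hre : (1 : ℝ) < (1 + z).re := by simpa using hz
  have hne : 1 + z ≠ 0 := ne_zero_of_one_lt_re hre
  dsimp only
  rw [LSeries_eq_mul_integral_of_nonneg _ zero_le_one hre sum_Icc_vonMangoldt_isBigO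
    (fun n => ArithmeticFunction.vonMangoldt_nonneg), mul_div_cancel_left₀ _ hne,
    ← Real.exp_zero, ← integral_comp_exp_Ioi]
  refine setIntegral_congr_fun measurableSet_Ioi fun u _ => ?_
  have hsum : ∑ k ∈ Finset.Icc 1 ⌊Real.exp u⌋₊, (vonMangoldt k : ℂ)
      = Chebyshev.psi (Real.exp u) := by
    rw [Chebyshev.psi]; push_cast; rfl
  have hpow : ((Real.exp u : ℝ) : ℂ) ^ (-(1 + z + 1)) = cexp (u * (-(1 + z + 1))) := by
    rw [cpow_def_of_ne_zero (ofReal_ne_zero.2 (Real.exp_ne_zero u)),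
      ← ofReal_log (Real.exp_pos u).le, Real.log_exp]
  have hexp : cexp (-u) * cexp (-z * u) = cexp u * cexp (u * (-(1 + z + 1))) := by
    rw [← exp_add, ← exp_add]; ring_nf
  simp only [hsum, hpow, real_smul, normalizedPsi]
  push_cast
  linear_combination (Chebyshev.psi (Real.exp u) : ℂ) * hexp

/-- The continuous extension of `-ζ'/ζ(s) - 1/(s - 1)` to the closed half-plane `1 ≤ re s`:
the modulus `1` case of the function used for Dirichlet's theorem. -/
noncomputable def vonMangoldtRegularPart : ℂ → ℂ :=
  vonMangoldt.LFunctionResidueClassAux (q := 1) 1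

lemma LSeries_vonMangoldt_eq_regularPart_add {s : ℂ} (hs : 1 < s.re) :
    LSeries (fun n => vonMangoldt n) s = vonMangoldtRegularPart s + 1 / (s - 1) := by
  have htriv : (fun n : ℕ => ((vonMangoldt.residueClass (q := 1) 1 n : ℝ) : ℂ)) =
      fun n => (vonMangoldt n : ℂ) := by
    ext n
    rw [vonMangoldt.residueClass, indicator_of_mem]
    exact Subsingleton.elim _ _
  have haux := vonMangoldt.eqOn_LFunctionResidueClassAux (q := 1) (a := 1) isUnit_one hs
  simp only [htriv, Nat.totient_one, Nat.cast_one, inv_one] at haux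
  rw [vonMangoldtRegularPart, haux, sub_add_cancel]

lemma hasLaplaceTransform_normalizedPsi_sub_one :
    HasLaplaceTransform (fun u => normalizedPsi u - 1)
      fun z => (vonMangoldtRegularPart (1 + z) - 1) / (1 + z) := by
  intro z hz
  have hre : (1 : ℝ) < (1 + z).re := by simpa using hz
  have hz0 : z ≠ 0 := ne_zero_of_re_pos hz
  have hz1 : 1 + z ≠ 0 := ne_zero_of_one_lt_re hre
  have hint_exp : IntegrableOn (fun u : ℝ => cexp (-z * u)) (Ioi 0) :=
    integrableOn_exp_mul_complex_Ioi (by simpa using hz) 0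
  have hint_psi : IntegrableOn (fun u : ℝ => (normalizedPsi u : ℂ) * cexp (-z * u)) (Ioi 0) :=
    hint_exp.bdd_mul (c := Real.log 4 + 4) (Measurable.aestronglyMeasurable (by fun_prop))
      (.of_forall fun u => by simpa using abs_normalizedPsi_le u)
  simp only [ofReal_sub, ofReal_one, sub_mul, one_mul]
  rw [integral_sub hint_psi hint_exp, integral_exp_mul_complex_Ioi (by simpa using hz),
    hasLaplaceTransform_normalizedPsi z hz]
  dsimp only
  rw [LSeries_vonMangoldt_eq_regularPart_add hre, add_sub_cancel_left]
  simp only [ofReal_zero, mul_zero, exp_zero]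
  field_simp
  ring

lemma continuousOn_vonMangoldtRegularPart_laplace :
    ContinuousOn (fun z => (vonMangoldtRegularPart (1 + z) - 1) / (1 + z)) {z | 0 ≤ z.re} := by
  refine .div (.sub ?_ continuousOn_const) (by fun_prop) fun z (hz : 0 ≤ z.re) h => ?_
  · exact (vonMangoldt.continuousOn_LFunctionResidueClassAux (q := 1) 1).comp (by fun_prop)
      fun z hz => by simpa using hz
  · have hre : (1 + z).re = 0 := by rw [h, zero_re]
    rw [add_re, one_re] at hre
    linarith

theorem tendsto_normalizedPsi : Tendsto normalizedPsi atTop (𝓝 1) :=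
  hasLaplaceTransform_normalizedPsi_sub_one.tendsto_one continuousOn_vonMangoldtRegularPart_laplace
    measurable_normalizedPsi abs_normalizedPsi_le (fun _ => normalizedPsi_eq_zero_of_nonpos)
    normalizedPsi_nonneg fun u v huv => by
      simpa only [normalizedPsi_mul_exp] using Chebyshev.psi_mono (Real.exp_le_exp.2 huv)

theorem tendsto_psi_div_self : Tendsto (fun x => Chebyshev.psi x / x) atTop (𝓝 1) := by
  refine (tendsto_normalizedPsi.comp Real.tendsto_log_atTop).congr' ?_
  filter_upwards [eventually_gt_atTop 0] with x hx
  rw [Function.comp, normalizedPsi, Real.exp_neg, Real.exp_log hx, div_eq_mul_inv]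

lemma sqrt_isLittleO_id : Real.sqrt =o[atTop] (id : ℝ → ℝ) := by
  refine (Asymptotics.isLittleO_iff_tendsto' ?_).2 ?_
  · filter_upwards [eventually_gt_atTop 0] with x hx h
    exact absurd h hx.ne'
  · simpa [Function.comp_def, Real.sqrt_div_self'] using
      tendsto_inv_atTop_zero.comp Real.tendsto_sqrt_atTop

theorem tendsto_theta_div_self : Tendsto (fun x => Chebyshev.theta x / x) atTop (𝓝 1) := by
  have hdiff : Tendsto (fun x => (Chebyshev.psi - Chebyshev.theta) x / x) atTop (𝓝 0) :=
    (Chebyshev.isBigO_psi_sub_theta_sqrt.trans_isLittleO sqrt_isLittleO_id).tendsto_div_nhds_zero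
  simpa [sub_div] using tendsto_psi_div_self.sub hdiff

theorem tendsto_primeCounting_mul_log_div :
    Tendsto (fun x : ℝ => (Nat.primeCounting ⌊x⌋₊ : ℝ) * Real.log x / x) atTop (𝓝 1) := by
  have hlog : ∀ᶠ x in atTop, 0 < Real.log x := Real.tendsto_log_atTop.eventually_gt_atTop 0
  have hlittle : (fun x : ℝ => x / Real.log x ^ 2) =o[atTop] fun x => x / Real.log x := by
    refine (Asymptotics.isLittleO_iff_tendsto' ?_).2 ?_
    · filter_upwards [eventually_gt_atTop 0, hlog] with x hx hlogx h
      exact absurd h (div_pos hx hlogx).ne'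
    · refine (tendsto_inv_atTop_zero.comp Real.tendsto_log_atTop).congr' ?_
      filter_upwards [eventually_gt_atTop 0, hlog] with x hx hlogx
      simp only [Function.comp]
      field_simp
  have herror := (Chebyshev.primeCounting_sub_theta_div_log_isBigO.trans_isLittleO
    hlittle).tendsto_div_nhds_zero
  have hsum := tendsto_theta_div_self.add herror
  rw [add_zero] at hsum
  refine hsum.congr' ?_
  filter_upwards [eventually_gt_atTop 0, hlog] with x hx hlogx
  field_simp
  ring

lemma tendsto_log_natCast_atTop : Tendsto (fun n : ℕ => Real.log n) atTop atTop :=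
  Real.tendsto_log_atTop.comp tendsto_natCast_atTop_atTop

lemma tendsto_primeCounting_natCast_mul_log_div :
    Tendsto (fun n : ℕ => (Nat.primeCounting n : ℝ) * Real.log n / n) atTop (𝓝 1) := by
  simpa [Function.comp_def] using
    tendsto_primeCounting_mul_log_div.comp tendsto_natCast_atTop_atTop

lemma tendsto_log_natCast_div_div_log {m : ℕ} (hm : m ≠ 0) :
    Tendsto (fun n : ℕ => Real.log (n / m) / Real.log n) atTop (𝓝 1) := by
  have hlim : Tendsto (fun n : ℕ => 1 - Real.log m / Real.log n) atTop (𝓝 1) := by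
    simpa using (tendsto_log_natCast_atTop.const_div_atTop (Real.log m)).const_sub 1
  refine hlim.congr' ?_
  filter_upwards [tendsto_log_natCast_atTop.eventually_gt_atTop 0, eventually_gt_atTop 0]
    with n hlog hn
  rw [Real.log_div (by positivity) (by positivity), sub_div, div_self hlog.ne']

theorem tendsto_primeCounting_div_div_primeCounting {m : ℕ} (hm : m ≠ 0) :
    Tendsto (fun n : ℕ => (Nat.primeCounting (n / m) : ℝ) / Nat.primeCounting n) atTop
      (𝓝 (1 / m)) := by
  have hm0 : (0 : ℝ) < m := by positivity
  have hdiv : Tendsto (fun n : ℕ => (n : ℝ) / m) atTop atTop :=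
    tendsto_natCast_atTop_atTop.atTop_div_const hm0
  have hquot : Tendsto (fun n : ℕ => (Nat.primeCounting (n / m) : ℝ) * Real.log (n / m) / (n / m))
      atTop (𝓝 1) := by
    simpa [Function.comp_def, Nat.floor_div_natCast] using
      tendsto_primeCounting_mul_log_div.comp hdiv
  have hlim := ((hquot.div (tendsto_log_natCast_div_div_log hm) one_ne_zero).div
    tendsto_primeCounting_natCast_mul_log_div one_ne_zero).div_const (m : ℝ)
  rw [div_one, div_one] at hlim
  refine hlim.congr' ?_
  filter_upwards [hdiv.eventually_gt_atTop 1, eventually_ge_atTop 2] with n hn1 hn2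
  have hlogdiv : 0 < Real.log (n / m) := Real.log_pos hn1
  have hlog : 0 < Real.log n := Real.log_pos (by exact_mod_cast hn2)
  have hpi : (Nat.primeCounting n : ℝ) ≠ 0 := by
    exact_mod_cast mt Nat.primeCounting_eq_zero_iff.1 (by omega)
  simp only [Pi.div_apply]
  field_simp

end PrimeNumberTheorem

section ProductFreeGraphs

open Finset

variable {k k' : ℕ} {G : SimpleGraph ℕ}

lemma kProductFree_iff (hk : k ≠ 0) : KProductFree k G ↔ (∀ a b, G.Adj a b → 0 < a) ∧
    ∀ a b : Fin k → ℕ, (∀ i, G.Adj (a i) (b i)) → ∏ i, a i ≠ ∏ i, b i := by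
  obtain ⟨j, rfl⟩ := Nat.exists_eq_succ_of_ne_zero hk
  refine and_congr_right fun hpos => ⟨fun h a b hab hprod => ?_, ?_⟩
  · refine h ⟨fun i => a i.castSucc / b i.castSucc, b (Fin.last j) / a (Fin.last j),
      fun i => ⟨_, _, hab _, rfl⟩, ⟨_, _, (hab _).symm, rfl⟩, ?_⟩
    rw [Fin.prod_univ_castSucc, Fin.prod_univ_castSucc] at hprod
    have hb : ∏ i : Fin j, b i.castSucc ≠ 0 :=
      prod_ne_zero_iff.2 fun i _ => (hpos _ _ (hab _).symm).ne'
    have ha : a (Fin.last j) ≠ 0 := (hpos _ _ (hab _)).ne'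
    rw [prod_div_distrib, div_eq_div_iff (by exact_mod_cast hb) (by exact_mod_cast ha),
      mul_comm (b _ : ℚ)]
    exact_mod_cast hprod
  · rintro h ⟨x, _, hx, ⟨c, d, hcd, rfl⟩, hxy⟩
    choose a b hab hxab using hx
    refine h (Fin.snoc a d) (Fin.snoc b c) (Fin.lastCases (by simpa using hcd.symm)
      fun i => by simpa using hab i) ?_
    have hb : ∏ i, b i ≠ 0 := prod_ne_zero_iff.2 fun i _ => (hpos _ _ (hab i).symm).ne'
    have hd : d ≠ 0 := (hpos _ _ hcd.symm).ne'
    simp only [hxab, prod_div_distrib] at hxy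
    rw [div_eq_div_iff (by exact_mod_cast hb) (by exact_mod_cast hd), mul_comm (c : ℚ)] at hxy
    simp only [Fin.prod_univ_castSucc, Fin.snoc_castSucc, Fin.snoc_last]
    exact_mod_cast hxy

lemma KProductFree.of_add_two (hk : k ≠ 0) (hG : KProductFree (k + 2) G) : KProductFree k G := by
  rw [kProductFree_iff (by omega)] at hG ⊢
  refine ⟨hG.1, fun a b hab hprod => ?_⟩
  let zero : Fin k := ⟨0, by omega⟩
  refine hG.2 (Fin.cons (a zero) (Fin.cons (b zero) a)) (Fin.cons (b zero) (Fin.cons (a zero) b))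
    (Fin.cases (hab zero) (Fin.cases (hab zero).symm hab)) ?_
  simp only [Fin.prod_univ_succ, Fin.cons_zero, Fin.cons_succ, hprod]
  exact mul_left_comm _ _ _

lemma KProductFree.mono_of_odd (hk : Odd k) (hk' : Odd k') (hle : k ≤ k')
    (hG : KProductFree k' G) : KProductFree k G := by
  obtain ⟨t, rfl⟩ : ∃ t, k' = k + 2 * t := by
    obtain ⟨a, rfl⟩ := hk
    obtain ⟨b, rfl⟩ := hk'
    exact ⟨b - a, by omega⟩
  clear hk' hle
  induction t with
  | zero => exact hG
  | succ t ih => exact ih (hG.of_add_two (by have := hk.pos; omega))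

lemma KProductFree.cliqueFree_three (hG : KProductFree 3 G) : G.CliqueFree 3 := by
  intro s hs
  obtain ⟨a, b, c, hab, hac, hbc, -⟩ := SimpleGraph.is3Clique_iff.1 hs
  refine ((kProductFree_iff three_ne_zero).1 hG).2 ![a, b, c] ![b, c, a] (fun i => ?_) ?_
  · fin_cases i
    exacts [hab, hbc, hac.symm]
  · simp only [Fin.prod_univ_three, Matrix.cons_val]
    ring

lemma kProductFree_bot (k : ℕ) : KProductFree k (⊥ : SimpleGraph ℕ) :=
  ⟨fun _ _ h => h.elim, fun ⟨_, _, _, ⟨_, _, h, _⟩, _⟩ => h.elim⟩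

lemma two_mul_eOn (G : SimpleGraph ℕ) (m : ℕ) :
    2 * eOn G m = #{p ∈ Icc 1 m ×ˢ Icc 1 m | G.Adj p.1 p.2} := by
  have hswap : #{p ∈ Icc 1 m ×ˢ Icc 1 m | p.2 < p.1 ∧ G.Adj p.1 p.2} = eOn G m :=
    card_equiv (Equiv.prodComm ℕ ℕ) fun p => by
      simp only [mem_filter, mem_product, Equiv.prodComm_apply, Prod.fst_swap, Prod.snd_swap,
        G.adj_comm p.1, and_comm (a := p.1 ∈ _)]
  have hsplit : {p ∈ Icc 1 m ×ˢ Icc 1 m | G.Adj p.1 p.2} =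
      {p ∈ Icc 1 m ×ˢ Icc 1 m | p.1 < p.2 ∧ G.Adj p.1 p.2} ∪
        {p ∈ Icc 1 m ×ˢ Icc 1 m | p.2 < p.1 ∧ G.Adj p.1 p.2} := by
    rw [← filter_or]
    refine filter_congr fun p _ => ?_
    rw [← or_and_right, ← ne_iff_lt_or_gt]
    exact ⟨fun h => ⟨h.ne, h⟩, And.right⟩
  rw [hsplit, card_union_of_disjoint, hswap, two_mul]
  · rfl
  · exact disjoint_filter.2 fun p _ h h' => h.1.not_gt h'.1

end ProductFreeGraphs

section LiouvilleGraph

open Finset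
open ArithmeticFunction (liouville liouville_apply liouville_apply_one liouville_apply_mul)

/-- The graph joining positive integers whose values of the Liouville function differ.
Since `liouville 0 = 0`, the vertex `0` is isolated. -/
def liouvilleGraph : SimpleGraph ℕ where
  Adj a b := liouville a * liouville b = -1
  symm := ⟨fun _ _ h => (mul_comm _ _).trans h⟩
  loopless := ⟨fun a h => by nlinarith [mul_self_nonneg (liouville a)]⟩

lemma liouvilleGraph_adj {a b : ℕ} :
    liouvilleGraph.Adj a b ↔ liouville a * liouville b = -1 := Iff.rfl

lemma liouville_prod {ι : Type*} (s : Finset ι) (a : ι → ℕ) :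
    liouville (∏ i ∈ s, a i) = ∏ i ∈ s, liouville (a i) :=
  map_prod (⟨⟨liouville, liouville_apply_one⟩, liouville_apply_mul⟩ : ℕ →* ℤ) a s

lemma kProductFree_liouvilleGraph {k : ℕ} (hk : Odd k) : KProductFree k liouvilleGraph := by
  rw [kProductFree_iff hk.pos.ne']
  refine ⟨fun a b hab => Nat.pos_of_ne_zero ?_, fun a b hab hprod => ?_⟩
  · rintro rfl
    simp [liouvilleGraph_adj] at hab
  · have hneg : (∏ i, liouville (a i)) * ∏ i, liouville (b i) = -1 := by
      rw [← prod_mul_distrib, prod_congr rfl fun i _ => hab i, prod_const, card_univ,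
        Fintype.card_fin, hk.neg_one_pow]
    rw [← liouville_prod, hprod, liouville_prod] at hneg
    nlinarith [mul_self_nonneg (∏ i, liouville (b i))]

lemma liouville_eq_neg_one_pow_bigOmega {n : ℕ} (hn : n ≠ 0) :
    liouville n = (-1) ^ bigOmega n := by
  rw [liouville_apply hn, ArithmeticFunction.cardFactors_apply, bigOmega]

lemma four_mul_eOn_liouvilleGraph (m : ℕ) :
    (4 : ℤ) * eOn liouvilleGraph m = (m : ℤ) ^ 2 - L m ^ 2 := by
  have hmul : ∀ p ∈ Icc 1 m ×ˢ Icc 1 m, liouville p.1 * liouville p.2 =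
      1 - 2 * if liouvilleGraph.Adj p.1 p.2 then 1 else 0 := fun p hp => by
    have hp1 : p.1 ≠ 0 ∧ p.2 ≠ 0 := by
      simp only [mem_product, mem_Icc] at hp
      omega
    simp only [liouvilleGraph_adj]
    rw [← liouville_apply_mul, liouville_eq_neg_one_pow_bigOmega (mul_ne_zero hp1.1 hp1.2)]
    rcases neg_one_pow_eq_or ℤ (bigOmega (p.1 * p.2)) with h | h <;> simp [h]
  have hL : L m = ∑ i ∈ Icc 1 m, liouville i :=
    sum_congr rfl fun i hi =>
      (liouville_eq_neg_one_pow_bigOmega (by have := mem_Icc.1 hi; omega)).symm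
  have hcard := congrArg (Nat.cast (R := ℤ)) (two_mul_eOn liouvilleGraph m)
  rw [hL, sq (∑ _ ∈ _, _), sum_mul_sum, ← sum_product', sum_congr rfl hmul, sum_sub_distrib,
    ← mul_sum, sum_boole, ← hcard]
  simp only [sum_const, card_product, Nat.card_Icc, Nat.add_sub_cancel, nsmul_eq_mul]
  push_cast
  ring

lemma gProd_liouvilleGraph : gProd liouvilleGraph = betaMinus := by
  refine tprod_congr fun m => ?_
  have heOn : (4 : ℝ) * eOn liouvilleGraph (m + 1) = ((m + 1 : ℕ) : ℝ) ^ 2 - (L (m + 1) : ℝ) ^ 2 :=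
    mod_cast four_mul_eOn_liouvilleGraph (m + 1)
  push_cast at heOn
  congr 1
  linarith

end LiouvilleGraph

section SmallCliques

open Finset

/-- The cliques with at most two vertices of the subgraph of `G` induced on `{1, …, m}`: the empty
set, the singletons and the edges. Their number is the base `e(G_m) + m + 1` in the product
defining `gProd G`. -/
noncomputable def smallCliques (G : SimpleGraph ℕ) (m : ℕ) : Finset (Finset ℕ) :=
  {c ∈ (Icc 1 m).powerset | #c ≤ 2 ∧ G.IsClique c}

variable {G : SimpleGraph ℕ} {m : ℕ} {c : Finset ℕ}

lemma mem_smallCliques : c ∈ smallCliques G m ↔ c ⊆ Icc 1 m ∧ #c ≤ 2 ∧ G.IsClique c := by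
  rw [smallCliques, mem_filter, mem_powerset]

lemma empty_mem_smallCliques (G : SimpleGraph ℕ) (m : ℕ) : ∅ ∈ smallCliques G m := by
  simp [mem_smallCliques]

lemma card_smallCliques_pos (G : SimpleGraph ℕ) (m : ℕ) : 0 < #(smallCliques G m) :=
  card_pos.2 ⟨∅, empty_mem_smallCliques G m⟩

lemma card_filter_smallCliques_eq_two (G : SimpleGraph ℕ) (m : ℕ) :
    #{c ∈ smallCliques G m | #c = 2} = eOn G m := by
  refine (card_bij (fun p _ => {p.1, p.2}) (fun p hp => ?_) (fun p hp q hq hpq => ?_)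
    fun c hc => ?_).symm
  · simp only [mem_filter, mem_product] at hp
    rw [mem_filter, mem_smallCliques, card_pair hp.2.1.ne, coe_pair, SimpleGraph.isClique_pair]
    exact ⟨⟨insert_subset hp.1.1 (singleton_subset_iff.2 hp.1.2), le_rfl, fun _ => hp.2.2⟩, rfl⟩
  · have hp12 := (mem_filter.1 hp).2.1
    have hq12 := (mem_filter.1 hq).2.1
    have hp1 : p.1 ∈ ({q.1, q.2} : Finset ℕ) := hpq ▸ mem_insert_self _ _
    have hp2 : p.2 ∈ ({q.1, q.2} : Finset ℕ) := hpq ▸ mem_insert_of_mem (mem_singleton_self _)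
    rw [mem_insert, mem_singleton] at hp1 hp2
    ext <;> omega
  · obtain ⟨hc, hcard⟩ := mem_filter.1 hc
    obtain ⟨a, b, hab, rfl⟩ := card_eq_two.1 hcard
    obtain ⟨hsub, -, hclique⟩ := mem_smallCliques.1 hc
    rw [insert_subset_iff, singleton_subset_iff] at hsub
    rw [coe_pair, SimpleGraph.isClique_pair] at hclique
    rcases hab.lt_or_gt with hlt | hlt
    · exact ⟨(a, b), mem_filter.2 ⟨mem_product.2 hsub, hlt, hclique hab⟩, rfl⟩
    · exact ⟨(b, a), mem_filter.2 ⟨mem_product.2 hsub.symm, hlt, (hclique hab).symm⟩,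
        pair_comm b a⟩

lemma filter_smallCliques_ne_two (G : SimpleGraph ℕ) (m : ℕ) :
    {c ∈ smallCliques G m | #c ≠ 2} = insert ∅ ((Icc 1 m).image singleton) := by
  ext c
  simp only [mem_filter, mem_smallCliques, mem_insert, mem_image]
  constructor
  · rintro ⟨⟨hsub, hcard, -⟩, hne⟩
    rcases Nat.le_one_iff_eq_zero_or_eq_one.1 (show #c ≤ 1 by omega) with h | h
    · exact .inl (card_eq_zero.1 h)
    · obtain ⟨a, rfl⟩ := card_eq_one.1 h
      exact .inr ⟨a, singleton_subset_iff.1 hsub, rfl⟩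
  · rintro (rfl | ⟨a, ha, rfl⟩)
    · simp
    · simpa using ha

lemma card_smallCliques (G : SimpleGraph ℕ) (m : ℕ) : #(smallCliques G m) = eOn G m + m + 1 := by
  rw [← card_filter_add_card_filter_not (s := smallCliques G m) (fun c => #c = 2),
    card_filter_smallCliques_eq_two, filter_smallCliques_ne_two, card_insert_of_notMem (by simp),
    card_image_of_injective _ singleton_injective, Nat.card_Icc]
  omega

lemma card_smallCliques_le (G : SimpleGraph ℕ) (m : ℕ) : #(smallCliques G m) ≤ (m + 1) ^ 2 := by
  have heOn : eOn G m ≤ m * m := (card_filter_le _ _).trans (by simp)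
  rw [card_smallCliques]
  nlinarith

end SmallCliques

section GraphProduct

open Finset

lemma rpow_three_halves {x : ℝ} (hx : 0 ≤ x) : x ^ (3 / 2 : ℝ) = x * √x := by
  rw [show (3 / 2 : ℝ) = 1 + 1 / 2 by norm_num, Real.rpow_add_of_nonneg hx one_pos.le (by norm_num),
    Real.rpow_one, Real.sqrt_eq_rpow]

lemma summable_one_div_rpow_three_halves : Summable fun m : ℕ => 1 / (m : ℝ) ^ (3 / 2 : ℝ) :=
  Real.summable_one_div_nat_rpow.2 (by norm_num)

lemma log_add_one_le_two_mul_sqrt {x : ℝ} (hx : 0 ≤ x) : Real.log (x + 1) ≤ 2 * √x := by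
  have hlog : Real.log √(x + 1) ≤ √(x + 1) - 1 :=
    Real.log_le_sub_one_of_pos (Real.sqrt_pos.2 (by linarith))
  have hsqrt : √(x + 1) ≤ √x + 1 :=
    Real.sqrt_le_iff.2 ⟨by positivity, by nlinarith [Real.sq_sqrt hx, Real.sqrt_nonneg x]⟩
  rw [Real.log_sqrt (by linarith)] at hlog
  linarith

/-- The logarithm of the `m`-th factor of `gProd G`; it is indexed from `m = 0`, where it
vanishes. -/
noncomputable def logFactor (G : SimpleGraph ℕ) (m : ℕ) : ℝ :=
  Real.log #(smallCliques G m) / ((m : ℝ) ^ 2 + m)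

variable (G : SimpleGraph ℕ)

lemma logFactor_nonneg (m : ℕ) : 0 ≤ logFactor G m :=
  div_nonneg (Real.log_natCast_nonneg _) (by positivity)

lemma logFactor_zero : logFactor G 0 = 0 := by
  simp [logFactor]

lemma logFactor_le (m : ℕ) : logFactor G m ≤ 4 * (1 / (m : ℝ) ^ (3 / 2 : ℝ)) := by
  rcases m.eq_zero_or_pos with rfl | hm
  · simp [logFactor]
  have hm0 : (0 : ℝ) < m := mod_cast hm
  have hlog : Real.log #(smallCliques G m) ≤ 4 * √m :=
    calc Real.log #(smallCliques G m) ≤ Real.log (((m : ℝ) + 1) ^ 2) :=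
          Real.log_le_log (mod_cast card_smallCliques_pos G m) (mod_cast card_smallCliques_le G m)
      _ = 2 * Real.log ((m : ℝ) + 1) := by rw [Real.log_pow, Nat.cast_two]
      _ ≤ 4 * √m := by linarith [log_add_one_le_two_mul_sqrt hm0.le]
  calc logFactor G m ≤ 4 * √m / ((m : ℝ) ^ 2) := by
        unfold logFactor
        gcongr
        linarith
    _ = 4 * (1 / (m : ℝ) ^ (3 / 2 : ℝ)) := by
        rw [rpow_three_halves hm0.le]
        field_simp
        rw [Real.sq_sqrt hm0.le]

lemma summable_logFactor : Summable (logFactor G) :=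
  (summable_one_div_rpow_three_halves.mul_left 4).of_nonneg_of_le (logFactor_nonneg G)
    (logFactor_le G)

lemma gProd_eq_exp_tsum_logFactor : gProd G = Real.exp (∑' m, logFactor G m) := by
  rw [(summable_logFactor G).tsum_eq_zero_add, logFactor_zero, zero_add,
    ← ((summable_nat_add_iff 1).2 (summable_logFactor G)).hasSum.rexp.tprod_eq]
  refine tprod_congr fun m => ?_
  rw [Real.rpow_def_of_pos (by positivity), mul_one_div]
  simp only [Function.comp_apply, logFactor, card_smallCliques]
  push_cast
  rfl

lemma bddAbove_gProd (k : ℕ) : BddAbove {x | ∃ G, KProductFree k G ∧ x = gProd G} := by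
  refine ⟨Real.exp (∑' m : ℕ, 4 * (1 / (m : ℝ) ^ (3 / 2 : ℝ))), ?_⟩
  rintro x ⟨G, -, rfl⟩
  rw [gProd_eq_exp_tsum_logFactor]
  exact Real.exp_le_exp.2 ((summable_logFactor G).tsum_le_tsum (logFactor_le G)
    (summable_one_div_rpow_three_halves.mul_left 4))

variable {G} {k k' : ℕ}

lemma KProductFree.gProd_le_betaK (hG : KProductFree k G) : gProd G ≤ betaK k :=
  le_csSup (bddAbove_gProd k) ⟨G, hG, rfl⟩

lemma exists_lt_gProd_of_lt_betaK {x : ℝ} (hx : x < betaK k) :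
    ∃ G, KProductFree k G ∧ x < gProd G := by
  obtain ⟨_, ⟨G, hG, rfl⟩, hlt⟩ := exists_lt_of_lt_csSup
    (⟨_, ⊥, kProductFree_bot k, rfl⟩ : {x | ∃ G, KProductFree k G ∧ x = gProd G}.Nonempty) hx
  exact ⟨G, hG, hlt⟩

lemma betaK_pos (k : ℕ) : 0 < betaK k :=
  lt_of_lt_of_le (gProd_eq_exp_tsum_logFactor ⊥ ▸ Real.exp_pos _)
    (kProductFree_bot k).gProd_le_betaK

lemma KProductFree.tsum_logFactor_le (hG : KProductFree k G) :
    ∑' m, logFactor G m ≤ Real.log (betaK k) := by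
  rw [Real.le_log_iff_exp_le (betaK_pos k), ← gProd_eq_exp_tsum_logFactor]
  exact hG.gProd_le_betaK

theorem betaK_le_of_odd (hk : Odd k) (hk' : Odd k') (hle : k ≤ k') : betaK k' ≤ betaK k := by
  refine csSup_le ⟨_, ⊥, kProductFree_bot k', rfl⟩ ?_
  rintro x ⟨G, hG, rfl⟩
  exact (hG.mono_of_odd hk hk' hle).gProd_le_betaK

theorem betaMinus_le_betaK (hk : Odd k) : betaMinus ≤ betaK k :=
  gProd_liouvilleGraph ▸ (kProductFree_liouvilleGraph hk).gProd_le_betaK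

end GraphProduct

section LargePrimes

open Finset

/-- The primes `p ≤ n` with `⌊n / p⌋ < M`. Once `M² ≤ n` they exceed `M`, hence they do not divide
the cofactor `a < M` of a multiple `p * a ≤ n`. -/
def largePrimes (n M : ℕ) : Finset ℕ := {p ∈ n.primesLE | n / p < M}

/-- The number of primes `p ≤ n` with `⌊n / p⌋ = m`. -/
def primesWithQuotient (n m : ℕ) : ℕ := #{p ∈ n.primesLE | n / p = m}

variable {n M m p q a b : ℕ}

lemma mem_largePrimes : p ∈ largePrimes n M ↔ (p ≤ n ∧ p.Prime) ∧ n / p < M := by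
  rw [largePrimes, mem_filter, Nat.mem_primesLE]

lemma prime_of_mem_largePrimes (hp : p ∈ largePrimes n M) : p.Prime :=
  (mem_largePrimes.1 hp).1.2

lemma div_lt_of_mem_largePrimes (hp : p ∈ largePrimes n M) : n / p < M :=
  (mem_largePrimes.1 hp).2

lemma lt_of_mem_largePrimes (hn : M ^ 2 ≤ n) (hp : p ∈ largePrimes n M) : M < p := by
  have hlt := div_lt_of_mem_largePrimes hp
  rw [Nat.div_lt_iff_lt_mul (prime_of_mem_largePrimes hp).pos] at hlt
  nlinarith

lemma not_dvd_of_mem_largePrimes (hn : M ^ 2 ≤ n) (hp : p ∈ largePrimes n M) (ha : 0 < a)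
    (haM : a < M) : ¬p ∣ a := fun h =>
  (Nat.le_of_dvd ha h).not_gt (haM.trans (lt_of_mem_largePrimes hn hp))

lemma eq_and_eq_of_prime_mul_eq_prime_mul (hp : p.Prime) (hq : q.Prime) (hpb : ¬p ∣ b)
    (h : p * a = q * b) : p = q ∧ a = b := by
  obtain rfl : p = q :=
    (Nat.prime_dvd_prime_iff_eq hp hq).1 ((hp.dvd_mul.1 ⟨a, h.symm⟩).resolve_right hpb)
  exact ⟨rfl, Nat.eq_of_mul_eq_mul_left hp.pos h⟩

lemma eq_and_eq_of_largePrimes_mul_eq (hn : M ^ 2 ≤ n) (hp : p ∈ largePrimes n M)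
    (hq : q ∈ largePrimes n M) (hb : 0 < b) (hbM : b < M) (h : p * a = q * b) : p = q ∧ a = b :=
  eq_and_eq_of_prime_mul_eq_prime_mul (prime_of_mem_largePrimes hp) (prime_of_mem_largePrimes hq)
    (not_dvd_of_mem_largePrimes hn hp hb hbM) h

lemma primesWithQuotient_add_primeCounting (hm : m ≠ 0) :
    primesWithQuotient n m + (n / (m + 1)).primeCounting = (n / m).primeCounting := by
  have hle_div : ∀ {d p : ℕ}, 0 < d → 0 < p → (p ≤ n / d ↔ d ≤ n / p) := fun hd hp => by
    rw [Nat.le_div_iff_mul_le hd, Nat.le_div_iff_mul_le hp, mul_comm]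
  rw [← Nat.primesLE_card_eq_primeCounting, ← Nat.primesLE_card_eq_primeCounting,
    primesWithQuotient, ← card_union_of_disjoint]
  · congr 1
    ext p
    simp only [mem_union, mem_filter, Nat.mem_primesLE]
    by_cases hp : p.Prime
    · have hm' := hle_div (Nat.pos_of_ne_zero hm) hp.pos
      have hm1 := hle_div m.add_one_pos hp.pos
      have hpn : m ≤ n / p → p ≤ n := fun h =>
        (hm'.2 h).trans (Nat.div_le_self n m)
      simp only [hp, and_true]
      omega
    · simp [hp]
  · refine disjoint_left.2 fun p hp hp' => ?_
    have hle := (hle_div m.succ_pos (Nat.prime_of_mem_primesLE hp').pos).1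
      (Nat.mem_primesLE.1 hp').1
    have heq := (mem_filter.1 hp).2
    omega

lemma prod_largePrimes {R : Type*} [CommMonoid R] (n M : ℕ) (f : ℕ → R) :
    ∏ p ∈ largePrimes n M, f (n / p) = ∏ m ∈ range M, f m ^ primesWithQuotient n m := by
  rw [← prod_fiberwise_of_maps_to (s := largePrimes n M) (t := range M) (g := fun p => n / p)
    fun p hp => mem_range.2 (div_lt_of_mem_largePrimes hp)]
  refine prod_congr rfl fun m hm => ?_
  have hfilter : {p ∈ largePrimes n M | n / p = m} = {p ∈ n.primesLE | n / p = m} := by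
    rw [largePrimes, filter_filter]
    exact filter_congr fun p _ => and_iff_right_of_imp fun h => h ▸ mem_range.1 hm
  rw [prod_congr rfl fun p hp => by rw [(mem_filter.1 hp).2], prod_const, hfilter,
    primesWithQuotient]

end LargePrimes

section Assembly

open Finset

lemma exists_perm_of_card_fiber_eq {ι κ : Type*} [Fintype ι] [DecidableEq κ] {p q : ι → κ}
    (h : ∀ r, #{i | p i = r} = #{i | q i = r}) : ∃ σ : Equiv.Perm ι, ∀ i, q (σ i) = p i := by
  have hequiv : ∀ r, Nonempty ({i // p i = r} ≃ {i // q i = r}) := fun r => by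
    rw [← Fintype.card_eq, Fintype.card_subtype, Fintype.card_subtype, h]
  exact ⟨(Equiv.sigmaFiberEquiv p).symm.trans
    ((Equiv.sigmaCongrRight fun r => (hequiv r).some).trans (Equiv.sigmaFiberEquiv q)),
    fun i => ((hequiv (p i)).some ⟨i, rfl⟩).2⟩

lemma factorization_prod_prime_mul {ι : Type*} [Fintype ι] {p a : ι → ℕ} {r : ℕ}
    (hp : ∀ i, (p i).Prime) (ha : ∀ i, ¬r ∣ a i) :
    (∏ i, p i * a i).factorization r = #{i | p i = r} := by
  have ha0 : ∀ i, a i ≠ 0 := fun i h => ha i (h ▸ dvd_zero r)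
  rw [Nat.factorization_prod_apply fun i _ => mul_ne_zero (hp i).ne_zero (ha0 i), card_filter]
  refine sum_congr rfl fun i _ => ?_
  rw [Nat.factorization_mul (hp i).ne_zero (ha0 i), Finsupp.add_apply,
    Nat.factorization_eq_zero_of_not_dvd (ha i), add_zero, (hp i).factorization,
    Finsupp.single_apply]

lemma exists_perm_of_prod_prime_mul_eq {ι : Type*} [Fintype ι] {P : Set ℕ} {p q a b : ι → ℕ}
    (hP : ∀ r ∈ P, r.Prime) (hp : ∀ i, p i ∈ P) (hq : ∀ i, q i ∈ P)
    (ha : ∀ r ∈ P, ∀ i, ¬r ∣ a i) (hb : ∀ r ∈ P, ∀ i, ¬r ∣ b i)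
    (h : ∏ i, p i * a i = ∏ i, q i * b i) :
    (∃ σ : Equiv.Perm ι, ∀ i, q (σ i) = p i) ∧ ∏ i, a i = ∏ i, b i := by
  obtain ⟨σ, hσ⟩ : ∃ σ : Equiv.Perm ι, ∀ i, q (σ i) = p i := by
    refine exists_perm_of_card_fiber_eq fun r => ?_
    by_cases hr : r ∈ P
    · rw [← factorization_prod_prime_mul (fun i => hP _ (hp i)) (ha r hr), h,
        factorization_prod_prime_mul (fun i => hP _ (hq i)) (hb r hr)]
    · rw [filter_false_of_mem fun i _ (hi : p i = r) => hr (hi ▸ hp i),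
        filter_false_of_mem fun i _ (hi : q i = r) => hr (hi ▸ hq i)]
  refine ⟨⟨σ, hσ⟩, ?_⟩
  rw [prod_mul_distrib, prod_mul_distrib, ← Equiv.prod_comp σ q,
    prod_congr rfl fun i _ => hσ i] at h
  exact Nat.eq_of_mul_eq_mul_left (prod_pos fun i _ => (hP _ (hp i)).pos) h

/-- The union of the dilates `p • c p` over `p ∈ P`, i.e. the set built by choosing, for each prime
`p ∈ P`, the set `c p` of cofactors of its multiples of `p`. -/
def assemble {P : Finset ℕ} (c : P → Finset ℕ) : Finset ℕ :=
  univ.biUnion fun p => (c p).image fun a => p * a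

variable {P : Finset ℕ} {c c' : P → Finset ℕ} {x k n M : ℕ} {G : SimpleGraph ℕ}

lemma mem_assemble : x ∈ assemble c ↔ ∃ p : P, ∃ a ∈ c p, p * a = x := by
  simp [assemble]

lemma subset_of_assemble_subset (hP : ∀ p ∈ P, p.Prime)
    (hc' : ∀ p q : P, ∀ a ∈ c' p, ¬(q : ℕ) ∣ a) (h : assemble c ⊆ assemble c') (p : P) :
    c p ⊆ c' p := by
  intro a ha
  obtain ⟨q, b, hb, hab⟩ := mem_assemble.1 (h (mem_assemble.2 ⟨p, a, ha, rfl⟩))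
  obtain ⟨hpq, rfl⟩ :=
    eq_and_eq_of_prime_mul_eq_prime_mul (hP p p.2) (hP q q.2) (hc' q p b hb) hab.symm
  exact Subtype.ext hpq ▸ hb

lemma assemble_injOn (hP : ∀ p ∈ P, p.Prime) :
    Set.InjOn assemble {c : P → Finset ℕ | ∀ p q : P, ∀ a ∈ c p, ¬(q : ℕ) ∣ a} :=
  fun _ hc _ hc' h => funext fun p =>
    (subset_of_assemble_subset hP hc' h.subset p).antisymm
      (subset_of_assemble_subset hP hc h.superset p)

lemma KProductFree.mulKSidon_assemble (hk : k ≠ 0) (hG : KProductFree k G)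
    (hP : ∀ p ∈ P, p.Prime) (hclique : ∀ p, G.IsClique (c p))
    (hc : ∀ p q : P, ∀ a ∈ c p, ¬(q : ℕ) ∣ a) : MulKSidon k (assemble c) := by
  rintro ⟨x, y, hx, hy, hinj, hprod⟩
  choose p a ha hpa using fun i => mem_assemble.1 (hx i)
  choose q b hb hqb using fun i => mem_assemble.1 (hy i)
  obtain ⟨⟨σ, hσ⟩, hab⟩ := exists_perm_of_prod_prime_mul_eq (P := P) (p := fun i => p i)
    (q := fun i => q i) (a := a) (b := b) hP (fun i => (p i).2) (fun i => (q i).2)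
    (fun r hr i => hc (p i) ⟨r, hr⟩ _ (ha i)) (fun r hr i => hc (q i) ⟨r, hr⟩ _ (hb i))
    (by simpa only [hpa, hqb] using hprod)
  refine ((kProductFree_iff hk).1 hG).2 a (b ∘ σ) (fun i => ?_) ?_
  · have hbσ : b (σ i) ∈ c (p i) := Subtype.ext (hσ i) ▸ hb (σ i)
    refine hclique (p i) (ha i) hbσ fun heq => ?_
    have hxy : Sum.elim x y (.inl i) = Sum.elim x y (.inr (σ i)) := by
      rw [Sum.elim_inl, Sum.elim_inr, ← hpa, ← hqb, hσ, heq, Function.comp_apply]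
    exact Sum.inl_ne_inr (hinj hxy)
  · exact hab.trans (Equiv.prod_comp σ b).symm

lemma assemble_subset_Icc (hP : ∀ p ∈ P, p.Prime) (hc : ∀ p : P, c p ⊆ Icc 1 (n / p)) :
    assemble c ⊆ Icc 1 n := by
  intro x hx
  obtain ⟨p, a, ha, rfl⟩ := mem_assemble.1 hx
  obtain ⟨ha1, han⟩ := mem_Icc.1 (hc p ha)
  exact mem_Icc.2 ⟨Nat.mul_pos (hP p p.2).pos ha1,
    (Nat.mul_le_mul_left _ han).trans (Nat.mul_div_le _ _)⟩

theorem KProductFree.prod_card_smallCliques_le_Sk (hk : k ≠ 0) (hG : KProductFree k G)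
    (hn : M ^ 2 ≤ n) : ∏ p ∈ largePrimes n M, #(smallCliques G (n / p)) ≤ Sk k n := by
  have hprime : ∀ p ∈ largePrimes n M, p.Prime := fun p => prime_of_mem_largePrimes
  have hsmall : ∀ c ∈ Fintype.piFinset fun p : largePrimes n M => smallCliques G (n / p),
      ∀ p : largePrimes n M, c p ⊆ Icc 1 (n / p) ∧ #(c p) ≤ 2 ∧ G.IsClique (c p) :=
    fun c hc p => mem_smallCliques.1 (Fintype.mem_piFinset.1 hc p)
  have hdvd : ∀ c ∈ Fintype.piFinset fun p : largePrimes n M => smallCliques G (n / p),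
      ∀ p q : largePrimes n M, ∀ a ∈ c p, ¬(q : ℕ) ∣ a := fun c hc p q a ha => by
    obtain ⟨ha1, han⟩ := mem_Icc.1 ((hsmall c hc p).1 ha)
    exact not_dvd_of_mem_largePrimes hn q.2 ha1 (han.trans_lt (div_lt_of_mem_largePrimes p.2))
  rw [← prod_coe_sort, ← Fintype.card_piFinset, Sk]
  refine card_le_card_of_injOn assemble (fun c hc => ?_) fun c hc c' hc' h =>
    assemble_injOn hprime (hdvd c hc) (hdvd c' hc') h
  exact mem_coe.2 (mem_filter.2
    ⟨mem_powerset.2 (assemble_subset_Icc hprime fun p => (hsmall c hc p).1),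
    hG.mulKSidon_assemble hk hprime (fun p => (hsmall c hc p).2.2) (hdvd c hc)⟩)

end Assembly

section CompleteBipartite

open Finset

variable {α β : Type*} {r : α → β → Prop} [DecidableRel r] {W : Finset α} {B : Finset β} {k : ℕ}

lemma exists_embedding_of_le_card {S : Finset α} (h : k ≤ #S) : ∃ u : Fin k ↪ α, ∀ i, u i ∈ S := by
  obtain ⟨u⟩ : Nonempty (Fin k ↪ S) := Function.Embedding.nonempty_of_card_le (by simpa using h)
  exact ⟨u.trans (Function.Embedding.subtype _), fun i => (u i).2⟩

lemma exists_completeBipartite_of_lt_card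
    (h : (k - 1) * #B ^ k < #{w ∈ W | k ≤ #{b ∈ B | r w b}}) :
    ∃ (u : Fin k ↪ α) (v : Fin k ↪ β), ∀ i j, r (u i) (v j) := by
  have hnbhd : ∀ w ∈ ({w ∈ W | k ≤ #{b ∈ B | r w b}} : Finset α),
      ∃ S ⊆ {b ∈ B | r w b}, #S = k := fun w hw => exists_subset_card_eq (mem_filter.1 hw).2
  choose! S hS hcard using hnbhd
  have hmaps : ∀ w ∈ ({w ∈ W | k ≤ #{b ∈ B | r w b}} : Finset α), S w ∈ B.powersetCard k :=
    fun w hw => mem_powersetCard.2 ⟨(hS w hw).trans (filter_subset _ _), hcard w hw⟩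
  have hlt : #(B.powersetCard k) * (k - 1) < #{w ∈ W | k ≤ #{b ∈ B | r w b}} := by
    rw [card_powersetCard, mul_comm]
    exact (Nat.mul_le_mul_left _ (Nat.choose_le_pow _ _)).trans_lt h
  obtain ⟨S₀, hS₀, hfiber⟩ := exists_lt_card_fiber_of_mul_lt_card_of_maps_to hmaps hlt
  obtain ⟨u, hu⟩ := exists_embedding_of_le_card (Nat.le_of_pred_lt hfiber)
  obtain ⟨v, hv⟩ := exists_embedding_of_le_card (mem_powersetCard.1 hS₀).2.ge
  refine ⟨u, v, fun i j => ?_⟩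
  obtain ⟨hui, rfl⟩ := mem_filter.1 (hu i)
  exact (mem_filter.1 (hS _ hui (hv j))).2

lemma card_le_of_not_exists_completeBipartite
    (h : ¬∃ (u : Fin k ↪ α) (v : Fin k ↪ β), ∀ i j, r (u i) (v j)) :
    #{t ∈ W ×ˢ B | r t.1 t.2} ≤ (k - 1) * #W + (k - 1) * #B ^ (k + 1) := by
  have hdegree : ∀ w ∈ W, #{b ∈ B | r w b} ≤ k - 1 + if k ≤ #{b ∈ B | r w b} then #B else 0 := by
    intro w _
    split_ifs with hw
    · exact (card_filter_le _ _).trans (Nat.le_add_left _ _)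
    · omega
  calc #{t ∈ W ×ˢ B | r t.1 t.2} = ∑ w ∈ W, #{b ∈ B | r w b} := by
        simp only [card_filter, sum_product]
    _ ≤ ∑ w ∈ W, (k - 1 + if k ≤ #{b ∈ B | r w b} then #B else 0) := sum_le_sum hdegree
    _ = (k - 1) * #W + #{w ∈ W | k ≤ #{b ∈ B | r w b}} * #B := by
        rw [sum_add_distrib, sum_const, ← sum_filter, sum_const, smul_eq_mul, smul_eq_mul,
          mul_comm #W]
    _ ≤ (k - 1) * #W + (k - 1) * #B ^ k * #B := by
        gcongr
        exact not_lt.1 fun hlt => h (exists_completeBipartite_of_lt_card hlt)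
    _ = (k - 1) * #W + (k - 1) * #B ^ (k + 1) := by rw [pow_succ, mul_assoc]

lemma card_filter_card_le_le (S : Finset α) (E : ℕ) :
    #{X ∈ S.powerset | #X ≤ E} ≤ (#S + 1) ^ E := by
  induction E with
  | zero =>
    have hempty : {X ∈ S.powerset | #X ≤ 0} ⊆ {∅} := fun X hX =>
      mem_singleton.2 (card_eq_zero.1 (Nat.le_zero.1 (mem_filter.1 hX).2))
    simpa using card_le_card hempty
  | succ E ih =>
    set F : Finset (Finset α) := {X ∈ S.powerset | #X ≤ E}
    have hsub : {X ∈ S.powerset | #X ≤ E + 1} ⊆ S.biUnion (fun x => F.image (insert x)) ∪ F := by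
      intro X hX
      obtain ⟨hXS, hXE⟩ := mem_filter.1 hX
      rcases hXE.lt_or_eq with hlt | heq
      · exact mem_union_right _ (mem_filter.2 ⟨hXS, Nat.lt_succ_iff.1 hlt⟩)
      · obtain ⟨x, hx⟩ := card_pos.1 (heq.symm ▸ E.add_one_pos)
        refine mem_union_left _ (mem_biUnion.2 ⟨x, mem_powerset.1 hXS hx, mem_image.2
          ⟨X.erase x, mem_filter.2 ⟨?_, ?_⟩, insert_erase hx⟩⟩)
        · exact mem_powerset.2 ((erase_subset _ _).trans (mem_powerset.1 hXS))
        · rw [card_erase_of_mem hx, heq, Nat.add_sub_cancel]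
    calc #{X ∈ S.powerset | #X ≤ E + 1} ≤ #S * #F + #F :=
          (card_le_card hsub).trans ((card_union_le _ _).trans (Nat.add_le_add_right
            (card_biUnion_le_card_mul _ _ _ fun x _ => card_image_le) _))
      _ = #F * (#S + 1) := by ring
      _ ≤ (#S + 1) ^ (E + 1) := Nat.mul_le_mul_right _ ih

end CompleteBipartite

section SmoothPart

open Finset

variable {A X : Finset ℕ} {k n s y x : ℕ}

/-- The cyclic rotation turns a complete bipartite configuration into the forbidden identity
`∏ uᵢ vᵢ = ∏ uᵢ vᵢ₊₁`. -/
lemma MulKSidon.not_exists_completeBipartite (hk : 2 ≤ k) (hA : MulKSidon k A)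
    {T : Finset (ℕ × ℕ)} (hT : ∀ t ∈ T, t.1 * t.2 ∈ A)
    (hinj : Set.InjOn (fun t : ℕ × ℕ => t.1 * t.2) T) :
    ¬∃ u v : Fin k ↪ ℕ, ∀ i j, (u i, v j) ∈ T := by
  rintro ⟨u, v, huv⟩
  have heq : ∀ {i i' j j'}, u i * v j = u i' * v j' → i = i' ∧ j = j' := fun h => by
    have hpair := Prod.mk.inj (hinj (huv _ _) (huv _ _) h)
    exact ⟨u.injective hpair.1, v.injective hpair.2⟩
  obtain ⟨l, rfl⟩ : ∃ l, k = l + 2 := ⟨k - 2, by omega⟩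
  have hrot : ∀ i : Fin (l + 2), finRotate _ i ≠ i := fun i => by simp [finRotate_apply]
  refine hA ⟨fun i => u i * v i, fun i => u i * v (finRotate _ i), fun i => hT _ (huv _ _),
    fun i => hT _ (huv _ _), Function.Injective.sumElim ?_ ?_ ?_, ?_⟩
  · exact fun i i' h => (heq h).1
  · exact fun i i' h => (heq h).1
  · intro i i' h
    obtain ⟨rfl, hi⟩ := heq h
    exact hrot i hi.symm
  · rw [prod_mul_distrib, prod_mul_distrib, Equiv.prod_comp (finRotate (l + 2)) v]

lemma MulKSidon.card_le_of_dvd_of_mem_Ico (hk : 2 ≤ k) (hA : MulKSidon k A) (hX : X ⊆ A)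
    (hXn : X ⊆ Icc 1 n) {u : ℕ → ℕ} {l : ℕ} (hl : 0 < l) (hu : ∀ x ∈ X, u x ∣ x)
    (hul : ∀ x ∈ X, u x ∈ Ico l (l + s)) :
    #X ≤ (k - 1) * (n / l) + (k - 1) * s ^ (k + 1) := by
  have hmul : ∀ x ∈ X, x / u x * u x = x := fun x hx => Nat.div_mul_cancel (hu x hx)
  set T := X.image fun x => (x / u x, u x)
  have hmulT : ∀ t ∈ T, ∃ x ∈ X, (x / u x, u x) = t ∧ t.1 * t.2 = x := fun t ht => by
    obtain ⟨x, hx, rfl⟩ := mem_image.1 ht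
    exact ⟨x, hx, rfl, hmul x hx⟩
  have hcardT : #T = #X := card_image_of_injOn fun x hx x' hx' h => by
    rw [← hmul x hx, ← hmul x' hx', (Prod.mk.inj h).1, (Prod.mk.inj h).2]
  have hsub : T ⊆ {t ∈ Icc 1 (n / l) ×ˢ Ico l (l + s) | (t.1, t.2) ∈ T} := by
    intro t ht
    obtain ⟨x, hx, rfl, -⟩ := hmulT t ht
    obtain ⟨hx1, hxn⟩ := mem_Icc.1 (hXn hx)
    refine mem_filter.2 ⟨mem_product.2 ⟨mem_Icc.2 ⟨?_, ?_⟩, hul x hx⟩, ht⟩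
    · exact Nat.div_pos (Nat.le_of_dvd hx1 (hu x hx)) (Nat.pos_of_dvd_of_pos (hu x hx) hx1)
    · exact (Nat.div_le_div_right hxn).trans (Nat.div_le_div_left (mem_Ico.1 (hul x hx)).1 hl)
  have hno := hA.not_exists_completeBipartite hk (T := T)
    (fun t ht => by obtain ⟨x, hx, -, h⟩ := hmulT t ht; exact h ▸ hX hx)
    (fun t ht t' ht' h => by
      obtain ⟨x, -, rfl, hx⟩ := hmulT t ht
      obtain ⟨x', -, rfl, hx'⟩ := hmulT t' ht'
      rw [show x = x' from hx.symm.trans (h.trans hx')])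
  have hcard := card_le_of_not_exists_completeBipartite (r := fun a b => (a, b) ∈ T)
    (W := Icc 1 (n / l)) (B := Ico l (l + s)) hno
  simp only [Nat.card_Icc, Nat.card_Ico, Nat.add_sub_cancel, Nat.add_sub_cancel_left] at hcard
  exact hcardT ▸ (card_le_card hsub).trans hcard

/-- The elements of `A` all of whose prime factors are at most `n / y`. -/
noncomputable def smoothPart (A : Finset ℕ) (n y : ℕ) : Finset ℕ :=
  {x ∈ A | ∀ p, p.Prime → p ∣ x → p * y ≤ n}

/-- The greatest divisor of `x` that is at most `n / y`. -/
def greatestDivisor (n y x : ℕ) : ℕ := Nat.findGreatest (fun u => u ∣ x ∧ u * y ≤ n) x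

lemma greatestDivisor_spec (hx : 0 < x) (hy : y ≤ n) :
    greatestDivisor n y x ∣ x ∧ greatestDivisor n y x * y ≤ n :=
  Nat.findGreatest_spec (P := fun u => u ∣ x ∧ u * y ≤ n) (m := 1) hx
    ⟨one_dvd _, by rwa [one_mul]⟩

lemma le_greatestDivisor (hx : 0 < x) {u : ℕ} (hu : u ∣ x) (huy : u * y ≤ n) :
    u ≤ greatestDivisor n y x :=
  Nat.le_findGreatest (Nat.le_of_dvd hx hu) ⟨hu, huy⟩

lemma lt_sq_greatestDivisor_mul (hx : 0 < x) (hy : y ≤ n) (hxy : n < x * y)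
    (hsmooth : ∀ p, p.Prime → p ∣ x → p * y ≤ n) : n < greatestDivisor n y x ^ 2 * y := by
  obtain ⟨hdvd, hle⟩ := greatestDivisor_spec hx hy
  have hmax {v : ℕ} := le_greatestDivisor (n := n) (y := y) hx (u := v)
  set u := greatestDivisor n y x
  have hne : x / u ≠ 1 := fun h => by
    have hux : u = x := by simpa [h] using Nat.div_mul_cancel hdvd
    rw [hux] at hle
    omega
  obtain ⟨q, hq, hqdvd⟩ := Nat.exists_prime_and_dvd hne
  have huq : u * q ∣ x := Nat.mul_dvd_of_dvd_div hdvd hqdvd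
  have hqx : q ∣ x := (dvd_mul_left q u).trans huq
  have hlt : n < u * q * y := by
    by_contra! h
    have hupos : 0 < u := Nat.pos_of_dvd_of_pos hdvd hx
    nlinarith [hmax huq h, hq.two_le]
  calc n < u * q * y := hlt
    _ ≤ u ^ 2 * y := by
        rw [sq]
        gcongr
        exact hmax hqx (hsmooth q hq hqx)

lemma greatestDivisor_div_mem_Icc (hs : 0 < s) (hy : 0 < y) (hn : s ^ 2 * y ≤ n) (hx : 0 < x)
    (hxy : n < x * y) (hsmooth : ∀ p, p.Prime → p ∣ x → p * y ≤ n) :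
    greatestDivisor n y x / s ∈ Icc 1 (n / (s * y)) := by
  have hyn : y ≤ n := (Nat.le_mul_of_pos_left _ (by positivity)).trans hn
  refine mem_Icc.2 ⟨Nat.div_pos ?_ hs, ?_⟩
  · by_contra! hlt
    refine (lt_sq_greatestDivisor_mul hx hyn hxy hsmooth).not_ge (hn.trans' ?_)
    gcongr
  · rw [mul_comm, ← Nat.div_div_eq_div_mul]
    exact Nat.div_le_div_right ((Nat.le_div_iff_mul_le hy).2 (greatestDivisor_spec hx hyn).2)

/-- Group the elements by the interval `[js, js + s)` that contains their greatest divisor: the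
factorisations in each group form a bipartite graph with only `s` vertices on one side. -/
lemma MulKSidon.card_smoothPart_le (hk : 2 ≤ k) (hA : MulKSidon k A) (hAn : A ⊆ Icc 1 n)
    (hs : 0 < s) (hy : 0 < y) (hn : s ^ 2 * y ≤ n) :
    #(smoothPart A n y) ≤ n / y +
      ∑ j ∈ Icc 1 (n / (s * y)), ((k - 1) * (n / (j * s)) + (k - 1) * s ^ (k + 1)) := by
  have hyn : y ≤ n := (Nat.le_mul_of_pos_left _ (by positivity)).trans hn
  rw [← card_filter_add_card_filter_not (s := smoothPart A n y) (fun x => x * y ≤ n)]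
  refine add_le_add ?_ ?_
  · have hsub : {x ∈ smoothPart A n y | x * y ≤ n} ⊆ Icc 1 (n / y) := fun x hx => by
      obtain ⟨hx, hxy⟩ := mem_filter.1 hx
      exact mem_Icc.2 ⟨(mem_Icc.1 (hAn (mem_filter.1 hx).1)).1, (Nat.le_div_iff_mul_le hy).2 hxy⟩
    simpa using card_le_card hsub
  · set X := {x ∈ smoothPart A n y | ¬x * y ≤ n}
    have hX : ∀ x ∈ X, (x ∈ A ∧ ∀ p, p.Prime → p ∣ x → p * y ≤ n) ∧ n < x * y := fun x hx => by
      obtain ⟨hx, hxy⟩ := mem_filter.1 hx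
      exact ⟨mem_filter.1 hx, not_le.1 hxy⟩
    have hXn : X ⊆ Icc 1 n := fun x hx => hAn (hX x hx).1.1
    have hXpos : ∀ x ∈ X, 0 < x := fun x hx => (mem_Icc.1 (hXn hx)).1
    rw [card_eq_sum_card_fiberwise (f := fun x => greatestDivisor n y x / s)
      (t := Icc 1 (n / (s * y))) fun x hx =>
        greatestDivisor_div_mem_Icc hs hy hn (hXpos x hx) (hX x hx).2 (hX x hx).1.2]
    refine sum_le_sum fun j hj => hA.card_le_of_dvd_of_mem_Ico (u := greatestDivisor n y) hk
      (fun x hx => (hX x (mem_filter.1 hx).1).1.1) (fun x hx => hXn (mem_filter.1 hx).1)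
      (Nat.mul_pos (mem_Icc.1 hj).1 hs)
      (fun x hx => (greatestDivisor_spec (hXpos x (mem_filter.1 hx).1) hyn).1) fun x hx => ?_
    have hj := (Nat.div_eq_iff hs).1 (mem_filter.1 hx).2
    exact mem_Ico.2 ⟨hj.1, by omega⟩

end SmoothPart

section PopularGraph

open Finset

variable {A : Finset ℕ} {G : SimpleGraph ℕ} {c : Finset ℕ} {k n m M y p a b : ℕ}

/-- The positive integers `a` with `p * a ∈ A ∩ {1, …, n}`. -/
def cofactors (A : Finset ℕ) (n p : ℕ) : Finset ℕ := {a ∈ Icc 1 (n / p) | p * a ∈ A}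

lemma cofactors_subset (A : Finset ℕ) (n p : ℕ) : cofactors A n p ⊆ Icc 1 (n / p) :=
  filter_subset _ _

lemma mul_mem_of_mem_cofactors (ha : a ∈ cofactors A n p) : p * a ∈ A :=
  (mem_filter.1 ha).2

lemma mem_cofactors_iff (hAn : A ⊆ Icc 1 n) (hp : 0 < p) : a ∈ cofactors A n p ↔ p * a ∈ A := by
  refine ⟨mul_mem_of_mem_cofactors, fun h => mem_filter.2 ⟨mem_Icc.2 ?_, h⟩⟩
  obtain ⟨hpos, hle⟩ := mem_Icc.1 (hAn h)
  exact ⟨Nat.pos_of_mul_pos_left hpos, (Nat.le_div_iff_mul_le hp).2 (mul_comm p a ▸ hle)⟩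

lemma pos_and_lt_of_mem_cofactors (hp : p ∈ largePrimes n M) (ha : a ∈ cofactors A n p) :
    0 < a ∧ a < M := by
  obtain ⟨hpos, hle⟩ := mem_Icc.1 (cofactors_subset A n p ha)
  exact ⟨hpos, hle.trans_lt (div_lt_of_mem_largePrimes hp)⟩

/-- The graph of the pairs `{a, b}` such that `p * a` and `p * b` both lie in `A` for at least `k`
primes `p ∈ largePrimes n M`. -/
def popularGraph (k : ℕ) (A : Finset ℕ) (n M : ℕ) : SimpleGraph ℕ where
  Adj a b := a ≠ b ∧ k ≤ #{p ∈ largePrimes n M | a ∈ cofactors A n p ∧ b ∈ cofactors A n p}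
  symm := ⟨fun a b h => ⟨h.1.symm, by simpa only [and_comm] using h.2⟩⟩
  loopless := ⟨fun _ h => h.1 rfl⟩

lemma pos_and_lt_of_popularGraph_adj (hk : k ≠ 0) (h : (popularGraph k A n M).Adj a b) :
    0 < a ∧ a < M := by
  obtain ⟨p, hp⟩ := card_pos.1 ((Nat.pos_of_ne_zero hk).trans_le h.2)
  obtain ⟨hp, ha, -⟩ := mem_filter.1 hp
  exact pos_and_lt_of_mem_cofactors hp ha

/-- `k` edges can be matched with distinct large primes by Hall's theorem, since every edge occurs
at `k` or more of them. -/
lemma exists_injective_of_popularGraph_adj {a b : Fin k → ℕ}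
    (hab : ∀ i, (popularGraph k A n M).Adj (a i) (b i)) :
    ∃ p : Fin k → ℕ, Function.Injective p ∧ ∀ i, p i ∈ largePrimes n M ∧
      a i ∈ cofactors A n (p i) ∧ b i ∈ cofactors A n (p i) := by
  set S : Fin k → Finset ℕ := fun i =>
    {p ∈ largePrimes n M | a i ∈ cofactors A n p ∧ b i ∈ cofactors A n p}
  have hall : ∀ s : Finset (Fin k), #s ≤ #(s.biUnion S) := by
    intro s
    rcases s.eq_empty_or_nonempty with rfl | ⟨i, hi⟩
    · simp
    · calc #s ≤ k := card_finset_fin_le s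
        _ ≤ #(S i) := (hab i).2
        _ ≤ #(s.biUnion S) := card_le_card (subset_biUnion_of_mem S hi)
  obtain ⟨p, hinj, hp⟩ := (all_card_le_biUnion_card_iff_exists_injective S).1 hall
  exact ⟨p, hinj, fun i => mem_filter.1 (hp i)⟩

lemma MulKSidon.kProductFree_popularGraph (hk : k ≠ 0) (hA : MulKSidon k A) (hn : M ^ 2 ≤ n) :
    KProductFree k (popularGraph k A n M) := by
  refine (kProductFree_iff hk).2 ⟨fun a b h => (pos_and_lt_of_popularGraph_adj hk h).1,
    fun a b hab hprod => ?_⟩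
  obtain ⟨p, hinj, hp⟩ := exists_injective_of_popularGraph_adj hab
  have heq : ∀ {i j x y}, y ∈ cofactors A n (p j) → p i * x = p j * y → i = j ∧ x = y :=
    fun {i j x y} hy h => by
      obtain ⟨hpos, hlt⟩ := pos_and_lt_of_mem_cofactors (hp j).1 hy
      obtain ⟨hpp, hxy⟩ := eq_and_eq_of_largePrimes_mul_eq hn (hp i).1 (hp j).1 hpos hlt h
      exact ⟨hinj hpp, hxy⟩
  refine hA ⟨fun i => p i * a i, fun i => p i * b i,
    fun i => mul_mem_of_mem_cofactors (hp i).2.1, fun i => mul_mem_of_mem_cofactors (hp i).2.2,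
    Function.Injective.sumElim (fun i j h => (heq (hp j).2.1 h).1)
      (fun i j h => (heq (hp j).2.2 h).1) fun i j h => ?_, ?_⟩
  · obtain ⟨rfl, hij⟩ := heq (hp j).2.2 h
    exact (hab i).1 hij
  · rw [prod_mul_distrib, prod_mul_distrib, hprod]

lemma mem_smallCliques_iff_of_cliqueFree_three (hG : G.CliqueFree 3) :
    c ∈ smallCliques G m ↔ c ⊆ Icc 1 m ∧ G.IsClique c := by
  refine mem_smallCliques.trans (and_congr_right fun _ => and_iff_right_of_imp fun hc => ?_)
  by_contra! hcard
  obtain ⟨t, htc, ht⟩ := exists_subset_card_eq (Nat.succ_le_of_lt hcard)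
  exact hG t ⟨hc.subset (coe_subset.2 htc), ht⟩

lemma card_cofactors_notMem_smallCliques_le (hG : (popularGraph k A n M).CliqueFree 3) :
    #{p ∈ largePrimes n M | cofactors A n p ∉ smallCliques (popularGraph k A n M) (n / p)} ≤
      k * M ^ 2 := by
  set pairs : Finset (ℕ × ℕ) :=
    {t ∈ range M ×ˢ range M | t.1 ≠ t.2 ∧ ¬(popularGraph k A n M).Adj t.1 t.2}
  have hsub : {p ∈ largePrimes n M |
      cofactors A n p ∉ smallCliques (popularGraph k A n M) (n / p)} ⊆ pairs.biUnion fun t =>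
        {p ∈ largePrimes n M | t.1 ∈ cofactors A n p ∧ t.2 ∈ cofactors A n p} := by
    intro p hp
    obtain ⟨hp, hnot⟩ := mem_filter.1 hp
    rw [mem_smallCliques_iff_of_cliqueFree_three hG, not_and] at hnot
    have hpair := hnot (cofactors_subset A n p)
    simp only [SimpleGraph.IsClique, Set.Pairwise, not_forall, mem_coe] at hpair
    obtain ⟨a, ha, b, hb, hne, hadj⟩ := hpair
    exact mem_biUnion.2 ⟨(a, b), mem_filter.2 ⟨mem_product.2
      ⟨mem_range.2 (pos_and_lt_of_mem_cofactors hp ha).2,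
        mem_range.2 (pos_and_lt_of_mem_cofactors hp hb).2⟩, hne, hadj⟩,
      mem_filter.2 ⟨hp, ha, hb⟩⟩
  have hpairs : #pairs ≤ M ^ 2 := (card_filter_le _ _).trans (by simp [sq])
  refine (card_le_card hsub).trans ((card_biUnion_le_card_mul _ _ k fun t ht => ?_).trans
    ((Nat.mul_le_mul_right k hpairs).trans_eq (mul_comm _ _)))
  obtain ⟨hne, hadj⟩ := (mem_filter.1 ht).2
  exact (not_le.1 fun hle => hadj ⟨hne, hle⟩).le

lemma MulKSidon.card_le_card_cofactors_le (hk : 2 ≤ k) (hA : MulKSidon k A) (hn : y ^ 2 ≤ n) :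
    #{p ∈ largePrimes n y | k ≤ #(cofactors A n p)} ≤ (k - 1) * y ^ k := by
  set T : Finset (ℕ × ℕ) := {t ∈ largePrimes n y ×ˢ Icc 1 y | t.2 ∈ cofactors A n t.1} with hT
  have hno := hA.not_exists_completeBipartite hk (T := T)
    (fun t ht => mul_mem_of_mem_cofactors (mem_filter.1 ht).2) (fun t ht t' ht' h => by
      obtain ⟨ht, -⟩ := mem_filter.1 ht
      obtain ⟨ht', hcof⟩ := mem_filter.1 ht'
      obtain ⟨hpos, hlt⟩ := pos_and_lt_of_mem_cofactors (mem_product.1 ht').1 hcof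
      exact Prod.ext_iff.2 (eq_and_eq_of_largePrimes_mul_eq hn (mem_product.1 ht).1
        (mem_product.1 ht').1 hpos hlt h))
  have hcofactors : ∀ p ∈ largePrimes n y, cofactors A n p = {a ∈ Icc 1 y | (p, a) ∈ T} := by
    intro p hp
    ext a
    simp only [hT, mem_filter, mem_product]
    refine ⟨fun ha => ?_, fun ha => ha.2.2⟩
    obtain ⟨hpos, hlt⟩ := pos_and_lt_of_mem_cofactors hp ha
    have haI := mem_Icc.2 ⟨hpos, hlt.le⟩
    exact ⟨haI, ⟨hp, haI⟩, ha⟩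
  rw [filter_congr fun p hp => by rw [hcofactors p hp]]
  have hcard : #{p ∈ largePrimes n y | k ≤ #{a ∈ Icc 1 y | (p, a) ∈ T}} ≤
      (k - 1) * #(Icc 1 y) ^ k := not_lt.1 fun hlt => hno
    (exists_completeBipartite_of_lt_card (r := fun p a => (p, a) ∈ T) hlt)
  rwa [Nat.card_Icc, Nat.add_sub_cancel] at hcard

end PopularGraph

section Decomposition

open Finset

variable {A : Finset ℕ} {k n M s y x : ℕ}

lemma finite_setOf_kProductFree_lt (k M : ℕ) :
    {G : SimpleGraph ℕ | KProductFree k G ∧ ∀ a b, G.Adj a b → a < M}.Finite := by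
  refine Set.Finite.of_injOn (f := fun G => {t ∈ range M ×ˢ range M | G.Adj t.1 t.2})
    (t := (range M ×ˢ range M).powerset) (fun G _ => ?_) (fun G hG G' hG' h => ?_)
    (finite_toSet _)
  · exact mem_coe.2 (mem_powerset.2 (filter_subset _ _))
  · have hadj : ∀ {H : SimpleGraph ℕ}, (∀ a b, H.Adj a b → a < M) → ∀ a b,
        H.Adj a b ↔ (a, b) ∈ ({t ∈ range M ×ˢ range M | H.Adj t.1 t.2} : Finset (ℕ × ℕ)) := by
      intro H hH a b
      simp only [mem_filter, mem_product, mem_range]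
      exact ⟨fun hab => ⟨⟨hH a b hab, hH b a hab.symm⟩, hab⟩, fun hab => hab.2⟩
    dsimp only at h
    ext a b
    rw [hadj hG.2, hadj hG'.2, h]

/-- The `k`-product-free graphs all of whose edges lie in `{1, …, M - 1}`. -/
noncomputable def kProductFreeGraphs (k M : ℕ) : Finset (SimpleGraph ℕ) :=
  (finite_setOf_kProductFree_lt k M).toFinset

lemma kProductFree_of_mem_kProductFreeGraphs {G : SimpleGraph ℕ}
    (hG : G ∈ kProductFreeGraphs k M) : KProductFree k G :=
  ((Set.Finite.mem_toFinset _).1 hG).1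

lemma MulKSidon.popularGraph_mem_kProductFreeGraphs (hk : k ≠ 0) (hA : MulKSidon k A)
    (hn : M ^ 2 ≤ n) : popularGraph k A n M ∈ kProductFreeGraphs k M :=
  (Set.Finite.mem_toFinset _).2 ⟨hA.kProductFree_popularGraph hk hn,
    fun _ _ h => (pos_and_lt_of_popularGraph_adj hk h).2⟩

/-- The sets of cofactors that a typical prime `p` with `⌊n / p⌋ = m` has in a `k`-Sidon set with
popular graph `G`: small cliques of `G` when `m < M`, sets with fewer than `k` elements
otherwise. -/
noncomputable def typicalCofactors (k : ℕ) (G : SimpleGraph ℕ) (M m : ℕ) : Finset (Finset ℕ) :=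
  if m < M then smallCliques G m else {X ∈ (Icc 1 m).powerset | #X ≤ k - 1}

lemma empty_mem_typicalCofactors (k : ℕ) (G : SimpleGraph ℕ) (M m : ℕ) :
    ∅ ∈ typicalCofactors k G M m := by
  unfold typicalCofactors
  split_ifs
  · exact empty_mem_smallCliques G m
  · simp

lemma card_typicalCofactors_le (k : ℕ) (G : SimpleGraph ℕ) (M m : ℕ) :
    #(typicalCofactors k G M m) ≤ if m < M then #(smallCliques G m) else (m + 1) ^ (k - 1) := by
  unfold typicalCofactors
  split_ifs
  · exact le_rfl
  · simpa using card_filter_card_le_le (Icc 1 m) (k - 1)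

/-- The large primes whose set of cofactors in `A` is not one of the `typicalCofactors`. -/
noncomputable def atypicalPrimes (k : ℕ) (A : Finset ℕ) (n M y : ℕ) : Finset ℕ :=
  {p ∈ largePrimes n y | cofactors A n p ∉ typicalCofactors k (popularGraph k A n M) M (n / p)}

lemma MulKSidon.card_atypicalPrimes_le (hk : Odd k) (hk3 : 3 ≤ k) (hA : MulKSidon k A)
    (hMy : M ≤ y) (hn : y ^ 2 ≤ n) :
    #(atypicalPrimes k A n M y) ≤ k * M ^ 2 + (k - 1) * y ^ k := by
  have hfree : (popularGraph k A n M).CliqueFree 3 :=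
    ((hA.kProductFree_popularGraph (by omega) (hn.trans' (by gcongr))).mono_of_odd
      (by decide) hk hk3).cliqueFree_three
  refine (card_le_card fun p hp => ?_).trans ((card_union_le _ _).trans (add_le_add
    (card_cofactors_notMem_smallCliques_le hfree) (hA.card_le_card_cofactors_le (by omega) hn)))
  obtain ⟨hp, hnot⟩ := mem_filter.1 hp
  unfold typicalCofactors at hnot
  split_ifs at hnot with hlt
  · exact mem_union_left _ (mem_filter.2
      ⟨mem_largePrimes.2 ⟨(mem_largePrimes.1 hp).1, hlt⟩, hnot⟩)
  · refine mem_union_right _ (mem_filter.2 ⟨hp, ?_⟩)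
    by_contra! hcard
    exact hnot (mem_filter.2 ⟨mem_powerset.2 (cofactors_subset A n p), by omega⟩)

/-- The cofactors of the large primes in `A`, emptied at the atypical primes. -/
noncomputable def truncatedCofactors (k : ℕ) (A : Finset ℕ) (n M y : ℕ) (p : largePrimes n y) :
    Finset ℕ :=
  if (p : ℕ) ∈ atypicalPrimes k A n M y then ∅ else cofactors A n p

lemma truncatedCofactors_mem_typicalCofactors (p : largePrimes n y) :
    truncatedCofactors k A n M y p ∈ typicalCofactors k (popularGraph k A n M) M (n / p) := by
  unfold truncatedCofactors
  split_ifs with hp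
  · exact empty_mem_typicalCofactors _ _ _ _
  · by_contra hnot
    exact hp (mem_filter.2 ⟨p.2, hnot⟩)

lemma assemble_truncatedCofactors_subset : assemble (truncatedCofactors k A n M y) ⊆ A := by
  intro x hx
  obtain ⟨p, a, ha, rfl⟩ := mem_assemble.1 hx
  unfold truncatedCofactors at ha
  split_ifs at ha
  · exact absurd ha (notMem_empty a)
  · exact mul_mem_of_mem_cofactors ha

lemma exists_largePrime_of_notMem_smoothPart (hAn : A ⊆ Icc 1 n) (hx : x ∈ A)
    (hsmooth : x ∉ smoothPart A n y) : ∃ p ∈ largePrimes n y, ∃ a ∈ cofactors A n p, p * a = x := by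
  simp only [smoothPart, mem_filter, hx, true_and, not_forall, not_le] at hsmooth
  obtain ⟨p, hp, ⟨a, rfl⟩, hlt⟩ := hsmooth
  obtain ⟨hpos, hle⟩ := mem_Icc.1 (hAn hx)
  refine ⟨p, mem_largePrimes.2 ⟨⟨(Nat.le_of_dvd hpos ⟨a, rfl⟩).trans hle, hp⟩, ?_⟩, a,
    (mem_cofactors_iff hAn hp.pos).2 hx, rfl⟩
  rwa [Nat.div_lt_iff_lt_mul hp.pos, mul_comm]

lemma sdiff_assemble_truncatedCofactors_subset (hAn : A ⊆ Icc 1 n) :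
    A \ assemble (truncatedCofactors k A n M y) ⊆ smoothPart A n y ∪
      (atypicalPrimes k A n M y).biUnion fun p => (cofactors A n p).image fun a => p * a := by
  intro x hx
  obtain ⟨hxA, hx⟩ := mem_sdiff.1 hx
  by_cases hsmooth : x ∈ smoothPart A n y
  · exact mem_union_left _ hsmooth
  obtain ⟨p, hp, a, ha, rfl⟩ := exists_largePrime_of_notMem_smoothPart hAn hxA hsmooth
  refine mem_union_right _ (mem_biUnion.2 ⟨p, ?_, mem_image_of_mem _ ha⟩)
  by_contra hatyp
  refine hx (mem_assemble.2 ⟨⟨p, hp⟩, a, ?_, rfl⟩)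
  rwa [truncatedCofactors, if_neg hatyp]

/-- An upper bound for the number of elements of a `k`-Sidon subset of `{1, …, n}` that are not
accounted for by the typical cofactors of its large primes: a bound for the smooth part plus one
for the multiples of the atypical primes. -/
def exceptionalBound (k n M s y : ℕ) : ℕ :=
  n / y + ∑ j ∈ Icc 1 (n / (s * y)), ((k - 1) * (n / (j * s)) + (k - 1) * s ^ (k + 1)) +
    (k * M ^ 2 + (k - 1) * y ^ k) * y

lemma MulKSidon.card_sdiff_assemble_truncatedCofactors_le (hk : Odd k) (hk3 : 3 ≤ k)
    (hA : MulKSidon k A) (hAn : A ⊆ Icc 1 n) (hs : 0 < s) (hy : 0 < y) (hMy : M ≤ y)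
    (hsn : s ^ 2 * y ≤ n) (hyn : y ^ 2 ≤ n) :
    #(A \ assemble (truncatedCofactors k A n M y)) ≤ exceptionalBound k n M s y := by
  refine (card_le_card (sdiff_assemble_truncatedCofactors_subset hAn)).trans
    ((card_union_le _ _).trans (add_le_add (hA.card_smoothPart_le (by omega) hAn hs hy hsn) ?_))
  refine (card_biUnion_le_card_mul _ _ y fun p hp => ?_).trans
    (Nat.mul_le_mul_right y (hA.card_atypicalPrimes_le hk hk3 hMy hyn))
  calc #((cofactors A n p).image fun a => p * a) ≤ #(Icc 1 (n / p)) :=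
        card_image_le.trans (card_le_card (cofactors_subset A n p))
    _ = n / p := by simp
    _ ≤ y := (div_lt_of_mem_largePrimes (mem_filter.1 hp).1).le

lemma prod_card_typicalCofactors_le (k : ℕ) (G : SimpleGraph ℕ) (n : ℕ) (hMy : M ≤ y) :
    ∏ p ∈ largePrimes n y, #(typicalCofactors k G M (n / p)) ≤
      (∏ m ∈ range M, #(smallCliques G m) ^ primesWithQuotient n m) *
        ∏ p ∈ largePrimes n y with ¬n / p < M, (n / p + 1) ^ (k - 1) := by
  have hfilter : {p ∈ largePrimes n y | n / p < M} = largePrimes n M := by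
    rw [largePrimes, filter_filter, largePrimes]
    exact filter_congr fun p _ => and_iff_right_of_imp fun h => h.trans_le hMy
  refine (prod_le_prod' fun p _ => card_typicalCofactors_le k G M (n / p)).trans_eq ?_
  rw [prod_ite, hfilter, prod_largePrimes n M fun m => #(smallCliques G m)]

theorem Sk_le_sum_kProductFreeGraphs (hk : Odd k) (hk3 : 3 ≤ k) (hs : 0 < s) (hy : 0 < y)
    (hMy : M ≤ y) (hsn : s ^ 2 * y ≤ n) (hyn : y ^ 2 ≤ n) :
    Sk k n ≤ ∑ G ∈ kProductFreeGraphs k M, (n + 1) ^ exceptionalBound k n M s y *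
      ((∏ m ∈ range M, #(smallCliques G m) ^ primesWithQuotient n m) *
        ∏ p ∈ largePrimes n y with ¬n / p < M, (n / p + 1) ^ (k - 1)) := by
  set E := exceptionalBound k n M s y
  have hsub : {A ∈ (Icc 1 n).powerset | MulKSidon k A} ⊆
      (kProductFreeGraphs k M).biUnion fun G => ({X ∈ (Icc 1 n).powerset | #X ≤ E} ×ˢ
        Fintype.piFinset fun p : largePrimes n y => typicalCofactors k G M (n / p)).image
          fun t => t.1 ∪ assemble t.2 := by
    intro A hA
    obtain ⟨hAn, hA⟩ := mem_filter.1 hA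
    rw [mem_powerset] at hAn
    refine mem_biUnion.2 ⟨popularGraph k A n M, hA.popularGraph_mem_kProductFreeGraphs (by omega)
      (hyn.trans' (by gcongr)), mem_image.2 ⟨(A \ assemble (truncatedCofactors k A n M y),
        truncatedCofactors k A n M y), mem_product.2 ⟨mem_filter.2 ⟨?_, ?_⟩, ?_⟩,
        sdiff_union_of_subset assemble_truncatedCofactors_subset⟩⟩
    · exact mem_powerset.2 (sdiff_subset.trans hAn)
    · exact hA.card_sdiff_assemble_truncatedCofactors_le hk hk3 hAn hs hy hMy hsn hyn
    · exact Fintype.mem_piFinset.2 truncatedCofactors_mem_typicalCofactors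
  refine (card_le_card hsub).trans (card_biUnion_le.trans (sum_le_sum fun G _ =>
    card_image_le.trans ?_))
  rw [card_product, Fintype.card_piFinset,
    prod_coe_sort (largePrimes n y) fun p => #(typicalCofactors k G M (n / p))]
  refine Nat.mul_le_mul ?_ (prod_card_typicalCofactors_le k G n hMy)
  simpa using card_filter_card_le_le (Icc 1 n) E

end Decomposition

section LowerBound

open Filter Topology Finset

variable {k : ℕ}

lemma eventually_primeCounting_pos : ∀ᶠ n : ℕ in atTop, (0 : ℝ) < n.primeCounting :=
  (Nat.tendsto_primeCounting.eventually_gt_atTop 0).mono fun _ hn => Nat.cast_pos.2 hn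

lemma tendsto_primesWithQuotient_div_primeCounting {m : ℕ} (hm : m ≠ 0) :
    Tendsto (fun n : ℕ => (primesWithQuotient n m : ℝ) / n.primeCounting) atTop
      (𝓝 (1 / ((m : ℝ) ^ 2 + m))) := by
  have hm' : (m : ℝ) ≠ 0 := Nat.cast_ne_zero.2 hm
  have hlimit : (1 : ℝ) / ((m : ℝ) ^ 2 + m) = 1 / m - 1 / (m + 1 : ℕ) := by
    push_cast
    field_simp
    ring
  rw [hlimit]
  refine ((tendsto_primeCounting_div_div_primeCounting hm).sub
    (tendsto_primeCounting_div_div_primeCounting m.succ_ne_zero)).congr fun n => ?_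
  rw [← primesWithQuotient_add_primeCounting hm, Nat.cast_add]
  ring

lemma tendsto_sum_primesWithQuotient_mul_log (G : SimpleGraph ℕ) (M : ℕ) :
    Tendsto (fun n : ℕ => (∑ m ∈ range M, (primesWithQuotient n m : ℝ) *
      Real.log #(smallCliques G m)) / n.primeCounting) atTop
      (𝓝 (∑ m ∈ range M, logFactor G m)) := by
  simp only [sum_div]
  refine tendsto_finsetSum _ fun m _ => ?_
  rcases eq_or_ne m 0 with rfl | hm
  · simp [logFactor, card_smallCliques, eOn]
  have h := (tendsto_primesWithQuotient_div_primeCounting hm).mul_const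
    (Real.log #(smallCliques G m))
  rw [one_div_mul_eq_div] at h
  exact h.congr fun n => div_mul_eq_mul_div _ _ _

lemma log_prod_card_smallCliques_pow (G : SimpleGraph ℕ) (M : ℕ) (e : ℕ → ℕ) :
    Real.log ((∏ m ∈ range M, #(smallCliques G m) ^ e m : ℕ) : ℝ) =
      ∑ m ∈ range M, (e m : ℝ) * Real.log #(smallCliques G m) := by
  push_cast
  rw [Real.log_prod fun m _ => pow_ne_zero _ (Nat.cast_ne_zero.2 (card_smallCliques_pos G m).ne')]
  simp only [Real.log_pow]

lemma Sk_pos (hk : k ≠ 0) (n : ℕ) : 0 < Sk k n :=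
  (prod_pos fun p _ => card_smallCliques_pos _ _).trans_le
    ((kProductFree_bot k).prod_card_smallCliques_le_Sk hk (M := 0) (by simp))

lemma eventually_lt_log_Sk_div_primeCounting (hk : k ≠ 0) {x : ℝ} (hx : x < Real.log (betaK k)) :
    ∀ᶠ n : ℕ in atTop, x < Real.log (Sk k n) / n.primeCounting := by
  obtain ⟨G, hG, hlt⟩ := exists_lt_gProd_of_lt_betaK ((Real.lt_log_iff_exp_lt (betaK_pos k)).1 hx)
  rw [gProd_eq_exp_tsum_logFactor, Real.exp_lt_exp] at hlt
  obtain ⟨M, hM⟩ := ((summable_logFactor G).hasSum.tendsto_sum_nat.eventually_const_lt hlt).exists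
  filter_upwards [(tendsto_sum_primesWithQuotient_mul_log G M).eventually_const_lt hM,
    eventually_ge_atTop (M ^ 2)] with n hn hMn
  have hcount := hG.prod_card_smallCliques_le_Sk hk hMn
  rw [prod_largePrimes n M fun m => #(smallCliques G m)] at hcount
  refine hn.trans_le (div_le_div_of_nonneg_right ?_ (Nat.cast_nonneg _))
  rw [← log_prod_card_smallCliques_pow]
  exact Real.log_le_log (Nat.cast_pos.2 (prod_pos fun m _ => pow_pos (card_smallCliques_pos G m) _))
    (Nat.cast_le.2 hcount)

end LowerBound

section Parameters

open Filter Topology Finset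

variable {k M n s y : ℕ}

/-- The length `s` of the intervals `[js, js + s)` by which the smooth part of a Sidon subset of
`{1, …, n}` is grouped: a power of `log n` that makes the exceptional elements negligible. -/
noncomputable def blockLength (n : ℕ) : ℕ := ⌊Real.log n ^ 4⌋₊ + 1

lemma blockLength_pos (n : ℕ) : 0 < blockLength n := Nat.succ_pos _

lemma log_pow_four_le_blockLength (n : ℕ) : Real.log n ^ 4 ≤ blockLength n := by
  rw [blockLength, Nat.cast_succ]
  exact (Nat.lt_floor_add_one _).le

lemma tendsto_blockLength : Tendsto blockLength atTop atTop :=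
  tendsto_atTop_mono (fun _ => Nat.le_succ _) (tendsto_nat_floor_atTop.comp
    ((tendsto_pow_atTop (by norm_num)).comp tendsto_log_natCast_atTop))

lemma eventually_blockLength_le : ∀ᶠ n : ℕ in atTop, (blockLength n : ℝ) ≤ Real.log n ^ 5 := by
  filter_upwards [tendsto_log_natCast_atTop.eventually_ge_atTop 2] with n hn
  have hfloor := Nat.floor_le (show 0 ≤ Real.log n ^ 4 by positivity)
  have hone : (1 : ℝ) ≤ Real.log n ^ 4 := one_le_pow₀ (by linarith)
  rw [blockLength, Nat.cast_succ]
  calc (⌊Real.log n ^ 4⌋₊ + 1 : ℝ) ≤ Real.log n ^ 4 * 2 := by linarith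
    _ ≤ Real.log n ^ 4 * Real.log n := by gcongr
    _ = Real.log n ^ 5 := (pow_succ _ 4).symm

lemma tendsto_blockLength_pow_mul_log_sq_div (r : ℕ) :
    Tendsto (fun n : ℕ => (blockLength n : ℝ) ^ r * Real.log n ^ 2 / n) atTop (𝓝 0) := by
  have hlog : Tendsto (fun n : ℕ => Real.log n ^ (5 * r + 2) / n) atTop (𝓝 0) :=
    Real.isLittleO_pow_log_id_atTop.tendsto_div_nhds_zero.comp tendsto_natCast_atTop_atTop
  refine squeeze_zero' (Eventually.of_forall fun n => by positivity) ?_ hlog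
  filter_upwards [eventually_blockLength_le] with n hn
  rw [pow_add, pow_mul]
  gcongr

lemma eventually_blockLength_pow_le (r : ℕ) : ∀ᶠ n : ℕ in atTop, blockLength n ^ r ≤ n := by
  filter_upwards [(tendsto_blockLength_pow_mul_log_sq_div r).eventually_le_const one_pos,
    tendsto_log_natCast_atTop.eventually_ge_atTop 1, eventually_gt_atTop 0] with n hn hlog hpos
  rw [div_le_one (Nat.cast_pos.2 hpos)] at hn
  exact_mod_cast (le_mul_of_one_le_right (by positivity) (one_le_pow₀ hlog)).trans hn

lemma eventually_div_two_mul_log_le_primeCounting :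
    ∀ᶠ n : ℕ in atTop, (n : ℝ) / (2 * Real.log n) ≤ n.primeCounting := by
  filter_upwards [tendsto_primeCounting_natCast_mul_log_div.eventually_const_le
      (show (1 / 2 : ℝ) < 1 by norm_num), tendsto_log_natCast_atTop.eventually_gt_atTop 0,
    eventually_gt_atTop 0] with n hn hlog hpos
  rw [le_div_iff₀ (Nat.cast_pos.2 hpos)] at hn
  rw [div_le_iff₀ (by positivity)]
  linarith

lemma eventually_primeCounting_div_le : ∀ᶠ n : ℕ in atTop, ∀ j : ℕ, 0 < j → j ^ 2 ≤ n →
    ((n / j).primeCounting : ℝ) ≤ 8 * n.primeCounting / j := by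
  obtain ⟨x₀, hx₀⟩ := eventually_atTop.1
    (tendsto_primeCounting_mul_log_div.eventually_le_const (show (1 : ℝ) < 2 by norm_num))
  filter_upwards [eventually_div_two_mul_log_le_primeCounting,
    tendsto_log_natCast_atTop.eventually_gt_atTop 0,
    (Real.tendsto_sqrt_atTop.comp tendsto_natCast_atTop_atTop).eventually_ge_atTop x₀,
    eventually_gt_atTop 0] with n hπ hlog hsqrt hn j hj hjn
  have hn' : (0 : ℝ) < n := Nat.cast_pos.2 hn
  have hj' : (0 : ℝ) < j := Nat.cast_pos.2 hj
  have hle : √(n : ℝ) ≤ n / j := by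
    rw [le_div_iff₀ hj']
    calc √(n : ℝ) * j ≤ √n * √n := by gcongr; exact Real.le_sqrt_of_sq_le (by exact_mod_cast hjn)
      _ = n := Real.mul_self_sqrt hn'.le
  have hlogle : Real.log n / 2 ≤ Real.log (n / j) := by
    rw [← Real.log_sqrt hn'.le]
    exact Real.log_le_log (Real.sqrt_pos.2 hn') hle
  have hupper := hx₀ (n / j : ℝ) (hsqrt.trans hle)
  rw [Nat.floor_div_natCast, Nat.floor_natCast, div_le_iff₀ (by positivity)] at hupper
  rw [div_le_iff₀ (by positivity)] at hπ
  rw [le_div_iff₀ hj']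
  refine le_of_mul_le_mul_right ?_ hlog
  calc ((n / j).primeCounting : ℝ) * j * Real.log n
      = 2 * ((n / j).primeCounting * (Real.log n / 2)) * j := by ring
    _ ≤ 2 * ((n / j).primeCounting * Real.log (n / j)) * j := by gcongr
    _ ≤ 2 * (2 * (n / j)) * j := by gcongr
    _ = 4 * n := by field_simp; ring
    _ ≤ 8 * n.primeCounting * Real.log n := by linarith

lemma sum_Icc_inv_le_one_add_log {N : ℕ} (hN : N ≤ n) :
    ∑ j ∈ Icc 1 N, (j : ℝ)⁻¹ ≤ 1 + Real.log n := by
  have hsum : ∑ j ∈ Icc 1 N, (j : ℝ)⁻¹ ≤ ∑ j ∈ Icc 1 n, (j : ℝ)⁻¹ :=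
    sum_le_sum_of_subset_of_nonneg (Icc_subset_Icc_right hN) fun _ _ _ => by positivity
  have hharmonic := harmonic_le_one_add_log n
  rw [harmonic_eq_sum_Icc] at hharmonic
  push_cast at hharmonic
  exact hsum.trans hharmonic

lemma sum_div_mul_le (n s N : ℕ) (hN : N ≤ n) :
    ∑ j ∈ Icc 1 N, ((n / (j * s) : ℕ) : ℝ) ≤ n / s * (1 + Real.log n) := by
  calc ∑ j ∈ Icc 1 N, ((n / (j * s) : ℕ) : ℝ) ≤ ∑ j ∈ Icc 1 N, n / s * (j : ℝ)⁻¹ :=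
        sum_le_sum fun j _ => Nat.cast_div_le.trans_eq (by
          rw [Nat.cast_mul, ← div_eq_mul_inv, div_div, mul_comm])
    _ = n / s * ∑ j ∈ Icc 1 N, (j : ℝ)⁻¹ := (mul_sum _ _ _).symm
    _ ≤ n / s * (1 + Real.log n) := by gcongr; exact sum_Icc_inv_le_one_add_log hN

lemma atypical_contribution_le (hk : k ≠ 0) (hy : 0 < y) (hM : M ≤ y) :
    (k * M ^ 2 + (k - 1) * y ^ k) * y ≤ 2 * k * y ^ (k + 2) := by
  have hsq : M ^ 2 * y ≤ y ^ (k + 2) :=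
    calc M ^ 2 * y ≤ y ^ 2 * y := by gcongr
      _ = y ^ 3 := (pow_succ _ 2).symm
      _ ≤ y ^ (k + 2) := Nat.pow_le_pow_right hy (by omega)
  calc (k * M ^ 2 + (k - 1) * y ^ k) * y = k * (M ^ 2 * y) + (k - 1) * y ^ (k + 1) := by ring
    _ ≤ k * y ^ (k + 2) + k * y ^ (k + 2) := by gcongr <;> omega
    _ = 2 * k * y ^ (k + 2) := by ring

lemma exceptionalBound_le (hk : k ≠ 0) (hs : 0 < s) (hM : M ≤ s ^ (k + 2)) :
    (exceptionalBound k n M s (s ^ (k + 2)) : ℝ) ≤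
      2 * k * (n / s * (1 + Real.log n)) + 2 * k * (s : ℝ) ^ ((k + 2) * (k + 2)) := by
  set N := n / (s * s ^ (k + 2)) with hN
  have hs1 : (1 : ℝ) ≤ s := Nat.one_le_cast.2 hs
  have hk1 : (1 : ℝ) ≤ k := Nat.one_le_cast.2 (Nat.one_le_iff_ne_zero.2 hk)
  have hfirst : ((n / s ^ (k + 2) : ℕ) : ℝ) ≤ n / s := by
    refine Nat.cast_div_le.trans ?_
    rw [Nat.cast_pow]
    gcongr
    exact le_self_pow₀ hs1 (by omega)
  have hblocks : (N : ℝ) * s ^ (k + 1) ≤ n / s :=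
    calc (N : ℝ) * s ^ (k + 1) ≤ n / (s * s ^ (k + 2)) * s ^ (k + 1) := by
          gcongr
          exact_mod_cast Nat.cast_div_le (α := ℝ) (m := n) (n := s * s ^ (k + 2))
      _ = n / s / s := by field_simp; ring
      _ ≤ n / s := div_le_self (by positivity) hs1
  have hsum := sum_div_mul_le n s N (Nat.div_le_self _ _)
  have hatypical : ((((k * M ^ 2 + (k - 1) * (s ^ (k + 2)) ^ k) * s ^ (k + 2) : ℕ)) : ℝ) ≤
      2 * k * (s : ℝ) ^ ((k + 2) * (k + 2)) := by
    rw [pow_mul]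
    exact_mod_cast atypical_contribution_le hk (by positivity) hM
  have hsplit : (exceptionalBound k n M s (s ^ (k + 2)) : ℝ) = (n / s ^ (k + 2) : ℕ) +
      (k - 1 : ℕ) * (∑ j ∈ Icc 1 N, ((n / (j * s) : ℕ) : ℝ) + N * s ^ (k + 1)) +
      ((k * M ^ 2 + (k - 1) * (s ^ (k + 2)) ^ k) * s ^ (k + 2) : ℕ) := by
    rw [exceptionalBound, ← hN, sum_add_distrib, ← mul_sum, sum_const, Nat.card_Icc,
      Nat.add_sub_cancel, smul_eq_mul]
    push_cast
    ring
  have hmiddle := mul_le_mul_of_nonneg_left (add_le_add hsum hblocks) (sub_nonneg.2 hk1)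
  rw [hsplit, Nat.cast_pred (Nat.pos_of_ne_zero hk)]
  have hnonneg : 0 ≤ (n : ℝ) / s * (1 + k * Real.log n + Real.log n) := by positivity
  linear_combination hfirst + hmiddle + hatypical + hnonneg

lemma tendsto_exceptionalBound_mul_log_div_primeCounting (hk : k ≠ 0) (M : ℕ) :
    Tendsto (fun n : ℕ => (exceptionalBound k n M (blockLength n) (blockLength n ^ (k + 2)) : ℝ) *
      Real.log (n + 1) / n.primeCounting) atTop (𝓝 0) := by
  have hlimit : Tendsto (fun n : ℕ => 16 * k * (Real.log n)⁻¹ +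
      8 * k * ((blockLength n : ℝ) ^ ((k + 2) * (k + 2)) * Real.log n ^ 2 / n)) atTop (𝓝 0) := by
    simpa using (tendsto_log_natCast_atTop.inv_tendsto_atTop.const_mul (16 * (k : ℝ))).add
      ((tendsto_blockLength_pow_mul_log_sq_div ((k + 2) * (k + 2))).const_mul (8 * (k : ℝ)))
  refine squeeze_zero' (Eventually.of_forall fun n => ?_) ?_ hlimit
  · have : 0 ≤ Real.log (n + 1 : ℝ) := Real.log_nonneg (le_add_of_nonneg_left n.cast_nonneg)
    positivity
  filter_upwards [eventually_div_two_mul_log_le_primeCounting,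
    tendsto_log_natCast_atTop.eventually_ge_atTop 1, tendsto_blockLength.eventually_ge_atTop M,
    eventually_ge_atTop 2] with n hπ hlog hM hn
  have hE := exceptionalBound_le (n := n) hk (blockLength_pos n)
    (hM.trans (Nat.le_self_pow (Nat.succ_ne_zero (k + 1)) _))
  have hs := log_pow_four_le_blockLength n
  have hn' : (2 : ℝ) ≤ n := Nat.ofNat_le_cast.2 hn
  have hlogsucc : Real.log (n + 1) ≤ 2 * Real.log n := by
    rw [← Nat.cast_two, ← Real.log_pow]
    exact Real.log_le_log (by positivity) (by nlinarith)
  have hlogsucc' : 0 ≤ Real.log (n + 1 : ℝ) := Real.log_nonneg (by linarith)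
  set l := Real.log n
  set t := (blockLength n : ℝ)
  calc _ ≤ (2 * k * (n / t * (1 + l)) + 2 * k * t ^ ((k + 2) * (k + 2))) * (2 * l) /
          (n / (2 * l)) := by gcongr
    _ ≤ (2 * k * (n / l ^ 4 * (l + l)) + 2 * k * t ^ ((k + 2) * (k + 2))) * (2 * l) /
          (n / (2 * l)) := by gcongr
    _ = _ := by field_simp; ring

end Parameters

section UpperBound

open Filter Topology Finset

variable {k M n y p : ℕ}

lemma log_div_add_one_le_sum_inv (hp : p ∈ largePrimes n y) :
    Real.log ((n / p : ℕ) + 1) ≤ ∑ i ∈ Icc 1 y, if i ≤ n / p then (i : ℝ)⁻¹ else 0 := by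
  have hharmonic := log_add_one_le_harmonic (n / p)
  rw [harmonic_eq_sum_Icc] at hharmonic
  push_cast at hharmonic
  refine hharmonic.trans ?_
  rw [← sum_filter]
  refine sum_le_sum_of_subset_of_nonneg (fun i hi => ?_) fun i _ _ => by positivity
  have hlt := div_lt_of_mem_largePrimes hp
  simp only [mem_filter, mem_Icc] at hi ⊢
  omega

lemma card_largePrimes_le_div_le {i : ℕ} (hi : 0 < i) :
    #{p ∈ {p ∈ largePrimes n y | ¬n / p < M} | i ≤ n / p} ≤ (n / max i M).primeCounting := by
  rw [← Nat.primesLE_card_eq_primeCounting]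
  refine card_le_card fun p hp => ?_
  simp only [mem_filter, not_lt] at hp
  have hprime := prime_of_mem_largePrimes hp.1.1
  rw [Nat.mem_primesLE, Nat.le_div_iff_mul_le (lt_max_of_lt_left hi), mul_comm,
    ← Nat.le_div_iff_mul_le hprime.pos]
  exact ⟨max_le hp.2 hp.1.2, hprime⟩

lemma sqrt_mul_sqrt_le_max {a b : ℝ} (ha : 0 ≤ a) : √a * √b ≤ max a b := by
  calc √a * √b ≤ √(max a b) * √(max a b) := by
        gcongr
        · exact le_max_left _ _
        · exact le_max_right _ _
    _ = max a b := Real.mul_self_sqrt (le_max_of_le_left ha)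

lemma card_largePrimes_le_div_mul_inv_le {i : ℕ} {C : ℝ} (hM : 0 < M) (hi : 0 < i) (hC : 0 ≤ C)
    (hπ : ((n / max i M).primeCounting : ℝ) ≤ C / (max i M : ℕ)) :
    (#{p ∈ {p ∈ largePrimes n y | ¬n / p < M} | i ≤ n / p} : ℝ) * (i : ℝ)⁻¹ ≤
      C / √M * (1 / (i : ℝ) ^ (3 / 2 : ℝ)) := by
  have hi' : (0 : ℝ) < i := Nat.cast_pos.2 hi
  have hmax : √(i : ℝ) * √M ≤ (max i M : ℕ) := by
    rw [Nat.cast_max]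
    exact sqrt_mul_sqrt_le_max hi'.le
  calc (#{p ∈ {p ∈ largePrimes n y | ¬n / p < M} | i ≤ n / p} : ℝ) * (i : ℝ)⁻¹
      ≤ C / (max i M : ℕ) * (i : ℝ)⁻¹ := by
        gcongr
        exact (Nat.cast_le.2 (card_largePrimes_le_div_le hi)).trans hπ
    _ ≤ C / (√i * √M) * (i : ℝ)⁻¹ := by gcongr
    _ = C / √M * (1 / (i : ℝ) ^ (3 / 2 : ℝ)) := by
        rw [rpow_three_halves hi'.le]
        field_simp

/-- Bounding `log (m + 1)` by a harmonic sum turns the left-hand side into a sum of prime counts,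
for which the crude bound of Chebyshev type suffices. -/
lemma sum_log_div_add_one_le {C : ℝ} (hM : 0 < M) (hMy : M ≤ y) (hC : 0 ≤ C)
    (hπ : ∀ j : ℕ, 0 < j → j ≤ y → ((n / j).primeCounting : ℝ) ≤ C / j) :
    ∑ p ∈ largePrimes n y with ¬n / p < M, Real.log ((n / p : ℕ) + 1) ≤
      C / √M * ∑' i : ℕ, 1 / (i : ℝ) ^ (3 / 2 : ℝ) := by
  calc ∑ p ∈ largePrimes n y with ¬n / p < M, Real.log ((n / p : ℕ) + 1)
      ≤ ∑ p ∈ largePrimes n y with ¬n / p < M, ∑ i ∈ Icc 1 y,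
          if i ≤ n / p then (i : ℝ)⁻¹ else 0 :=
        sum_le_sum fun p hp => log_div_add_one_le_sum_inv (mem_filter.1 hp).1
    _ = ∑ i ∈ Icc 1 y,
          (#{p ∈ {p ∈ largePrimes n y | ¬n / p < M} | i ≤ n / p} : ℝ) * (i : ℝ)⁻¹ := by
        rw [sum_comm]
        refine sum_congr rfl fun i _ => ?_
        rw [← sum_filter, sum_const, nsmul_eq_mul]
    _ ≤ ∑ i ∈ Icc 1 y, C / √M * (1 / (i : ℝ) ^ (3 / 2 : ℝ)) := sum_le_sum fun i hi => by
        obtain ⟨hi, hiy⟩ := mem_Icc.1 hi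
        exact card_largePrimes_le_div_mul_inv_le hM hi hC
          (hπ _ (lt_max_of_lt_left hi) (max_le hiy hMy))
    _ = C / √M * ∑ i ∈ Icc 1 y, 1 / (i : ℝ) ^ (3 / 2 : ℝ) := (mul_sum _ _ _).symm
    _ ≤ C / √M * ∑' i : ℕ, 1 / (i : ℝ) ^ (3 / 2 : ℝ) := by
        gcongr
        exact summable_one_div_rpow_three_halves.sum_le_tsum _ fun i _ => by positivity

lemma eventually_sum_log_div_add_one_le (hM : 0 < M) (r : ℕ) :
    ∀ᶠ n : ℕ in atTop, ∑ p ∈ largePrimes n (blockLength n ^ (r + 1)) with ¬n / p < M,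
      Real.log ((n / p : ℕ) + 1) ≤
        8 * n.primeCounting / √M * ∑' i : ℕ, 1 / (i : ℝ) ^ (3 / 2 : ℝ) := by
  filter_upwards [eventually_primeCounting_div_le, tendsto_blockLength.eventually_ge_atTop M,
    eventually_blockLength_pow_le ((r + 1) * 2)] with n hπ hMn hn
  rw [pow_mul] at hn
  exact sum_log_div_add_one_le hM (hMn.trans (Nat.le_self_pow r.succ_ne_zero _)) (by positivity)
    fun j hj hjy => hπ j hj ((Nat.pow_le_pow_left hjy 2).trans hn)

lemma eventually_sum_primesWithQuotient_mul_log_lt {x : ℝ} (hx : Real.log (betaK k) < x) (M : ℕ) :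
    ∀ᶠ n : ℕ in atTop, ∀ G ∈ kProductFreeGraphs k M,
      (∑ m ∈ range M, (primesWithQuotient n m : ℝ) * Real.log #(smallCliques G m)) /
        n.primeCounting < x := by
  rw [eventually_all_finset]
  intro G hG
  refine (tendsto_sum_primesWithQuotient_mul_log G M).eventually_lt_const (lt_of_le_of_lt ?_ hx)
  exact ((summable_logFactor G).sum_le_tsum _ fun m _ => logFactor_nonneg G m).trans
    (kProductFree_of_mem_kProductFreeGraphs hG).tsum_logFactor_le

lemma log_exceptional_mul_typical (G : SimpleGraph ℕ) (E k n M y : ℕ) :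
    Real.log (((n + 1) ^ E * ((∏ m ∈ range M, #(smallCliques G m) ^ primesWithQuotient n m) *
        ∏ p ∈ largePrimes n y with ¬n / p < M, (n / p + 1) ^ (k - 1)) : ℕ) : ℝ) =
      E * Real.log (n + 1) +
        (∑ m ∈ range M, (primesWithQuotient n m : ℝ) * Real.log #(smallCliques G m) +
          (k - 1 : ℕ) * ∑ p ∈ largePrimes n y with ¬n / p < M, Real.log ((n / p : ℕ) + 1)) := by
  have hcliques : ((∏ m ∈ range M, #(smallCliques G m) ^ primesWithQuotient n m : ℕ) : ℝ) ≠ 0 :=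
    Nat.cast_ne_zero.2 (prod_pos fun m _ => pow_pos (card_smallCliques_pos G m) _).ne'
  have htail : ((∏ p ∈ largePrimes n y with ¬n / p < M, (n / p + 1) ^ (k - 1) : ℕ) : ℝ) ≠ 0 :=
    Nat.cast_ne_zero.2 (prod_pos fun p _ => by positivity).ne'
  rw [Nat.cast_mul, Nat.cast_mul, Real.log_mul (by positivity) (mul_ne_zero hcliques htail),
    Real.log_mul hcliques htail, log_prod_card_smallCliques_pow, Nat.cast_pow, Real.log_pow,
    Nat.cast_prod, Real.log_prod fun p _ => by positivity, mul_sum]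
  simp only [Nat.cast_pow, Real.log_pow, Nat.cast_add_one]

lemma eventually_log_exceptional_mul_typical_le (hk : k ≠ 0) {ε : ℝ} (hε : 0 < ε) :
    ∃ M : ℕ, ∀ᶠ n : ℕ in atTop, ∀ G ∈ kProductFreeGraphs k M,
      Real.log (((n + 1) ^ exceptionalBound k n M (blockLength n) (blockLength n ^ (k + 2)) *
        ((∏ m ∈ range M, #(smallCliques G m) ^ primesWithQuotient n m) *
          ∏ p ∈ largePrimes n (blockLength n ^ (k + 2)) with ¬n / p < M,
            (n / p + 1) ^ (k - 1)) : ℕ) : ℝ) ≤ (Real.log (betaK k) + 3 * ε) * n.primeCounting := by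
  set Z := ∑' i : ℕ, 1 / (i : ℝ) ^ (3 / 2 : ℝ)
  have hlimit : Tendsto (fun M : ℕ => (k - 1 : ℕ) * (8 * Z / √M)) atTop (𝓝 0) := by
    simpa using ((Real.tendsto_sqrt_atTop.comp tendsto_natCast_atTop_atTop).const_div_atTop
      (8 * Z)).const_mul ((k - 1 : ℕ) : ℝ)
  obtain ⟨M, hMε, hM⟩ := ((hlimit.eventually_le_const hε).and (eventually_gt_atTop 0)).exists
  refine ⟨M, ?_⟩
  filter_upwards [eventually_sum_primesWithQuotient_mul_log_lt (lt_add_of_pos_right _ hε) M,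
    (tendsto_exceptionalBound_mul_log_div_primeCounting hk M).eventually_le_const hε,
    eventually_sum_log_div_add_one_le hM (k + 1), eventually_primeCounting_pos]
    with n hcliques hexceptional htail hπ G hG
  have hcliques := hcliques G hG
  rw [div_lt_iff₀ hπ] at hcliques
  rw [div_le_iff₀ hπ] at hexceptional
  have htail : ((k - 1 : ℕ) : ℝ) * ∑ p ∈ largePrimes n (blockLength n ^ (k + 2)) with ¬n / p < M,
      Real.log ((n / p : ℕ) + 1) ≤ ε * n.primeCounting :=
    calc _ ≤ ((k - 1 : ℕ) : ℝ) * (8 * n.primeCounting / √M * Z) := by gcongr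
      _ = (k - 1 : ℕ) * (8 * Z / √M) * n.primeCounting := by ring
      _ ≤ ε * n.primeCounting := by gcongr
  rw [log_exceptional_mul_typical]
  linarith

lemma log_natCast_le_add_of_le_sum {ι : Type*} {I : Finset ι} {f : ι → ℕ} {N : ℕ} {b : ℝ}
    (hN : 0 < N) (hle : N ≤ ∑ i ∈ I, f i) (hpos : ∀ i ∈ I, 0 < f i)
    (hf : ∀ i ∈ I, Real.log (f i) ≤ b) : Real.log N ≤ Real.log #I + b := by
  have hsum : (N : ℝ) ≤ #I * Real.exp b :=
    calc (N : ℝ) ≤ ∑ i ∈ I, (f i : ℝ) := by exact_mod_cast hle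
      _ ≤ ∑ _i ∈ I, Real.exp b := sum_le_sum fun i hi =>
          (Real.log_le_iff_le_exp (Nat.cast_pos.2 (hpos i hi))).1 (hf i hi)
      _ = #I * Real.exp b := by rw [sum_const, nsmul_eq_mul]
  have hcard : (#I : ℝ) ≠ 0 := fun h => by
    rw [h, zero_mul] at hsum
    exact (Nat.cast_pos.2 hN).not_ge hsum
  rw [← Real.log_exp b, ← Real.log_mul hcard (Real.exp_pos b).ne']
  exact Real.log_le_log (Nat.cast_pos.2 hN) hsum

lemma eventually_log_Sk_div_primeCounting_lt (hk : Odd k) (hk3 : 3 ≤ k) {x : ℝ}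
    (hx : Real.log (betaK k) < x) :
    ∀ᶠ n : ℕ in atTop, Real.log (Sk k n) / n.primeCounting < x := by
  have hk0 : k ≠ 0 := by omega
  obtain ⟨ε, hε, rfl⟩ : ∃ ε, 0 < ε ∧ x = Real.log (betaK k) + 4 * ε :=
    ⟨(x - Real.log (betaK k)) / 4, by linarith, by ring⟩
  obtain ⟨M, hterm⟩ := eventually_log_exceptional_mul_typical_le hk0 hε
  have hcard : Tendsto (fun n : ℕ => Real.log #(kProductFreeGraphs k M) / n.primeCounting)
      atTop (𝓝 0) :=
    (tendsto_natCast_atTop_atTop.comp Nat.tendsto_primeCounting).const_div_atTop _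
  filter_upwards [hterm, hcard.eventually_lt_const hε, eventually_primeCounting_pos,
    tendsto_blockLength.eventually_ge_atTop M, eventually_blockLength_pow_le ((k + 2) * 2),
    eventually_blockLength_pow_le (2 + (k + 2))] with n hterm hcard hπ hM hyn hsn
  rw [pow_mul] at hyn
  rw [pow_add] at hsn
  have hcount := Sk_le_sum_kProductFreeGraphs hk hk3 (blockLength_pos n)
    (pow_pos (blockLength_pos n) (k + 2)) (hM.trans (Nat.le_self_pow (by omega) _)) hsn hyn
  have hlog := log_natCast_le_add_of_le_sum (Sk_pos hk0 n) hcount (fun G _ => ?_) hterm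
  · rw [div_lt_iff₀ hπ] at hcard ⊢
    linarith
  · have := prod_pos fun m (_ : m ∈ range M) =>
      pow_pos (card_smallCliques_pos G m) (primesWithQuotient n m)
    positivity

theorem tendsto_log_Sk_div_primeCounting (hk : Odd k) (hk3 : 3 ≤ k) :
    Tendsto (fun n : ℕ => Real.log (Sk k n) / n.primeCounting) atTop
      (𝓝 (Real.log (betaK k))) :=
  tendsto_order.2 ⟨fun _ hx => eventually_lt_log_Sk_div_primeCounting (by omega) hx,
    fun _ hx => eventually_log_Sk_div_primeCounting_lt hk hk3 hx⟩

theorem tendsto_Sk_rpow_one_div_primeCounting (hk : Odd k) (hk3 : 3 ≤ k) :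
    Tendsto (fun n : ℕ => (Sk k n : ℝ) ^ ((1 : ℝ) / n.primeCounting)) atTop (𝓝 (betaK k)) := by
  have h := (tendsto_log_Sk_div_primeCounting hk hk3).rexp
  rw [Real.exp_log (betaK_pos k)] at h
  refine h.congr fun n => ?_
  rw [Real.rpow_def_of_pos (Nat.cast_pos.2 (Sk_pos (by omega) n)), mul_one_div]

end UpperBound

theorem count_mulKSidon_odd_general :
    (∀ k : ℕ, Odd k → 3 ≤ k →
      Filter.Tendsto
        (fun n : ℕ => (Sk k n : ℝ) ^ ((1 : ℝ) / (Nat.primeCounting n : ℝ)))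
        Filter.atTop (nhds (betaK k))) ∧
    (∀ k k' : ℕ, Odd k → Odd k' → k ≤ k' → betaK k' ≤ betaK k) ∧
    (∀ k : ℕ, Odd k → betaMinus ≤ betaK k) :=
  ⟨fun _ hk hk3 => tendsto_Sk_rpow_one_div_primeCounting hk hk3,
    fun _ _ hk hk' hle => betaK_le_of_odd hk hk' hle, fun _ hk => betaMinus_le_betaK hk⟩

theorem count_mulKSidon_odd :
    (∀ k : ℕ, Odd k → 5 ≤ k →
      Filter.Tendsto
        (fun n : ℕ => (Sk k n : ℝ) ^ ((1 : ℝ) / (Nat.primeCounting n : ℝ)))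
        Filter.atTop (nhds (betaK k))) ∧
    (∀ k k' : ℕ, Odd k → Odd k' → 3 ≤ k → k ≤ k' → betaK k' ≤ betaK k) ∧
    (∀ k : ℕ, Odd k → 5 ≤ k → betaMinus ≤ betaK k) := by
  obtain ⟨hlimit, hanti, hminus⟩ := count_mulKSidon_odd_general
  exact ⟨fun k hk hk5 => hlimit k hk (by omega), fun k k' hk hk' _ => hanti k k' hk hk',
    fun k hk _ => hminus k hk⟩
end

section
/- There is a constant C > 0 such that for all positive integers m ≤ n with n^{11/12}·(log n)^5 ≤ m (log the natural logarithm), the number of C₄-free bipartite graphs with parts of sizes m and n (i.e., the number of edge sets E ⊆ U × V with |U| = m, |V| = n that are C₄-free) is at most 2^{C·m·n^{1/2}}. -/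
open scoped Classical

/-- The number of `C₄`-free bipartite graphs with parts of sizes `m` and `n`,
i.e. the number of edge sets `E ⊆ U × V` (`|U| = m`, `|V| = n`) containing no
four pairs `(u,v), (u,v'), (u',v), (u',v')` with `u ≠ u'`, `v ≠ v'`. -/
noncomputable def c4FreeCount (m n : ℕ) : ℕ :=
  ((Finset.univ : Finset (Fin m × Fin n)).powerset.filter
    (fun E => ¬ ∃ (u u' : Fin m) (v v' : Fin n), u ≠ u' ∧ v ≠ v' ∧
      (u, v) ∈ E ∧ (u, v') ∈ E ∧ (u', v) ∈ E ∧ (u', v') ∈ E)).card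

/-!
Let `K = 1 + log n`. A random set `t ⊆ U` of density `1 / K` sees about a `1 / K` fraction of the
neighbourhood of almost every `v ∈ V`, so the edges at `t` together with those at the few atypical
vertices form a small skeleton, which can be enumerated cheaply and which determines the degrees
of the remaining vertices up to a factor `2 * K`. If the graph is `C₄`-free, the neighbourhood of
a vertex outside `t` contains no two vertices with a common neighbour in `t`. The graph of such
pairs is locally dense, by Cauchy–Schwarz, so the Kleitman–Winston algorithm encloses each of
these neighbourhoods in a container described by a short fingerprint. The containers are light
with respect to the degrees read off the skeleton; hence each remaining edge `(u, v)`, charged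
the number of containers that include `v`, has total charge `O(m ^ 2)`. An exponential moment
bound shows that at most `exp (O(m * √n))` sets of edges satisfy this restriction.
-/

open Finset

section Counting

theorem card_le_card_mul_of_forall_exists_mem {ι γ : Type*} {A : Finset γ} {B : Finset ι}
    {r : ι → Finset γ} {N : ℝ} (hcover : ∀ x ∈ A, ∃ i ∈ B, x ∈ r i)
    (hcard : ∀ i ∈ B, (#(r i) : ℝ) ≤ N) : (#A : ℝ) ≤ #B * N := by
  have hsub : A ⊆ B.biUnion r := fun x hx => mem_biUnion.2 (hcover x hx)
  calc (#A : ℝ) ≤ ∑ i ∈ B, (#(r i) : ℝ) := by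
        exact_mod_cast (card_le_card hsub).trans card_biUnion_le
    _ ≤ #B * N := by
        simpa only [nsmul_eq_mul] using sum_le_card_nsmul B _ N hcard

-- Exponential Markov: a set of weight at most `Q` contributes at least `1` to
-- `exp Q * ∑ G ⊆ P, ∏ e ∈ G, exp (-c e)`, and this sum factors over `e ∈ P`.
theorem card_filter_sum_le_le_exp {γ : Type*} (P : Finset γ) (c : γ → ℝ) (Q : ℝ) :
    (#{G ∈ P.powerset | ∑ e ∈ G, c e ≤ Q} : ℝ) ≤
      Real.exp (Q + ∑ e ∈ P, Real.exp (-c e)) := by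
  have hone (G : Finset γ) (hG : ∑ e ∈ G, c e ≤ Q) :
      1 ≤ Real.exp Q * ∏ e ∈ G, Real.exp (-c e) := by
    rw [← Real.exp_sum, ← Real.exp_add, sum_neg_distrib]
    exact Real.one_le_exp (by linarith)
  calc (#{G ∈ P.powerset | ∑ e ∈ G, c e ≤ Q} : ℝ)
      = ∑ G ∈ P.powerset, if ∑ e ∈ G, c e ≤ Q then 1 else 0 := (sum_boole _ _).symm
    _ ≤ ∑ G ∈ P.powerset, Real.exp Q * ∏ e ∈ G, Real.exp (-c e) := by
        refine sum_le_sum fun G _ => ?_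
        split_ifs with hG
        · exact hone G hG
        · positivity
    _ = Real.exp Q * ∏ e ∈ P, (1 + Real.exp (-c e)) := by rw [← mul_sum, prod_one_add]
    _ ≤ Real.exp Q * ∏ e ∈ P, Real.exp (Real.exp (-c e)) := by
        gcongr with e
        linarith [Real.add_one_le_exp (Real.exp (-c e))]
    _ = Real.exp (Q + ∑ e ∈ P, Real.exp (-c e)) := by rw [Real.exp_add, Real.exp_sum]

theorem card_filter_mul_card_prod_le_le_exp {α β : Type*} [Fintype α] [Fintype β] {c : ℝ}
    (hc : (Fintype.card β : ℝ) ≤ Real.exp c) (Q : ℝ) :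
    (#{F : Finset (α × β) | c * #F ≤ Q} : ℝ) ≤ Real.exp (Q + Fintype.card α) := by
  have hsum : ∑ _e : α × β, Real.exp (-c) ≤ Fintype.card α := by
    rw [sum_const, card_univ, Fintype.card_prod, nsmul_eq_mul, Nat.cast_mul, mul_assoc,
      Real.exp_neg]
    exact mul_le_of_le_one_right (by positivity) (mul_inv_le_one_of_le₀ hc (Real.exp_nonneg c))
  calc (#{F : Finset (α × β) | c * #F ≤ Q} : ℝ)
      ≤ Real.exp (Q + ∑ _e : α × β, Real.exp (-c)) := by
        simpa [mul_comm c] using card_filter_sum_le_le_exp (univ : Finset (α × β)) (fun _ => c) Q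
    _ ≤ Real.exp (Q + Fintype.card α) := by gcongr

end Counting

section Containers

variable {V : Type*} {H : SimpleGraph V} {w : V → ℝ} {W : ℝ} {A : Finset V} {q : ℕ}

/-- `C` is a container map for the independent sets of `H` inside `A`: each of them is covered by
a fingerprint `T` of at most `q` of its own vertices together with `C T`, a set of weight at most
`W`. The container depends on `T` only, so that it can be recovered from the fingerprint. -/
def IsContainerMap (H : SimpleGraph V) (w : V → ℝ) (W : ℝ) (A : Finset V) (q : ℕ)
    (C : Finset V → Finset V) : Prop :=
  ∀ I ⊆ A, H.IsIndepSet I →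
    ∃ T ⊆ I, #T ≤ q ∧ ∑ v ∈ C T, w v ≤ W ∧ I ⊆ T ∪ C T

theorem isContainerMap_const (hA : ∑ v ∈ A, w v ≤ W) : IsContainerMap H w W A q fun _ => A :=
  fun I hI _ => ⟨∅, empty_subset I, by simp, hA, by simpa using hI⟩

-- An independent set either avoids `v`, or contains `v` and hence no neighbour of `v`; which of
-- the two happens can be read off the fingerprint, to which `v` is added in the second case.
theorem IsContainerMap.branch {C₁ C₂ : Finset V → Finset V} (v : V)
    (h₁ : IsContainerMap H w W (A.erase v) (q + 1) C₁)
    (h₂ : IsContainerMap H w W {x ∈ A.erase v | ¬ H.Adj v x} q C₂) :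
    IsContainerMap H w W A (q + 1) fun T => if v ∈ T then C₂ (T.erase v) else C₁ T := by
  intro I hIA hI
  by_cases hvI : v ∈ I
  · have hsub : I.erase v ⊆ {x ∈ A.erase v | ¬ H.Adj v x} := fun x hx => by
      obtain ⟨hxv, hxI⟩ := mem_erase.1 hx
      exact mem_filter.2 ⟨mem_erase.2 ⟨hxv, hIA hxI⟩, hI hvI hxI hxv.symm⟩
    obtain ⟨T, hTI, hTq, hTW, hcover⟩ :=
      h₂ (I.erase v) hsub (hI.mono (coe_subset.2 (erase_subset v I)))
    have hvT : v ∉ T := fun h => notMem_erase v I (hTI h)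
    refine ⟨insert v T, insert_subset hvI (hTI.trans (erase_subset v I)), ?_, ?_, ?_⟩
    · rw [card_insert_of_notMem hvT]
      lia
    · simpa only [mem_insert_self, if_true, erase_insert hvT] using hTW
    · simp only [mem_insert_self, if_true, erase_insert hvT]
      rw [insert_union, ← insert_erase hvI]
      exact insert_subset_insert v hcover
  · have hsub : I ⊆ A.erase v := subset_erase.2 ⟨hIA, hvI⟩
    obtain ⟨T, hTI, hTq, hTW, hcover⟩ := h₁ I hsub hI
    have hvT : v ∉ T := fun h => hvI (hTI h)
    exact ⟨T, hTI, hTq, by simpa only [hvT, if_false] using hTW,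
      by simpa only [hvT, if_false] using hcover⟩

theorem card_filter_not_adj_le {δ : ℝ} {v : V} (hv : δ * #A ≤ #{x ∈ A | H.Adj v x}) :
    (#{x ∈ A.erase v | ¬ H.Adj v x} : ℝ) ≤ #A * Real.exp (-δ) := by
  have hsplit : #{x ∈ A | H.Adj v x} + #{x ∈ A.erase v | ¬ H.Adj v x} ≤ #A := by
    rw [← card_filter_add_card_filter_not (s := A) (H.Adj v)]
    gcongr
    exact erase_subset v A
  have hsplit' : (#{x ∈ A | H.Adj v x} + #{x ∈ A.erase v | ¬ H.Adj v x} : ℝ) ≤ #A := by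
    exact_mod_cast hsplit
  calc (#{x ∈ A.erase v | ¬ H.Adj v x} : ℝ) ≤ #A * (-δ + 1) := by linarith
    _ ≤ #A * Real.exp (-δ) := by gcongr; exact Real.add_one_le_exp (-δ)

-- The Kleitman–Winston algorithm: every fingerprint vertex shrinks the candidate set by a factor
-- `exp (-δ)`, until the candidate set is light enough to serve as a container.
theorem exists_isContainerMap {δ : ℝ} (hq : (#A : ℝ) < Real.exp (δ * q))
    (hdense : ∀ A' ⊆ A, W < ∑ v ∈ A', w v → ∃ v ∈ A', δ * #A' ≤ #{x ∈ A' | H.Adj v x}) :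
    ∃ C, IsContainerMap H w W A q C := by
  induction A using Finset.strongInduction generalizing q with
  | H A ih =>
  rcases le_or_gt (∑ v ∈ A, w v) W with hlight | hheavy
  · exact ⟨_, isContainerMap_const hlight⟩
  obtain ⟨v, hvA, hv⟩ := hdense A subset_rfl hheavy
  cases q with
  | zero =>
    have hcard : #A < 1 := by simpa using hq
    exact absurd (card_pos.2 ⟨v, hvA⟩) (by lia)
  | succ q =>
    have herase : A.erase v ⊂ A := erase_ssubset hvA
    have hcard₂ : (#{x ∈ A.erase v | ¬ H.Adj v x} : ℝ) < Real.exp (δ * q) :=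
      calc (#{x ∈ A.erase v | ¬ H.Adj v x} : ℝ) ≤ #A * Real.exp (-δ) := card_filter_not_adj_le hv
        _ < Real.exp (δ * (q + 1 : ℕ)) * Real.exp (-δ) := by gcongr
        _ = Real.exp (δ * q) := by rw [← Real.exp_add]; push_cast; ring_nf
    have hcard₁ : (#(A.erase v) : ℝ) < Real.exp (δ * (q + 1 : ℕ)) :=
      lt_of_le_of_lt (by gcongr) hq
    obtain ⟨C₁, hC₁⟩ := ih _ herase hcard₁ fun A' hA' => hdense A' (hA'.trans herase.1)
    have hfilter : {x ∈ A.erase v | ¬ H.Adj v x} ⊂ A := (filter_subset _ _).trans_ssubset herase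
    obtain ⟨C₂, hC₂⟩ := ih _ hfilter hcard₂ fun A' hA' => hdense A' (hA'.trans hfilter.1)
    exact ⟨_, hC₁.branch v hC₂⟩

end Containers

section C4Free

variable {α β : Type*}

/-- `E`, viewed as the edge set of a bipartite graph with parts `α` and `β`, contains no `C₄`. -/
def IsC4Free (E : Finset (α × β)) : Prop :=
  ∀ ⦃u u' v v'⦄, (u, v) ∈ E → (u, v') ∈ E → (u', v) ∈ E → (u', v') ∈ E → u = u' ∨ v = v'

theorem IsC4Free.mono {E F : Finset (α × β)} (hE : IsC4Free E) (hFE : F ⊆ E) : IsC4Free F :=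
  fun _ _ _ _ h₁ h₂ h₃ h₄ => hE (hFE h₁) (hFE h₂) (hFE h₃) (hFE h₄)

/-- The neighbourhood in `α` of a vertex `v : β`. -/
noncomputable def leftNbrs [Fintype α] (E : Finset (α × β)) (v : β) : Finset α :=
  {u | (u, v) ∈ E}

/-- The neighbourhood in `β` of a vertex `u : α`. -/
noncomputable def rightNbrs [Fintype β] (E : Finset (α × β)) (u : α) : Finset β :=
  {v | (u, v) ∈ E}

@[simp]
theorem mem_leftNbrs [Fintype α] {E : Finset (α × β)} {u : α} {v : β} :
    u ∈ leftNbrs E v ↔ (u, v) ∈ E := by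
  simp [leftNbrs]

@[simp]
theorem mem_rightNbrs [Fintype β] {E : Finset (α × β)} {u : α} {v : β} :
    v ∈ rightNbrs E u ↔ (u, v) ∈ E := by
  simp [rightNbrs]

/-- Two vertices of `β` are adjacent when they have a common neighbour in `t`. The neighbourhood
of a vertex outside `t` is independent in this graph if the bipartite graph is `C₄`-free. -/
def commonNbrGraph (t : Finset α) (F : Finset (α × β)) : SimpleGraph β where
  Adj v v' := v ≠ v' ∧ ∃ u ∈ t, (u, v) ∈ F ∧ (u, v') ∈ F
  symm := ⟨fun _ _ ⟨hne, u, hu, h, h'⟩ => ⟨hne.symm, u, hu, h', h⟩⟩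
  loopless := ⟨fun _ h => h.1 rfl⟩

theorem IsC4Free.isIndepSet_commonNbrGraph {t : Finset α} {E F : Finset (α × β)} {u : α}
    {I : Finset β} (hE : IsC4Free E) (hFE : F ⊆ E) (hu : u ∉ t) (hI : ∀ v ∈ I, (u, v) ∈ E) :
    (commonNbrGraph t F).IsIndepSet I := by
  rintro v hv v' hv' hne ⟨-, u', hu', h, h'⟩
  rcases hE (hI v hv) (hI v' hv') (hFE h) (hFE h') with rfl | rfl
  · exact hu hu'
  · exact hne rfl

theorem sum_eq_sum_leftNbrs [Fintype α] [Fintype β] (E : Finset (α × β)) (f : α × β → ℝ) :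
    ∑ e ∈ E, f e = ∑ v, ∑ u ∈ leftNbrs E v, f (u, v) :=
  sum_finset_product_right _ _ _ (by simp)

theorem sum_eq_sum_rightNbrs [Fintype α] [Fintype β] (E : Finset (α × β)) (f : α × β → ℝ) :
    ∑ e ∈ E, f e = ∑ u, ∑ v ∈ rightNbrs E u, f (u, v) :=
  sum_finset_product _ _ _ (by simp)

theorem sum_snd_eq_sum_card_leftNbrs_mul [Fintype α] [Fintype β] (E : Finset (α × β))
    (f : β → ℝ) : ∑ e ∈ E, f e.2 = ∑ v, #(leftNbrs E v) * f v := by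
  simp [sum_eq_sum_leftNbrs]

theorem card_eq_sum_card_leftNbrs [Fintype α] [Fintype β] (E : Finset (α × β)) :
    (#E : ℝ) = ∑ v, (#(leftNbrs E v) : ℝ) := by
  simpa using sum_snd_eq_sum_card_leftNbrs_mul E fun _ => 1

theorem card_filter_snd_mem [Fintype α] (E : Finset (α × β)) (B : Finset β) :
    (#{e ∈ E | e.2 ∈ B} : ℝ) = ∑ v ∈ B, (#(leftNbrs E v) : ℝ) := by
  simp only [cast_card]
  exact sum_finset_product_right _ _ _ (by simp [and_comm])

theorem sum_card_inter_leftNbrs [Fintype α] (E : Finset (α × β)) (t : Finset α) (A : Finset β) :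
    ∑ v ∈ A, (#(t ∩ leftNbrs E v) : ℝ) = ∑ u ∈ t, (#{v ∈ A | (u, v) ∈ E} : ℝ) := by
  have h := sum_card_bipartiteAbove_eq_sum_card_bipartiteBelow
    (fun u v => (u, v) ∈ E) (s := t) (t := A)
  simp only [bipartiteAbove, bipartiteBelow] at h
  simp only [← filter_mem_eq_inter, mem_leftNbrs]
  exact_mod_cast h.symm

-- The sets `S i` share no pair of distinct elements, so their pairs can be counted in the union.
theorem sq_sum_card_le_card_mul_card_biUnion_offDiag {ι γ : Type*} {t : Finset ι}
    {S : ι → Finset γ} (hS : (t : Set ι).Pairwise fun i j => #(S i ∩ S j) ≤ 1) :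
    (∑ i ∈ t, (#(S i) : ℝ)) ^ 2 ≤
      #t * (#(t.biUnion fun i => (S i).offDiag) + ∑ i ∈ t, (#(S i) : ℝ)) := by
  have hdisj : (t : Set ι).PairwiseDisjoint fun i => (S i).offDiag := by
    refine fun i hi j hj hij => disjoint_left.2 fun x hxi hxj => ?_
    simp only [mem_offDiag] at hxi hxj
    exact hxi.2.2 (card_le_one.1 (hS hi hj hij) _ (mem_inter.2 ⟨hxi.1, hxj.1⟩) _
      (mem_inter.2 ⟨hxi.2.1, hxj.2.1⟩))
  have hsq (i : ι) : (#(S i) : ℝ) ^ 2 = #(S i).offDiag + #(S i) := by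
    rw [offDiag_card, Nat.cast_sub (Nat.le_mul_self _)]
    push_cast
    ring
  rw [card_biUnion hdisj, Nat.cast_sum, ← sum_add_distrib]
  simp only [← hsq]
  exact sq_sum_le_card_mul_sum_sq

theorem IsC4Free.card_leftNbrs_inter_le_one [Fintype α] {E : Finset (α × β)} (hE : IsC4Free E)
    {v v' : β} (hv : v ≠ v') : #(leftNbrs E v ∩ leftNbrs E v') ≤ 1 := by
  refine card_le_one.2 fun u hu u' hu' => ?_
  simp only [mem_inter, mem_leftNbrs] at hu hu'
  exact (hE hu.1 hu.2 hu'.1 hu'.2).resolve_right hv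

theorem IsC4Free.card_filter_inter_filter_le_one {E : Finset (α × β)} (hE : IsC4Free E)
    (A : Finset β) {u u' : α} (hu : u ≠ u') :
    #({v ∈ A | (u, v) ∈ E} ∩ {v ∈ A | (u', v) ∈ E}) ≤ 1 := by
  refine card_le_one.2 fun v hv v' hv' => ?_
  simp only [mem_inter, mem_filter] at hv hv'
  exact (hE hv.1.2 hv'.1.2 hv.2.2 hv'.2.2).resolve_left hu

theorem IsC4Free.card_le [Fintype α] [Fintype β] {E : Finset (α × β)} (hE : IsC4Free E) :
    (#E : ℝ) ≤ Fintype.card α * √(Fintype.card β) + Fintype.card β := by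
  have hpairs : #(univ.biUnion fun v => (leftNbrs E v).offDiag) ≤
      Fintype.card α * Fintype.card α :=
    (card_le_univ _).trans_eq (Fintype.card_prod α α)
  have hpairs' : (#(univ.biUnion fun v => (leftNbrs E v).offDiag) : ℝ) ≤
      Fintype.card α * Fintype.card α := by exact_mod_cast hpairs
  have hsq : (#E : ℝ) ^ 2 ≤ Fintype.card β * (Fintype.card α * Fintype.card α + #E) := by
    have h := sq_sum_card_le_card_mul_card_biUnion_offDiag (t := univ) (S := leftNbrs E)
      fun v _ v' _ hv => hE.card_leftNbrs_inter_le_one hv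
    rw [← card_eq_sum_card_leftNbrs, card_univ] at h
    exact h.trans (by gcongr)
  have hsqrt : √(Fintype.card β : ℝ) ^ 2 = Fintype.card β := Real.sq_sqrt (by positivity)
  have hms : 0 ≤ Fintype.card α * √(Fintype.card β : ℝ) := by positivity
  by_contra! hlt
  nlinarith

theorem card_biUnion_offDiag_le_sum_card_adj (F : Finset (α × β)) (t : Finset α) (A : Finset β) :
    #(t.biUnion fun u => {v ∈ A | (u, v) ∈ F}.offDiag) ≤
      ∑ v ∈ A, #{v' ∈ A | (commonNbrGraph t F).Adj v v'} := by
  rw [← card_sigma]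
  refine card_le_card_of_injOn (fun x => ⟨x.1, x.2⟩) (fun x hx => ?_) fun x _ y _ h => ?_
  · simp only [coe_biUnion, Set.mem_iUnion, mem_coe, mem_offDiag, mem_filter, exists_prop] at hx
    obtain ⟨u, hu, ⟨hA, hF⟩, ⟨hA', hF'⟩, hne⟩ := hx
    simpa using ⟨hA, hA', hne, u, hu, hF, hF'⟩
  · simpa [Prod.ext_iff] using h

-- Cauchy–Schwarz: heavy sets `A` span so many pairs with a common neighbour in `t` that some
-- vertex has large degree.
theorem IsC4Free.exists_card_adj_ge [Fintype α] {F : Finset (α × β)} (hF : IsC4Free F)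
    {t : Finset α} {A : Finset β} {d δ : ℝ} (hd : 0 ≤ d)
    (hdeg : ∀ v ∈ A, d ≤ #(t ∩ leftNbrs F v)) (hδ : 2 * #t * δ ≤ d ^ 2)
    (hheavy : 2 * (#t : ℝ) < ∑ v ∈ A, (#(t ∩ leftNbrs F v) : ℝ)) :
    ∃ v ∈ A, δ * #A ≤ #{v' ∈ A | (commonNbrGraph t F).Adj v v'} := by
  set weight := ∑ v ∈ A, (#(t ∩ leftNbrs F v) : ℝ) with hweight
  set pairs := ∑ v ∈ A, (#{v' ∈ A | (commonNbrGraph t F).Adj v v'} : ℝ) with hpairs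
  have hsq : weight ^ 2 ≤ #t * (pairs + weight) := by
    have h := sq_sum_card_le_card_mul_card_biUnion_offDiag (t := t)
      (S := fun u => {v ∈ A | (u, v) ∈ F})
      fun u _ u' _ hu => hF.card_filter_inter_filter_le_one A hu
    rw [← sum_card_inter_leftNbrs, ← hweight] at h
    refine h.trans ?_
    rw [hpairs]
    gcongr
    exact_mod_cast card_biUnion_offDiag_le_sum_card_adj F t A
  have ht : 0 ≤ (#t : ℝ) := by positivity
  have hdA : d * #A ≤ weight := by
    simpa [mul_comm] using card_nsmul_le_sum A _ d hdeg
  have hne : A.Nonempty := nonempty_of_sum_ne_zero (by linarith : weight ≠ 0)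
  by_contra! hsparse
  have hfew : pairs < δ * #A ^ 2 :=
    calc pairs < ∑ _v ∈ A, δ * #A := sum_lt_sum_of_nonempty hne hsparse
      _ = δ * #A ^ 2 := by simp; ring
  have hle : weight ^ 2 ≤ 2 * #t * pairs := by nlinarith
  have hge : 2 * #t * (δ * #A ^ 2) ≤ weight ^ 2 :=
    calc 2 * #t * (δ * #A ^ 2) = 2 * #t * δ * #A ^ 2 := by ring
      _ ≤ d ^ 2 * #A ^ 2 := by gcongr
      _ = (d * #A) ^ 2 := by ring
      _ ≤ weight ^ 2 := by gcongr
  have htpos : 0 < (#t : ℝ) := ht.lt_of_ne fun h => by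
    rw [← h] at hsq hheavy
    nlinarith
  exact (hge.trans hle).not_gt (mul_lt_mul_of_pos_left hfew (mul_pos two_pos htpos))

end C4Free

section Sampling

variable {α β : Type*} [Fintype α]

/-- The probability of `t` when every element of `α` is selected independently with
probability `p`. -/
noncomputable def subsetWeight (p : ℝ) (t : Finset α) : ℝ := p ^ #t * (1 - p) ^ #tᶜ

theorem subsetWeight_nonneg {p : ℝ} (hp₀ : 0 ≤ p) (hp₁ : p ≤ 1) (t : Finset α) :
    0 ≤ subsetWeight p t := by
  have := sub_nonneg.2 hp₁
  unfold subsetWeight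
  positivity

theorem sum_subsetWeight_mul_ite_subset (p : ℝ) (S : Finset α) :
    ∑ t, subsetWeight p t * (if S ⊆ t then 1 else 0) = p ^ #S := by
  have hcompl (t : Finset α) : ∏ i ∈ tᶜ, (if i ∈ S then 0 else 1 - p) =
      (1 - p) ^ #tᶜ * (if S ⊆ t then 1 else 0) := by
    split_ifs with hSt
    · rw [mul_one, ← prod_const]
      exact prod_congr rfl fun i hi => if_neg fun hiS => mem_compl.1 hi (hSt hiS)
    · obtain ⟨i, hiS, hit⟩ := not_subset.1 hSt
      rw [mul_zero]
      exact prod_eq_zero (mem_compl.2 hit) (if_pos hiS)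
  calc ∑ t, subsetWeight p t * (if S ⊆ t then 1 else 0)
      = ∑ t, (∏ _i ∈ t, p) * ∏ i ∈ tᶜ, (if i ∈ S then 0 else 1 - p) := by
        simp only [hcompl, subsetWeight, prod_const, mul_assoc]
    _ = ∏ i, (p + if i ∈ S then 0 else 1 - p) := (Fintype.prod_add _ _).symm
    _ = ∏ i, if i ∈ S then p else 1 := by
        refine prod_congr rfl fun i _ => ?_
        split_ifs <;> ring
    _ = p ^ #S := by rw [prod_ite_mem, univ_inter, prod_const]

theorem sum_subsetWeight (p : ℝ) : ∑ t : Finset α, subsetWeight p t = 1 := by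
  simpa using sum_subsetWeight_mul_ite_subset p (∅ : Finset α)

theorem sum_subsetWeight_mul_ite_mem (p : ℝ) (u : α) :
    ∑ t, subsetWeight p t * (if u ∈ t then 1 else 0) = p := by
  simpa using sum_subsetWeight_mul_ite_subset p {u}

theorem sum_subsetWeight_mul_card_filter_mem {γ : Type*} (p : ℝ) (A : Finset γ) (f : γ → α) :
    ∑ t, subsetWeight p t * #{x ∈ A | f x ∈ t} = p * #A := by
  simp only [← sum_boole, mul_sum]
  rw [sum_comm]
  simp only [sum_subsetWeight_mul_ite_mem, sum_const, nsmul_eq_mul]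
  ring

theorem sum_subsetWeight_mul_card_inter (p : ℝ) (N : Finset α) :
    ∑ t, subsetWeight p t * #(t ∩ N) = p * #N := by
  simpa only [id, inter_comm, filter_mem_eq_inter] using
    sum_subsetWeight_mul_card_filter_mem p N id

theorem sum_subsetWeight_mul_card_inter_sq_le (p : ℝ) (N : Finset α) :
    ∑ t, subsetWeight p t * (#(t ∩ N) : ℝ) ^ 2 ≤ p * #N + p ^ 2 * #N ^ 2 := by
  have hsq (t : Finset α) : (#(t ∩ N) : ℝ) ^ 2 =
      ∑ u ∈ N, ∑ u' ∈ N, if {u, u'} ⊆ t then 1 else 0 := by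
    rw [inter_comm, ← filter_mem_eq_inter, ← sum_boole, sq, sum_mul_sum]
    simp only [insert_subset_iff, singleton_subset_iff, ite_and, ite_mul, one_mul, zero_mul]
  calc ∑ t, subsetWeight p t * (#(t ∩ N) : ℝ) ^ 2
      = ∑ u ∈ N, ∑ u' ∈ N, p ^ #{u, u'} := by
        simp only [hsq, mul_sum, ← sum_subsetWeight_mul_ite_subset]
        rw [sum_comm]
        exact sum_congr rfl fun u _ => sum_comm
    _ ≤ ∑ u ∈ N, ∑ u' ∈ N, ((if u = u' then p else 0) + p ^ 2) := by
        refine sum_le_sum fun u _ => sum_le_sum fun u' _ => ?_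
        split_ifs with h
        · simp [h, sq_nonneg]
        · simp [card_pair h]
    _ = p * #N + p ^ 2 * #N ^ 2 := by
        simp only [sum_add_distrib, sum_ite_eq, sum_ite_mem, inter_self, sum_const, nsmul_eq_mul]
        ring

theorem sum_subsetWeight_mul_sq_card_inter_sub_le (p : ℝ) (N : Finset α) :
    ∑ t, subsetWeight p t * (#(t ∩ N) - p * #N : ℝ) ^ 2 ≤ p * #N := by
  have hexpand (t : Finset α) : subsetWeight p t * (#(t ∩ N) - p * #N : ℝ) ^ 2 =
      subsetWeight p t * (#(t ∩ N) : ℝ) ^ 2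
        - 2 * p * #N * (subsetWeight p t * #(t ∩ N)) + p ^ 2 * #N ^ 2 * subsetWeight p t := by
    ring
  simp only [hexpand, sum_add_distrib, sum_sub_distrib, ← mul_sum, sum_subsetWeight,
    sum_subsetWeight_mul_card_inter]
  linarith [sum_subsetWeight_mul_card_inter_sq_le p N]

-- Chebyshev's inequality: `#(t ∩ N)` has mean `p * #N` and variance at most `p * #N`.
theorem sum_subsetWeight_mul_ite_card_inter_lt_le {p : ℝ} (hp₀ : 0 < p) (hp₁ : p ≤ 1)
    (N : Finset α) :
    ∑ t, subsetWeight p t * (if (#(t ∩ N) : ℝ) < p / 2 * #N then (#N : ℝ) else 0) ≤ 4 / p := by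
  rcases N.eq_empty_or_nonempty with rfl | hN
  · simp only [card_empty, Nat.cast_zero, ite_self, mul_zero, sum_const_zero]
    positivity
  have : 0 < (#N : ℝ) := by exact_mod_cast hN.card_pos
  have hpoint (t : Finset α) : (if (#(t ∩ N) : ℝ) < p / 2 * #N then (#N : ℝ) else 0) ≤
      4 / (p ^ 2 * #N) * (#(t ∩ N) - p * #N : ℝ) ^ 2 := by
    split_ifs with h
    · have hdev : (p / 2 * #N) ^ 2 ≤ (#(t ∩ N) - p * #N : ℝ) ^ 2 := by
        rw [sub_sq_comm]
        gcongr
        linarith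
      calc (#N : ℝ) = 4 / (p ^ 2 * #N) * (p / 2 * #N) ^ 2 := by field_simp; norm_num
        _ ≤ 4 / (p ^ 2 * #N) * (#(t ∩ N) - p * #N : ℝ) ^ 2 := by gcongr
    · positivity
  calc ∑ t, subsetWeight p t * (if (#(t ∩ N) : ℝ) < p / 2 * #N then (#N : ℝ) else 0)
      ≤ ∑ t, 4 / (p ^ 2 * #N) * (subsetWeight p t * (#(t ∩ N) - p * #N : ℝ) ^ 2) := by
        refine sum_le_sum fun t _ => ?_
        rw [mul_left_comm]
        exact mul_le_mul_of_nonneg_left (hpoint t) (subsetWeight_nonneg hp₀.le hp₁ t)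
    _ ≤ 4 / (p ^ 2 * #N) * (p * #N) := by
        rw [← mul_sum]
        gcongr
        exact sum_subsetWeight_mul_sq_card_inter_sub_le p N
    _ = 4 / p := by field_simp

theorem exists_le_sum_mul_of_sum_eq_one {ι : Type*} [Fintype ι] {w : ι → ℝ} (hw₀ : ∀ i, 0 ≤ w i)
    (hw₁ : ∑ i, w i = 1) (f : ι → ℝ) : ∃ i, f i ≤ ∑ j, w j * f j := by
  have hpos : 0 < ∑ i, w i := by rw [hw₁]; exact one_pos
  have hle := inf_le_centerMass (f := f) (fun i _ => hw₀ i) hpos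
  obtain ⟨i, -, hi⟩ := exists_mem_eq_inf' (nonempty_of_sum_ne_zero hpos.ne') f
  rw [hi, centerMass_eq_of_sum_1 _ _ hw₁] at hle
  exact ⟨i, hle⟩

theorem exists_le_three_mul_of_sum_mul_le {ι : Type*} [Fintype ι] {w : ι → ℝ}
    (hw₀ : ∀ i, 0 ≤ w i) (hw₁ : ∑ i, w i = 1) {f g h : ι → ℝ} {a b c : ℝ}
    (hf₀ : ∀ i, 0 ≤ f i) (hg₀ : ∀ i, 0 ≤ g i) (hh₀ : ∀ i, 0 ≤ h i)
    (ha : 0 < a) (hb : 0 < b) (hc : 0 < c)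
    (hf : ∑ i, w i * f i ≤ a) (hg : ∑ i, w i * g i ≤ b) (hh : ∑ i, w i * h i ≤ c) :
    ∃ i, f i ≤ 3 * a ∧ g i ≤ 3 * b ∧ h i ≤ 3 * c := by
  obtain ⟨i, hi⟩ := exists_le_sum_mul_of_sum_eq_one hw₀ hw₁ fun i => f i / a + g i / b + h i / c
  have hmean : ∑ j, w j * (f j / a + g j / b + h j / c) ≤ 3 := by
    simp only [mul_add, sum_add_distrib, ← mul_div_assoc, ← sum_div]
    linarith [(div_le_one ha).2 hf, (div_le_one hb).2 hg, (div_le_one hc).2 hh]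
  have hfa := div_nonneg (hf₀ i) ha.le
  have hgb := div_nonneg (hg₀ i) hb.le
  have hhc := div_nonneg (hh₀ i) hc.le
  refine ⟨i, ?_, ?_, ?_⟩ <;> rw [← div_le_iff₀ (by assumption)] <;> linarith

variable [Fintype β]

/-- The vertices of `β` with fewer than half the expected number of neighbours in `t`, when `t` is
sampled with density `p`. -/
noncomputable def undersampled (p : ℝ) (t : Finset α) (E : Finset (α × β)) : Finset β :=
  {v | (#(t ∩ leftNbrs E v) : ℝ) < p / 2 * #(leftNbrs E v)}

theorem sum_subsetWeight_mul_sum_undersampled_le {p : ℝ} (hp₀ : 0 < p) (hp₁ : p ≤ 1)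
    (E : Finset (α × β)) :
    ∑ t, subsetWeight p t * ∑ v ∈ undersampled p t E, (#(leftNbrs E v) : ℝ) ≤
      Fintype.card β * (4 / p) := by
  simp only [undersampled, sum_filter, mul_sum]
  rw [sum_comm, ← nsmul_eq_mul, ← card_univ, ← sum_const]
  exact sum_le_sum fun v _ => sum_subsetWeight_mul_ite_card_inter_lt_le hp₀ hp₁ (leftNbrs E v)

theorem exists_sample {p : ℝ} (hp₀ : 0 < p) (hp₁ : p ≤ 1) (E : Finset (α × β)) :
    ∃ t : Finset α, (#t : ℝ) ≤ 3 * (p * Fintype.card α) ∧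
      (#{e ∈ E | e.1 ∈ t} : ℝ) ≤ 3 * (p * #E) ∧
      ∑ v ∈ undersampled p t E, (#(leftNbrs E v) : ℝ) ≤ 3 * (Fintype.card β * (4 / p)) := by
  rcases E.eq_empty_or_nonempty with rfl | hE
  · refine ⟨∅, ?_, ?_, ?_⟩
    · rw [card_empty, Nat.cast_zero]
      positivity
    · simp
    · simp only [leftNbrs, notMem_empty, filter_false, card_empty, Nat.cast_zero, sum_const_zero]
      positivity
  have hcard : 0 < (#E : ℝ) := by exact_mod_cast hE.card_pos
  obtain ⟨⟨u, v⟩, -⟩ := hE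
  have hα : 0 < (Fintype.card α : ℝ) := by exact_mod_cast Fintype.card_pos_iff.2 ⟨u⟩
  have hβ : 0 < (Fintype.card β : ℝ) := by exact_mod_cast Fintype.card_pos_iff.2 ⟨v⟩
  have hsize : ∑ t : Finset α, subsetWeight p t * #t = p * Fintype.card α := by
    simpa using sum_subsetWeight_mul_card_inter p (univ : Finset α)
  exact exists_le_three_mul_of_sum_mul_le (subsetWeight_nonneg hp₀.le hp₁) (sum_subsetWeight p)
    (fun _ => by positivity) (fun _ => by positivity) (fun _ => by positivity)
    (by positivity) (by positivity) (by positivity) hsize.le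
    (sum_subsetWeight_mul_card_filter_mem p E Prod.fst).le
    (sum_subsetWeight_mul_sum_undersampled_le hp₀ hp₁ E)

end Sampling

section Skeleton

variable {α β : Type*} [Fintype α] [Fintype β] {K : ℝ} {t : Finset α} {W : Finset β}
  {E F : Finset (α × β)}

/-- `F` consists of the edges of `E` that meet the sample `t` or avoid the set `W` of typical
vertices. The sample has density of order `1 / K`, and it determines the degree of each typical
vertex up to a factor `2 * K`. -/
structure IsSkeleton (K : ℝ) (t : Finset α) (W : Finset β) (F E : Finset (α × β)) : Prop where
  card_sample_le : #t * K ≤ 3 * Fintype.card α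
  filter_eq : {e ∈ E | e.1 ∈ t ∨ e.2 ∉ W} = F
  card_leftNbrs_le : ∀ v ∈ W, (#(leftNbrs E v) : ℝ) ≤ 2 * K * #(t ∩ leftNbrs F v)
  le_card_inter : ∀ v ∈ W,
    Fintype.card α / (2 * √(Fintype.card β) * K ^ 2) ≤ #(t ∩ leftNbrs F v)

theorem IsSkeleton.subset (h : IsSkeleton K t W F E) : F ⊆ E :=
  h.filter_eq ▸ filter_subset _ _

/-- The vertices of `β` that are not undersampled by `t` and have degree at least `d`. -/
noncomputable def typical (p d : ℝ) (t : Finset α) (E : Finset (α × β)) : Finset β :=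
  {v ∈ (undersampled p t E)ᶜ | d ≤ #(leftNbrs E v)}

theorem card_filter_snd_notMem_typical_le {p d : ℝ} (hd : 0 ≤ d) (t : Finset α)
    (E : Finset (α × β)) :
    (#{e ∈ E | e.2 ∉ typical p d t E} : ℝ) ≤
      ∑ v ∈ undersampled p t E, (#(leftNbrs E v) : ℝ) + Fintype.card β * d := by
  have hpoint (v : β) : (if v ∈ (typical p d t E)ᶜ then (#(leftNbrs E v) : ℝ) else 0) ≤
      (if v ∈ undersampled p t E then (#(leftNbrs E v) : ℝ) else 0) + d := by
    by_cases hv : v ∈ undersampled p t E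
    · split_ifs <;> linarith [(#(leftNbrs E v)).cast_nonneg (α := ℝ)]
    · by_cases hdeg : d ≤ #(leftNbrs E v)
      · simpa [typical, hv, hdeg] using hd
      · simpa [typical, hv, hdeg] using (not_le.1 hdeg).le
  simp only [← mem_compl (s := typical p d t E), card_filter_snd_mem]
  calc ∑ v ∈ (typical p d t E)ᶜ, (#(leftNbrs E v) : ℝ)
      = ∑ v, if v ∈ (typical p d t E)ᶜ then (#(leftNbrs E v) : ℝ) else 0 := by
        rw [sum_ite_mem, univ_inter]
    _ ≤ ∑ v, ((if v ∈ undersampled p t E then (#(leftNbrs E v) : ℝ) else 0) + d) :=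
        sum_le_sum fun v _ => hpoint v
    _ = ∑ v ∈ undersampled p t E, (#(leftNbrs E v) : ℝ) + Fintype.card β * d := by
        rw [sum_add_distrib, sum_ite_mem, univ_inter, sum_const, nsmul_eq_mul, card_univ]

theorem isSkeleton_typical (hK : 0 < K) (ht : #t * K ≤ 3 * Fintype.card α) (E : Finset (α × β)) :
    IsSkeleton K t (typical (1 / K) (Fintype.card α / (√(Fintype.card β) * K)) t E)
      {e ∈ E | e.1 ∈ t ∨ e.2 ∉ typical (1 / K) (Fintype.card α / (√(Fintype.card β) * K)) t E}
      E := by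
  set W := typical (1 / K) (Fintype.card α / (√(Fintype.card β) * K)) t E with hW
  have hinter (v : β) : t ∩ leftNbrs {e ∈ E | e.1 ∈ t ∨ e.2 ∉ W} v = t ∩ leftNbrs E v := by
    ext u
    simp only [mem_inter, mem_leftNbrs, mem_filter]
    tauto
  have hsampled (v : β) (hv : v ∈ W) :
      (#(leftNbrs E v) : ℝ) ≤ 2 * K * #(t ∩ leftNbrs E v) := by
    simp only [hW, typical, undersampled, mem_filter, mem_compl, mem_univ, true_and, not_lt] at hv
    calc (#(leftNbrs E v) : ℝ) = 2 * K * (1 / K / 2 * #(leftNbrs E v)) := by field_simp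
      _ ≤ 2 * K * #(t ∩ leftNbrs E v) := by gcongr; exact hv.1
  refine ⟨ht, rfl, fun v hv => (hinter v).symm ▸ hsampled v hv, fun v hv => ?_⟩
  have hdeg : Fintype.card α / (√(Fintype.card β) * K) ≤ #(leftNbrs E v) := (mem_filter.1 hv).2
  rw [hinter]
  calc (Fintype.card α : ℝ) / (2 * √(Fintype.card β) * K ^ 2)
      = Fintype.card α / (√(Fintype.card β) * K) / (2 * K) := by rw [div_div]; ring_nf
    _ ≤ #(t ∩ leftNbrs E v) := by
        rw [div_le_iff₀' (by positivity)]
        exact hdeg.trans (hsampled v hv)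

theorem IsC4Free.exists_isSkeleton (hE : IsC4Free E) (hK : 1 ≤ K) :
    ∃ t W F, IsSkeleton K t W F E ∧
      K * #F ≤ 4 * (Fintype.card α * √(Fintype.card β)) + 15 * (K ^ 2 * Fintype.card β) := by
  have hKpos : 0 < K := by linarith
  obtain ⟨t, ht, htE, hunder⟩ := exists_sample (one_div_pos.2 hKpos) ((div_le_one hKpos).2 hK) E
  set d : ℝ := Fintype.card α / (√(Fintype.card β) * K) with hd
  have hcard : #t * K ≤ 3 * Fintype.card α := by
    calc #t * K ≤ 3 * (1 / K * Fintype.card α) * K := by gcongr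
      _ = 3 * Fintype.card α := by field_simp
  refine ⟨t, _, _, isSkeleton_typical hKpos hcard E, ?_⟩
  have hunion : (#{e ∈ E | e.1 ∈ t ∨ e.2 ∉ typical (1 / K) d t E} : ℝ) ≤
      #{e ∈ E | e.1 ∈ t} + #{e ∈ E | e.2 ∉ typical (1 / K) d t E} := by
    rw [filter_or]
    exact_mod_cast card_union_le _ _
  have hlow : K * (Fintype.card β * d) = Fintype.card α * √(Fintype.card β) :=
    calc K * (Fintype.card β * d) = Fintype.card α * (Fintype.card β / √(Fintype.card β)) := by
          rw [hd]
          field_simp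
      _ = Fintype.card α * √(Fintype.card β) := by rw [Real.div_sqrt]
  have hβK : (Fintype.card β : ℝ) ≤ K ^ 2 * Fintype.card β :=
    le_mul_of_one_le_left (by positivity) (one_le_pow₀ hK)
  calc K * #{e ∈ E | e.1 ∈ t ∨ e.2 ∉ typical (1 / K) d t E}
      ≤ K * (3 * (1 / K * #E) + (3 * (Fintype.card β * (4 / (1 / K))) + Fintype.card β * d)) := by
        gcongr
        linarith [card_filter_snd_notMem_typical_le (p := 1 / K) (d := d) (by positivity) t E]
    _ = 3 * #E + 12 * (K ^ 2 * Fintype.card β) + K * (Fintype.card β * d) := by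
        field_simp
        ring
    _ ≤ _ := by
        rw [hlow]
        linarith [hE.card_le]

end Skeleton

section Completions

variable {α β : Type*} [Fintype α] [Fintype β] {K : ℝ} {t : Finset α} {W : Finset β}
  {E F T : Finset (α × β)} {q : ℕ} {C : Finset β → Finset β}

theorem card_filter_sum_card_leftNbrs_le_le_exp (P : Finset (α × β)) {c : ℝ} (hc : 0 < c)
    (Q : ℝ) :
    (#{G ∈ P.powerset | ∑ e ∈ G, (#(leftNbrs P e.2) : ℝ) ≤ Q} : ℝ) ≤
      Real.exp (c * Q + Fintype.card β / c) := by
  have hexp (x : ℝ) : x * Real.exp (-(c * x)) ≤ 1 / c := by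
    rw [Real.exp_neg, ← div_eq_mul_inv, div_le_div_iff₀ (Real.exp_pos _) hc]
    linarith [Real.add_one_le_exp (c * x)]
  have hsum : ∑ e ∈ P, Real.exp (-(c * #(leftNbrs P e.2))) ≤ Fintype.card β / c :=
    calc ∑ e ∈ P, Real.exp (-(c * #(leftNbrs P e.2)))
        = ∑ v, #(leftNbrs P v) * Real.exp (-(c * #(leftNbrs P v))) :=
          sum_snd_eq_sum_card_leftNbrs_mul P fun v => Real.exp (-(c * #(leftNbrs P v)))
      _ ≤ ∑ _v : β, 1 / c := sum_le_sum fun v _ => hexp _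
      _ = Fintype.card β / c := by simp [div_eq_mul_inv]
  calc (#{G ∈ P.powerset | ∑ e ∈ G, (#(leftNbrs P e.2) : ℝ) ≤ Q} : ℝ)
      = #{G ∈ P.powerset | ∑ e ∈ G, c * (#(leftNbrs P e.2) : ℝ) ≤ c * Q} := by
        simp only [← mul_sum, mul_le_mul_iff_right₀ hc]
    _ ≤ Real.exp (c * Q + ∑ e ∈ P, Real.exp (-(c * #(leftNbrs P e.2)))) :=
        card_filter_sum_le_le_exp P (fun e => c * #(leftNbrs P e.2)) (c * Q)
    _ ≤ Real.exp (c * Q + Fintype.card β / c) := by gcongr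

theorem IsSkeleton.exists_isContainerMap_commonNbrGraph (h : IsSkeleton K t W F E)
    (hE : IsC4Free E) (hK : 0 < K)
    (hq : (Fintype.card β : ℝ) <
      Real.exp (Fintype.card α / (24 * Fintype.card β * K ^ 3) * q)) :
    ∃ C, IsContainerMap (commonNbrGraph t F) (fun v => (#(t ∩ leftNbrs F v) : ℝ)) (2 * #t) W q
      C := by
  have hW : (#W : ℝ) ≤ Fintype.card β := by exact_mod_cast card_le_univ W
  refine exists_isContainerMap (hW.trans_lt hq) fun A hA hheavy =>
    (hE.mono h.subset).exists_card_adj_ge (by positivity)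
      (fun v hv => h.le_card_inter v (hA hv)) ?_ hheavy
  calc 2 * #t * (Fintype.card α / (24 * Fintype.card β * K ^ 3))
      = #t * K * (Fintype.card α / (12 * Fintype.card β * K ^ 4)) := by field_simp; ring
    _ ≤ 3 * Fintype.card α * (Fintype.card α / (12 * Fintype.card β * K ^ 4)) := by
        gcongr ?_ * _
        exact h.card_sample_le
    _ = (Fintype.card α / (2 * √(Fintype.card β) * K ^ 2)) ^ 2 := by
        rw [div_pow, mul_pow, mul_pow, Real.sq_sqrt (by positivity)]
        ring

/-- The pairs `(u, v)` such that `u` lies outside `t` and `v` lies in the container determined by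
the fingerprint of `u`, where the fingerprints of all the vertices are the rows of `T`. -/
noncomputable def containerEdges (t : Finset α) (C : Finset β → Finset β)
    (T : Finset (α × β)) : Finset (α × β) :=
  {e | e.1 ∉ t ∧ e.2 ∈ C (rightNbrs T e.1)}

theorem rightNbrs_containerEdges (t : Finset α) (C : Finset β → Finset β) (T : Finset (α × β))
    (u : α) : rightNbrs (containerEdges t C T) u = if u ∈ t then ∅ else C (rightNbrs T u) := by
  ext v
  by_cases hu : u ∈ t <;> simp [containerEdges, hu]

theorem sum_containerEdges_le {w : β → ℝ} {B : ℝ} (hB : 0 ≤ B)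
    (hT : ∀ u ∉ t, ∑ v ∈ C (rightNbrs T u), w v ≤ B) :
    ∑ e ∈ containerEdges t C T, w e.2 ≤ Fintype.card α * B := by
  rw [sum_eq_sum_rightNbrs, ← card_univ, ← nsmul_eq_mul]
  refine sum_le_card_nsmul _ _ _ fun u _ => ?_
  rw [rightNbrs_containerEdges]
  split_ifs with hu
  · simpa using hB
  · exact hT u hu

theorem IsSkeleton.exists_fingerprint (h : IsSkeleton K t W F E) (hE : IsC4Free E) {w : β → ℝ}
    {B : ℝ} (hC : IsContainerMap (commonNbrGraph t F) w B W q C) :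
    ∃ T ⊆ E, (#T : ℝ) ≤ q * Fintype.card α ∧ (∀ u ∉ t, ∑ v ∈ C (rightNbrs T u), w v ≤ B) ∧
      E \ (F ∪ T) ⊆ containerEdges t C T := by
  have hrow (u : α) : ∃ T ⊆ W ∩ rightNbrs E u, #T ≤ q ∧ (u ∉ t → ∑ v ∈ C T, w v ≤ B) ∧
      (u ∉ t → W ∩ rightNbrs E u ⊆ T ∪ C T) := by
    by_cases hu : u ∈ t
    · exact ⟨∅, empty_subset _, by simp, fun h => absurd hu h, fun h => absurd hu h⟩
    · obtain ⟨T, hT, hTq, hTw, hcover⟩ := hC (W ∩ rightNbrs E u) inter_subset_left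
        (hE.isIndepSet_commonNbrGraph h.subset hu fun v hv => mem_rightNbrs.1 (mem_inter.1 hv).2)
      exact ⟨T, hT, hTq, fun _ => hTw, fun _ => hcover⟩
  choose R hRE hRq hRw hcover using hrow
  set T : Finset (α × β) := {e | e.2 ∈ R e.1} with hT
  have hTrow (u : α) : rightNbrs T u = R u := by ext v; simp [hT]
  refine ⟨T, fun e he => ?_, ?_, fun u hu => by rw [hTrow]; exact hRw u hu, fun e he => ?_⟩
  · exact mem_rightNbrs.1 (mem_inter.1 (hRE e.1 (mem_filter.1 he).2)).2
  · calc (#T : ℝ) = ∑ u, (#(R u) : ℝ) := by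
          simpa [hTrow] using sum_eq_sum_rightNbrs T fun _ => 1
      _ ≤ Fintype.card α * q := by
          rw [← card_univ, ← nsmul_eq_mul]
          exact sum_le_card_nsmul _ _ _ fun u _ => by exact_mod_cast hRq u
      _ = q * Fintype.card α := mul_comm _ _
  · obtain ⟨u, v⟩ := e
    simp only [mem_sdiff, mem_union, not_or, ← h.filter_eq, mem_filter, not_and, not_not] at he
    obtain ⟨hu, hv⟩ := he.2.1 he.1
    have hvR : v ∉ R u := by simpa [hT] using he.2.2
    have hvC : v ∈ R u ∪ C (R u) := hcover u hu (mem_inter.2 ⟨hv, mem_rightNbrs.2 he.1⟩)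
    rw [← mem_rightNbrs, rightNbrs_containerEdges, if_neg hu, hTrow]
    exact (mem_union.1 hvC).resolve_left hvR

theorem IsSkeleton.sum_card_leftNbrs_le (h : IsSkeleton K t W F E) (hK : 0 ≤ K)
    {P G : Finset (α × β)} (hG : G ⊆ E \ F)
    (hP : ∑ e ∈ P, (#(t ∩ leftNbrs F e.2) : ℝ) ≤ Fintype.card α * (2 * #t)) :
    ∑ e ∈ G, (#(leftNbrs P e.2) : ℝ) ≤ 12 * Fintype.card α ^ 2 := by
  have hdeg (v : β) : (#(leftNbrs G v) : ℝ) ≤ 2 * K * #(t ∩ leftNbrs F v) := by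
    by_cases hv : v ∈ W
    · refine le_trans ?_ (h.card_leftNbrs_le v hv)
      gcongr
      exact fun u hu => mem_leftNbrs.2 (mem_sdiff.1 (hG (mem_leftNbrs.1 hu))).1
    · have hempty : leftNbrs G v = ∅ := eq_empty_of_forall_notMem fun u hu => by
        have := hG (mem_leftNbrs.1 hu)
        simp [← h.filter_eq, hv] at this
      rw [hempty, card_empty, Nat.cast_zero]
      positivity
  calc ∑ e ∈ G, (#(leftNbrs P e.2) : ℝ)
      = ∑ v, #(leftNbrs G v) * (#(leftNbrs P v) : ℝ) :=
        sum_snd_eq_sum_card_leftNbrs_mul G fun v => (#(leftNbrs P v) : ℝ)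
    _ ≤ ∑ v, 2 * K * #(t ∩ leftNbrs F v) * (#(leftNbrs P v) : ℝ) := by
        gcongr with v
        exact hdeg v
    _ = 2 * K * ∑ e ∈ P, (#(t ∩ leftNbrs F e.2) : ℝ) := by
        rw [sum_snd_eq_sum_card_leftNbrs_mul P fun v => (#(t ∩ leftNbrs F v) : ℝ), mul_sum]
        exact sum_congr rfl fun v _ => by ring
    _ ≤ 2 * K * (Fintype.card α * (2 * #t)) := by gcongr
    _ = 4 * Fintype.card α * (#t * K) := by ring
    _ ≤ 4 * Fintype.card α * (3 * Fintype.card α) := by gcongr _ * ?_; exact h.card_sample_le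
    _ = 12 * Fintype.card α ^ 2 := by ring

/-- The sets of pairs `G` allowed as the part of a graph outside its skeleton and its fingerprint
`T`; the sum weighs every pair by its degree in `containerEdges t C T`. -/
noncomputable def sparseRemainders (t : Finset α) (C : Finset β → Finset β)
    (T : Finset (α × β)) : Finset (Finset (α × β)) :=
  {G ∈ (containerEdges t C T).powerset |
    ∑ e ∈ G, (#(leftNbrs (containerEdges t C T) e.2) : ℝ) ≤ 12 * Fintype.card α ^ 2}

theorem card_sparseRemainders_le [Nonempty α] [Nonempty β] (t : Finset α)
    (C : Finset β → Finset β) (T : Finset (α × β)) :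
    (#(sparseRemainders t C T) : ℝ) ≤ Real.exp (13 * (Fintype.card α * √(Fintype.card β))) := by
  have : 0 < (Fintype.card α : ℝ) := by exact_mod_cast Fintype.card_pos
  have : 0 < (Fintype.card β : ℝ) := by exact_mod_cast Fintype.card_pos
  refine (card_filter_sum_card_leftNbrs_le_le_exp _
    (c := √(Fintype.card β) / Fintype.card α) (by positivity) _).trans_eq ?_
  congr 1
  calc √(Fintype.card β : ℝ) / Fintype.card α * (12 * Fintype.card α ^ 2) +
        Fintype.card β / (√(Fintype.card β) / Fintype.card α)
      = 12 * (Fintype.card α * √(Fintype.card β)) +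
        Fintype.card α * (Fintype.card β / √(Fintype.card β)) := by field_simp
    _ = 13 * (Fintype.card α * √(Fintype.card β)) := by rw [Real.div_sqrt]; ring

theorem IsSkeleton.exists_eq_union (h : IsSkeleton K t W F E) (hE : IsC4Free E) (hK : 0 ≤ K)
    (hC : IsContainerMap (commonNbrGraph t F) (fun v => (#(t ∩ leftNbrs F v) : ℝ)) (2 * #t) W q
      C) :
    ∃ T, (#T : ℝ) ≤ q * Fintype.card α ∧ ∃ G ∈ sparseRemainders t C T, F ∪ T ∪ G = E := by
  obtain ⟨T, hTE, hTq, hTw, hcover⟩ := h.exists_fingerprint hE hC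
  refine ⟨T, hTq, E \ (F ∪ T), mem_filter.2 ⟨mem_powerset.2 hcover, ?_⟩,
    union_sdiff_of_subset (union_subset h.subset hTE)⟩
  exact h.sum_card_leftNbrs_le hK (sdiff_subset_sdiff subset_rfl subset_union_left)
    (sum_containerEdges_le (by positivity) hTw)

theorem card_isSkeleton_le [Nonempty α] [Nonempty β] (hK : 0 < K)
    (hKexp : (Fintype.card β : ℝ) ≤ Real.exp K)
    (hq : (Fintype.card β : ℝ) <
      Real.exp (Fintype.card α / (24 * Fintype.card β * K ^ 3) * q)) :
    (#{E | IsC4Free E ∧ IsSkeleton K t W F E} : ℝ) ≤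
      Real.exp (K * (q * Fintype.card α) + Fintype.card α) *
        Real.exp (13 * (Fintype.card α * √(Fintype.card β))) := by
  rcases eq_empty_or_nonempty {E : Finset (α × β) | IsC4Free E ∧ IsSkeleton K t W F E} with
    hempty | ⟨E₀, hE₀⟩
  · rw [hempty, card_empty, Nat.cast_zero]
    positivity
  obtain ⟨hE₀, h₀⟩ := (mem_filter.1 hE₀).2
  obtain ⟨C, hC⟩ := h₀.exists_isContainerMap_commonNbrGraph hE₀ hK hq
  have hcover : ∀ E ∈ ({E | IsC4Free E ∧ IsSkeleton K t W F E} : Finset (Finset (α × β))),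
      ∃ T ∈ ({T | K * #T ≤ K * (q * Fintype.card α)} : Finset (Finset (α × β))),
        E ∈ (sparseRemainders t C T).image fun G => F ∪ T ∪ G := by
    intro E hE
    obtain ⟨hE, h⟩ := (mem_filter.1 hE).2
    obtain ⟨T, hTq, G, hG, rfl⟩ := h.exists_eq_union hE hK.le hC
    exact ⟨T, mem_filter.2 ⟨mem_univ T, by gcongr⟩, mem_image_of_mem _ hG⟩
  have himage (T : Finset (α × β)) : (#((sparseRemainders t C T).image fun G => F ∪ T ∪ G) : ℝ) ≤
      Real.exp (13 * (Fintype.card α * √(Fintype.card β))) :=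
    le_trans (by exact_mod_cast card_image_le) (card_sparseRemainders_le t C T)
  refine (card_le_card_mul_of_forall_exists_mem hcover fun T _ => himage T).trans ?_
  gcongr
  exact card_filter_mul_card_prod_le_le_exp hKexp _

end Completions

section Count

variable {α β : Type*} [Fintype α] [Fintype β]

theorem two_pow_le_exp (k : ℕ) : (2 : ℝ) ^ k ≤ Real.exp k := by
  rw [← Real.exp_one_pow k]
  gcongr
  linarith [Real.add_one_le_exp 1]

theorem card_isC4Free_le_of_lt_exp [Nonempty α] [Nonempty β] {K : ℝ} {q : ℕ} (hK : 1 ≤ K)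
    (hKexp : (Fintype.card β : ℝ) ≤ Real.exp K)
    (hq : (Fintype.card β : ℝ) <
      Real.exp (Fintype.card α / (24 * Fintype.card β * K ^ 3) * q)) :
    (#{E : Finset (α × β) | IsC4Free E} : ℝ) ≤
      Real.exp (K * (q * Fintype.card α) + 17 * (Fintype.card α * √(Fintype.card β)) +
        15 * (K ^ 2 * Fintype.card β) + 3 * Fintype.card α + Fintype.card β) := by
  set m : ℝ := (Fintype.card α : ℝ)
  set n : ℝ := (Fintype.card β : ℝ)
  set skeletons : Finset (Finset (α × β)) := {F | K * #F ≤ 4 * (m * √n) + 15 * (K ^ 2 * n)}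
    with hskeletons
  have hcover : ∀ E ∈ ({E | IsC4Free E} : Finset (Finset (α × β))),
      ∃ i ∈ (univ : Finset (Finset α)) ×ˢ (univ : Finset (Finset β)) ×ˢ skeletons,
        E ∈ ({E | IsC4Free E ∧ IsSkeleton K i.1 i.2.1 i.2.2 E} : Finset (Finset (α × β))) := by
    intro E hE
    have hE : IsC4Free E := (mem_filter.1 hE).2
    obtain ⟨t, W, F, h, hF⟩ := hE.exists_isSkeleton hK
    exact ⟨(t, W, F), by simpa [hskeletons] using hF, by simpa using ⟨hE, h⟩⟩
  have hcard : (#skeletons : ℝ) ≤ Real.exp (4 * (m * √n) + 15 * (K ^ 2 * n) + m) :=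
    card_filter_mul_card_prod_le_le_exp hKexp _
  calc (#{E : Finset (α × β) | IsC4Free E} : ℝ)
      ≤ #((univ : Finset (Finset α)) ×ˢ (univ : Finset (Finset β)) ×ˢ skeletons) *
          (Real.exp (K * (q * m) + m) * Real.exp (13 * (m * √n))) :=
        card_le_card_mul_of_forall_exists_mem hcover fun i _ =>
          card_isSkeleton_le (by linarith) hKexp hq
    _ = 2 ^ Fintype.card α * (2 ^ Fintype.card β * #skeletons) *
          (Real.exp (K * (q * m) + m) * Real.exp (13 * (m * √n))) := by
        simp only [card_product, card_univ, Fintype.card_finset]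
        push_cast
        rfl
    _ ≤ Real.exp m * (Real.exp n * Real.exp (4 * (m * √n) + 15 * (K ^ 2 * n) + m)) *
          (Real.exp (K * (q * m) + m) * Real.exp (13 * (m * √n))) := by
        gcongr
        · exact two_pow_le_exp _
        · exact two_pow_le_exp _
    _ = Real.exp (K * (q * m) + 17 * (m * √n) + 15 * (K ^ 2 * n) + 3 * m + n) := by
        simp only [← Real.exp_add]
        ring_nf

theorem card_isC4Free_le [Nonempty α] [Nonempty β] :
    (#{E : Finset (α × β) | IsC4Free E} : ℝ) ≤
      Real.exp (22 * (Fintype.card α * √(Fintype.card β)) +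
        40 * (Fintype.card β * (1 + Real.log (Fintype.card β)) ^ 5)) := by
  have hm₁ : 1 ≤ (Fintype.card α : ℝ) := by exact_mod_cast Fintype.card_pos (α := α)
  have hn₁ : 1 ≤ (Fintype.card β : ℝ) := by exact_mod_cast Fintype.card_pos (α := β)
  set m : ℝ := (Fintype.card α : ℝ)
  set n : ℝ := (Fintype.card β : ℝ)
  set K : ℝ := 1 + Real.log n with hK
  have hK₁ : 1 ≤ K := by linarith [Real.log_nonneg hn₁]
  have hexp : n < Real.exp K := by
    rw [hK, Real.exp_add, Real.exp_log (by positivity)]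
    nlinarith [Real.add_one_lt_exp one_ne_zero]
  have hKsqrt : K ≤ 2 * √n := by
    have hlog := Real.log_sqrt (x := n) (by positivity)
    linarith [Real.log_le_sub_one_of_pos (Real.sqrt_pos.2 (by positivity : 0 < n))]
  set δ : ℝ := m / (24 * n * K ^ 3) with hδ
  have hδpos : 0 < δ := by positivity
  have hq : n < Real.exp (δ * ⌈K / δ⌉₊) := by
    refine hexp.trans_le (Real.exp_le_exp.2 ?_)
    rw [← div_le_iff₀' hδpos]
    exact Nat.le_ceil _
  have hfingerprint : K * (⌈K / δ⌉₊ * m) ≤ 24 * (n * K ^ 5) + 2 * (m * √n) :=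
    calc K * (⌈K / δ⌉₊ * m) ≤ K * ((K / δ + 1) * m) := by
          gcongr
          exact (Nat.ceil_lt_add_one (by positivity)).le
      _ = 24 * (n * K ^ 5) + m * K := by
          rw [hδ]
          field_simp
      _ ≤ 24 * (n * K ^ 5) + 2 * (m * √n) := by nlinarith
  have hKsq : K ^ 2 * n ≤ n * K ^ 5 := by
    rw [mul_comm]
    gcongr
    lia
  have hKone : n ≤ n * K ^ 5 := le_mul_of_one_le_right (by positivity) (one_le_pow₀ hK₁)
  have hmsqrt : m ≤ m * √n := le_mul_of_one_le_right (by positivity) (Real.one_le_sqrt.2 hn₁)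
  refine (card_isC4Free_le_of_lt_exp hK₁ hexp.le hq).trans (Real.exp_le_exp.2 ?_)
  linarith

end Count

theorem c4FreeCount_eq_card_isC4Free (m n : ℕ) :
    c4FreeCount m n = #{E : Finset (Fin m × Fin n) | IsC4Free E} := by
  rw [c4FreeCount, powerset_univ]
  congr 1
  refine filter_congr fun E _ => ⟨fun h u u' v v' h₁ h₂ h₃ h₄ => ?_, fun h => ?_⟩
  · by_contra! hne
    exact h ⟨u, u', v, v', hne.1, hne.2, h₁, h₂, h₃, h₄⟩
  · rintro ⟨u, u', v, v', hu, hv, h₁, h₂, h₃, h₄⟩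
    exact (h h₁ h₂ h₃ h₄).elim hu hv

theorem c4FreeCount_le_two_pow (m n : ℕ) : c4FreeCount m n ≤ 2 ^ (m * n) := by
  rw [c4FreeCount_eq_card_isC4Free]
  exact (card_le_univ _).trans_eq (by simp)

theorem mul_one_add_log_pow_five_le {m n : ℕ} (hm : 0 < m) (hn : 0 < n) :
    n * (1 + Real.log n) ^ 5 ≤ m * √n + 243 * (n * Real.log n ^ 5) := by
  have hm₁ : (1 : ℝ) ≤ m := by exact_mod_cast hm
  obtain rfl | hn₂ : n = 1 ∨ 2 ≤ n := by lia
  · simpa using hm₁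
  have hlog : Real.log 2 ≤ Real.log n := Real.log_le_log two_pos (by exact_mod_cast hn₂)
  have hthree : 1 + Real.log n ≤ 3 * Real.log n := by linarith [Real.log_two_gt_d9]
  calc n * (1 + Real.log n) ^ 5 ≤ n * (3 * Real.log n) ^ 5 := by gcongr
    _ = 243 * (n * Real.log n ^ 5) := by ring
    _ ≤ m * √n + 243 * (n * Real.log n ^ 5) := le_add_of_nonneg_left (by positivity)

theorem exp_le_two_rpow_two_mul {x : ℝ} (hx : 0 ≤ x) : Real.exp x ≤ 2 ^ (2 * x) := by
  rw [Real.rpow_def_of_pos two_pos]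
  gcongr
  nlinarith [Real.log_two_gt_d9]

theorem mul_log_pow_five_le_mul_sqrt {m n : ℕ}
    (h : (n : ℝ) ^ ((11 : ℝ) / 12) * Real.log n ^ 5 ≤ m) : n * Real.log n ^ 5 ≤ m * √n := by
  rcases n.eq_zero_or_pos with rfl | hn
  · simp
  have hn₁ : (1 : ℝ) ≤ n := by exact_mod_cast hn
  have hsqrt : √(n : ℝ) ≤ (n : ℝ) ^ ((11 : ℝ) / 12) := by
    rw [Real.sqrt_eq_rpow]
    exact Real.rpow_le_rpow_of_exponent_le hn₁ (by norm_num)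
  have : 0 ≤ Real.log n := Real.log_natCast_nonneg n
  calc n * Real.log n ^ 5 = √(n : ℝ) * Real.log n ^ 5 * √n := by
        nth_rw 1 [← Real.mul_self_sqrt n.cast_nonneg]
        ring
    _ ≤ (n : ℝ) ^ ((11 : ℝ) / 12) * Real.log n ^ 5 * √n := by gcongr
    _ ≤ m * √n := by gcongr

theorem count_c4free_bipartite_general :
    ∃ C : ℝ, 0 < C ∧ ∀ m n : ℕ,
      (c4FreeCount m n : ℝ) ≤ 2 ^ (C * (m * √n + n * Real.log n ^ 5)) := by
  refine ⟨2 * 9720, by norm_num, fun m n => ?_⟩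
  have : 0 ≤ Real.log n := Real.log_natCast_nonneg n
  rcases Nat.eq_zero_or_pos (m * n) with hmn | hmn
  · have hle : c4FreeCount m n ≤ 1 := by simpa [hmn] using c4FreeCount_le_two_pow m n
    exact le_trans (by exact_mod_cast hle) (Real.one_le_rpow one_le_two (by positivity))
  obtain ⟨hm, hn⟩ := CanonicallyOrderedAdd.mul_pos.1 hmn
  have : Nonempty (Fin m) := ⟨⟨0, hm⟩⟩
  have : Nonempty (Fin n) := ⟨⟨0, hn⟩⟩
  have hmain := card_isC4Free_le (α := Fin m) (β := Fin n)
  rw [← c4FreeCount_eq_card_isC4Free, Fintype.card_fin, Fintype.card_fin] at hmain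
  have hms : 0 ≤ m * √(n : ℝ) := by positivity
  calc (c4FreeCount m n : ℝ)
      ≤ Real.exp (22 * (m * √n) + 40 * (n * (1 + Real.log n) ^ 5)) := hmain
    _ ≤ Real.exp (9720 * (m * √n + n * Real.log n ^ 5)) := by
        gcongr
        linarith [mul_one_add_log_pow_five_le hm hn]
    _ ≤ 2 ^ (2 * (9720 * (m * √n + n * Real.log n ^ 5))) :=
        exp_le_two_rpow_two_mul (by positivity)
    _ = 2 ^ (2 * 9720 * (m * √n + n * Real.log n ^ 5)) := by rw [mul_assoc]

theorem count_c4free_bipartite :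
    ∃ C : ℝ, 0 < C ∧ ∀ m n : ℕ, 0 < m → m ≤ n →
      (n : ℝ) ^ ((11 : ℝ)/12) * (Real.log n) ^ 5 ≤ (m : ℝ) →
      (c4FreeCount m n : ℝ) ≤ 2 ^ (C * (m : ℝ) * (n : ℝ) ^ ((1 : ℝ)/2)) := by
  obtain ⟨C, hC, hcount⟩ := count_c4free_bipartite_general
  refine ⟨2 * C, by positivity, fun m n _ _ hmn => (hcount m n).trans ?_⟩
  refine Real.rpow_le_rpow_of_exponent_le one_le_two ?_
  rw [← Real.sqrt_eq_rpow]
  calc C * (m * √n + n * Real.log n ^ 5) ≤ C * (m * √n + m * √n) := by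
        gcongr _ * (_ + ?_)
        exact mul_log_pow_five_le_mul_sqrt hmn
    _ = 2 * C * m * √n := by ring
end
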